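/- arXiv:0711.3159 — 5 statements merged into one kernel-verified Lean document; each statement's English description precedes it below -/
import Mathlib

section
/- There exists a strictly increasing sequence (r_n)_{n∈ℕ} of positive integers satisfying: (i) for all real numbers γ, δ with γ irrational or δ irrational, the sequence (r_n²·γ + r_n·δ) is uniformly distributed mod 1, i.e. for every nonzero integer m one has (1/N)·Σ_{n=1}^N e(m·(r_n²γ + r_nδ)) → 0 as N → ∞; (ii) for every d ∈ ℕ the set {n ∈ ℕ : d divides r_n} has positive natural density, i.e. the limit lim_{N→∞} |{n ≤ N : d divides r_n}|/N exists and is positive; and (iii) the set R = {r₁, r₂, …} is not a set of 2-recurrence, i.e. there exist a system (X,ℬ,μ,T) and A ∈ ℬ with μ(A) > 0 such that μ(A ∩ T^{-r}A ∩ T^{-2r}A) = 0 for every nonzero r ∈ R. -/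
open Filter MeasureTheory

/-- `e(x) = exp(2πix)`. -/
noncomputable def eFun (x : ℝ) : ℂ := Complex.exp (2 * Real.pi * Complex.I * x)

open Finset ComplexConjugate Topology

/-! ### Averages of bounded sequences -/

/-- The average of the first `N` terms of a complex sequence. -/
noncomputable def avg (u : ℕ → ℂ) (N : ℕ) : ℂ := (N : ℂ)⁻¹ * ∑ n ∈ range N, u n

lemma norm_avg_le_of_le {u : ℕ → ℂ} {c : ℝ} (hu : ∀ n, ‖u n‖ ≤ c) (N : ℕ) : ‖avg u N‖ ≤ c := by
  have hc : 0 ≤ c := (norm_nonneg _).trans (hu 0)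
  rcases Nat.eq_zero_or_pos N with rfl | hN
  · simpa [avg] using hc
  have hN' : (0 : ℝ) < N := by exact_mod_cast hN
  rw [avg, norm_mul, norm_inv, Complex.norm_natCast, inv_mul_le_iff₀ hN']
  calc ‖∑ n ∈ range N, u n‖ ≤ ∑ n ∈ range N, ‖u n‖ := norm_sum_le _ _
    _ ≤ ∑ n ∈ range N, c := sum_le_sum fun n _ => hu n
    _ = N * c := by simp

lemma avg_add (u v : ℕ → ℂ) (N : ℕ) : avg (fun n => u n + v n) N = avg u N + avg v N := by
  simp [avg, sum_add_distrib, mul_add]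

lemma avg_sub (u v : ℕ → ℂ) (N : ℕ) : avg (fun n => u n - v n) N = avg u N - avg v N := by
  simp [avg, mul_sub]

lemma avg_const_mul (c : ℂ) (u : ℕ → ℂ) (N : ℕ) : avg (fun n => c * u n) N = c * avg u N := by
  simp only [avg, ← mul_sum]; ring

lemma avg_finset_sum {ι : Type*} (S : Finset ι) (u : ι → ℕ → ℂ) (N : ℕ) :
    avg (fun n => ∑ i ∈ S, u i n) N = ∑ i ∈ S, avg (u i) N := by
  simp only [avg]; rw [sum_comm, mul_sum]

lemma tendsto_avg_shift_sub {u : ℕ → ℂ} (hu : ∀ n, ‖u n‖ ≤ 1) (s : ℕ) :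
    Tendsto (fun N => avg (fun n => u (n + s)) N - avg u N) atTop (𝓝 0) := by
  have key : ∀ N : ℕ, ‖avg (fun n => u (n + s)) N - avg u N‖ ≤ (2 * s : ℝ) / N := by
    intro N
    have h1 : ∑ n ∈ range N, u (n + s) - ∑ n ∈ range N, u n
        = ∑ n ∈ range s, u (N + n) - ∑ n ∈ range s, u n := by
      have ha := sum_range_add u N s
      have hb := sum_range_add u s N
      rw [add_comm s N, ha] at hb
      simp only [add_comm _ s]
      linear_combination -hb
    rw [avg, avg, ← mul_sub, h1, norm_mul, norm_inv, Complex.norm_natCast, div_eq_inv_mul]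
    gcongr
    have hs : ∀ v : ℕ → ℂ, (∀ n, ‖v n‖ ≤ 1) → ‖∑ n ∈ range s, v n‖ ≤ s := fun v hv =>
      (norm_sum_le _ _).trans ((sum_le_sum fun n _ => hv n).trans (by simp))
    linarith [norm_sub_le (∑ n ∈ range s, u (N + n)) (∑ n ∈ range s, u n),
      hs _ hu, hs (fun n => u (N + n)) fun n => hu _]
  exact squeeze_zero_norm key (tendsto_const_div_atTop_nhds_zero_nat _)

lemma tendsto_avg_mean_shifts_sub {ι : Type*} {u : ℕ → ℂ} (hu : ∀ n, ‖u n‖ ≤ 1) (S : Finset ι)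
    (hS : S.Nonempty) (s : ι → ℕ) :
    Tendsto (fun N => avg (fun n => (#S : ℂ)⁻¹ * ∑ i ∈ S, u (n + s i)) N - avg u N)
      atTop (𝓝 0) := by
  have h := (tendsto_finsetSum S fun i _ => tendsto_avg_shift_sub hu (s i)).const_mul
    ((#S : ℂ)⁻¹)
  have hc : (#S : ℂ) ≠ 0 := by exact_mod_cast hS.card_pos.ne'
  simp only [sum_const_zero, mul_zero] at h
  refine h.congr fun N => ?_
  rw [avg_const_mul, avg_finset_sum, sum_sub_distrib, sum_const, mul_sub, nsmul_eq_mul,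
    inv_mul_cancel_left₀ hc]

lemma eventually_norm_le_of_tendsto_sub {a b : ℕ → ℂ} {η η' : ℝ} (hη : η < η')
    (hab : Tendsto (fun N => a N - b N) atTop (𝓝 0)) (ha : ∀ᶠ N in atTop, ‖a N‖ ≤ η) :
    ∀ᶠ N in atTop, ‖b N‖ ≤ η' := by
  have h := (Metric.tendsto_nhds.1 hab) (η' - η) (by linarith)
  filter_upwards [h, ha] with N h1 h2
  rw [dist_zero_right] at h1
  have := norm_sub_norm_le (b N) (a N)
  rw [norm_sub_rev] at this
  linarith

/-- A bounded sequence whose sums along all progressions of given step and length are small has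
small averages. -/
lemma eventually_avg_le_of_progression {u : ℕ → ℂ} (hu : ∀ n, ‖u n‖ ≤ 1) {q M : ℕ} (hM : 0 < M)
    {η η' : ℝ} (hη : η < η') (h : ∀ n, ‖∑ m ∈ range M, u (n + m * q)‖ ≤ M * η) :
    ∀ᶠ N in atTop, ‖avg u N‖ ≤ η' := by
  refine eventually_norm_le_of_tendsto_sub hη (tendsto_avg_mean_shifts_sub hu (range M)
    (by simpa using hM.ne') fun m => m * q) (Eventually.of_forall fun N => ?_)
  refine norm_avg_le_of_le (fun n => ?_) N
  rw [norm_mul, norm_inv, Complex.norm_natCast, card_range,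
    inv_mul_le_iff₀ (by exact_mod_cast hM)]
  exact h n

lemma norm_avg_sq_le (v : ℕ → ℂ) (N : ℕ) :
    ‖avg v N‖ ^ 2 ≤ ‖avg (fun n => v n * conj (v n)) N‖ := by
  rcases Nat.eq_zero_or_pos N with rfl | hN
  · simp [avg]
  have hN' : (0 : ℝ) < N := by exact_mod_cast hN
  have h1 : ∑ n ∈ range N, v n * conj (v n) = ((∑ n ∈ range N, ‖v n‖ ^ 2 : ℝ) : ℂ) := by
    push_cast
    exact sum_congr rfl fun n _ => Complex.mul_conj' _
  have h2 : (0 : ℝ) ≤ ∑ n ∈ range N, ‖v n‖ ^ 2 := sum_nonneg fun _ _ => by positivity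
  have h3 : ‖∑ n ∈ range N, v n‖ ^ 2 ≤ N * ∑ n ∈ range N, ‖v n‖ ^ 2 := by
    calc ‖∑ n ∈ range N, v n‖ ^ 2 ≤ (∑ n ∈ range N, ‖v n‖) ^ 2 := by
          gcongr; exact norm_sum_le _ _
      _ ≤ _ := by simpa using sq_sum_le_card_mul_sum_sq (s := range N) (f := fun n => ‖v n‖)
  simp only [avg]
  rw [h1, norm_mul, norm_mul, norm_inv, Complex.norm_natCast, Complex.norm_of_nonneg h2, mul_pow]
  calc (N : ℝ)⁻¹ ^ 2 * ‖∑ n ∈ range N, v n‖ ^ 2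
      ≤ (N : ℝ)⁻¹ ^ 2 * (N * ∑ n ∈ range N, ‖v n‖ ^ 2) := by gcongr
    _ = _ := by field_simp

/-- A form of van der Corput's inequality. -/
lemma tendsto_avg_zero_of_shifts {u : ℕ → ℂ} (hu : ∀ n, ‖u n‖ ≤ 1)
    (H : ∀ η > 0, ∀ J : ℕ, ∃ S : Finset ℕ, #S = J ∧ ∀ s ∈ S, ∀ t ∈ S, s < t →
      ∀ᶠ N in atTop, ‖avg (fun n => u (n + (t - s)) * conj (u n)) N‖ ≤ η) :
    Tendsto (avg u) atTop (𝓝 0) := by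
  rw [Metric.tendsto_nhds]
  intro ε hε
  obtain ⟨J, hJ⟩ := exists_nat_gt (16 / ε ^ 2)
  have hJ0 : (0 : ℝ) < J := lt_trans (by positivity) hJ
  obtain ⟨S, hSJ, hS⟩ := H (ε ^ 2 / 32) (by positivity) J
  have hSne : S.Nonempty := by
    rw [← card_pos, hSJ]; exact_mod_cast hJ0
  have hprod : ∀ d n, ‖u (n + d) * conj (u n)‖ ≤ 1 := fun d n => by
    rw [norm_mul, RCLike.norm_conj]
    exact mul_le_one₀ (hu _) (norm_nonneg _) (hu _)
  have lt_case : ∀ s ∈ S, ∀ t ∈ S, s < t →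
      ∀ᶠ N in atTop, ‖avg (fun n => u (n + t) * conj (u (n + s))) N‖ ≤ ε ^ 2 / 16 := by
    intro s hs t ht hst
    refine eventually_norm_le_of_tendsto_sub (by nlinarith [sq_pos_of_pos hε]) ?_ (hS s hs t ht hst)
    have := (tendsto_avg_shift_sub (hprod (t - s)) s).neg
    simp only [neg_sub, neg_zero] at this
    refine this.congr fun N => ?_
    congr 3
    ext n
    rw [show n + s + (t - s) = n + t by omega]
  have ne_case : ∀ s ∈ S, ∀ t ∈ S, s ≠ t →
      ∀ᶠ N in atTop, ‖avg (fun n => u (n + t) * conj (u (n + s))) N‖ ≤ ε ^ 2 / 16 := by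
    intro s hs t ht hst
    rcases lt_or_gt_of_ne hst with h | h
    · exact lt_case s hs t ht h
    · filter_upwards [lt_case t ht s hs h] with N hN
      refine le_of_eq_of_le ?_ hN
      rw [← RCLike.norm_conj]
      simp only [avg, map_mul, map_sum, map_inv₀, Complex.conj_natCast, Complex.conj_conj]
      simp only [mul_comm]
  have all : ∀ s ∈ S, ∀ t ∈ S, ∀ᶠ N in atTop,
      ‖avg (fun n => u (n + t) * conj (u (n + s))) N‖ ≤ ε ^ 2 / 16 + if s = t then 1 else 0 := by
    intro s hs t ht
    by_cases hst : s = t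
    · refine Eventually.of_forall fun N => ?_
      rw [if_pos hst]
      refine (norm_avg_le_of_le (c := 1) (fun n => ?_) N).trans (by nlinarith [sq_pos_of_pos hε])
      rw [hst, norm_mul, RCLike.norm_conj]
      exact mul_le_one₀ (hu _) (norm_nonneg _) (hu _)
    · simpa [hst] using ne_case s hs t ht hst
  have all' : ∀ᶠ N in atTop, ∀ s ∈ S, ∀ t ∈ S,
      ‖avg (fun n => u (n + t) * conj (u (n + s))) N‖ ≤ ε ^ 2 / 16 + if s = t then 1 else 0 := by
    rw [eventually_all_finset]
    intro s hs
    rw [eventually_all_finset]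
    exact all s hs
  have hv : ∀ᶠ N in atTop, ‖avg (fun n => (#S : ℂ)⁻¹ * ∑ i ∈ S, u (n + i)) N‖ ≤ ε / 2 := by
    filter_upwards [all'] with N hN
    refine (pow_le_pow_iff_left₀ (norm_nonneg _) (by positivity) two_ne_zero).1 ?_
    refine (norm_avg_sq_le _ N).trans ?_
    have expand : avg (fun n => ((#S : ℂ)⁻¹ * ∑ i ∈ S, u (n + i)) *
        conj ((#S : ℂ)⁻¹ * ∑ i ∈ S, u (n + i))) N = ((#S : ℂ)⁻¹ * (#S : ℂ)⁻¹) *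
        ∑ s ∈ S, ∑ t ∈ S, avg (fun n => u (n + t) * conj (u (n + s))) N := by
      simp_rw [← avg_finset_sum, ← avg_const_mul]
      congr 1
      ext n
      simp only [map_mul, map_sum, map_inv₀, Complex.conj_natCast]
      rw [mul_mul_mul_comm, sum_mul_sum, sum_comm]
    rw [expand, norm_mul, norm_mul, norm_inv, Complex.norm_natCast, hSJ]
    have bound : ‖∑ s ∈ S, ∑ t ∈ S, avg (fun n => u (n + t) * conj (u (n + s))) N‖
        ≤ J * (J * (ε ^ 2 / 16) + 1) := by
      calc _ ≤ ∑ s ∈ S, ∑ t ∈ S, ‖avg (fun n => u (n + t) * conj (u (n + s))) N‖ :=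
            (norm_sum_le _ _).trans (sum_le_sum fun s _ => norm_sum_le _ _)
        _ ≤ ∑ s ∈ S, ∑ t ∈ S, (ε ^ 2 / 16 + if s = t then 1 else 0) :=
            sum_le_sum fun s hs => sum_le_sum fun t ht => hN s hs t ht
        _ = ∑ s ∈ S, (J * (ε ^ 2 / 16) + 1) :=
            sum_congr rfl fun s hs => by simp [sum_add_distrib, hSJ, hs]
        _ = _ := by rw [sum_const, hSJ, nsmul_eq_mul]
    calc (J : ℝ)⁻¹ * (J : ℝ)⁻¹ * _ ≤ (J : ℝ)⁻¹ * (J : ℝ)⁻¹ * (J * (J * (ε ^ 2 / 16) + 1)) := by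
          gcongr
      _ = ε ^ 2 / 16 + 1 / J := by field_simp
      _ ≤ ε ^ 2 / 16 + ε ^ 2 / 16 := by
          rw [div_lt_iff₀ (by positivity)] at hJ
          have : 1 / (J : ℝ) ≤ ε ^ 2 / 16 := by rw [div_le_iff₀ hJ0]; linarith
          linarith
      _ ≤ (ε / 2) ^ 2 := by nlinarith [sq_nonneg ε]
  filter_upwards [eventually_norm_le_of_tendsto_sub (η' := 3 * ε / 4) (by linarith)
    (tendsto_avg_mean_shifts_sub hu S hSne id) hv] with N hN
  rw [dist_zero_right]
  linarith

/-- If any two large integers at bounded distance are not both outside `G`, then there are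
arbitrarily large finite sets all of whose positive differences lie in `G`. -/
lemma exists_finset_differences {G : ℕ → Prop}
    (hG : ∀ D : ℕ, ∃ H : ℕ, ∀ h ≥ H, ∀ d : ℕ, 1 ≤ d → d ≤ D → G h ∨ G (h + d)) (J : ℕ) :
    ∃ S : Finset ℕ, #S = J ∧ ∀ s ∈ S, ∀ t ∈ S, s < t → G (t - s) := by
  induction J with
  | zero => exact ⟨∅, by simp⟩
  | succ J ih =>
    obtain ⟨S, hSJ, hS⟩ := ih
    obtain ⟨H, hH⟩ := hG J
    obtain ⟨b, hb⟩ := S.exists_nat_subset_range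
    have hb' : ∀ s ∈ S, s < b := fun s hs => mem_range.1 (hb hs)
    obtain ⟨t, ht, htS⟩ : ∃ t ∈ Finset.Icc (b + H) (b + H + J), ∀ s ∈ S, G (t - s) := by
      by_contra! hcon
      choose! f hfS hfG using hcon
      obtain ⟨x, hx, y, hy, hxy, hf⟩ := exists_ne_map_eq_of_card_lt_of_maps_to
        (s := Finset.Icc (b + H) (b + H + J)) (t := S) (f := f) (by rw [hSJ, Nat.card_Icc]; omega) hfS
      have main : ∀ x ∈ Finset.Icc (b + H) (b + H + J), ∀ y ∈ Finset.Icc (b + H) (b + H + J),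
          x < y → f x = f y → False := by
        intro x hx y hy hlt hf
        have h1 := hb' _ (hfS x hx)
        have hx' := Finset.mem_Icc.1 hx
        have hy' := Finset.mem_Icc.1 hy
        rcases hH (x - f x) (by omega) (y - x) (by omega) (by omega) with h | h
        · exact hfG x hx h
        · refine hfG y hy ?_
          rwa [show y - f y = x - f x + (y - x) by omega]
      rcases lt_or_gt_of_ne hxy with h | h
      · exact main x hx y hy h hf
      · exact main y hy x hx h hf.symm
    have ht' := Finset.mem_Icc.1 ht
    refine ⟨insert t S, ?_, ?_⟩
    · rw [card_insert_of_notMem fun h => ?_, hSJ]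
      have := hb' t h; omega
    · intro x hx y hy hlt
      rcases Finset.mem_insert.1 hx with hxt | hxS
      · rcases Finset.mem_insert.1 hy with hyt | hyS
        · omega
        · have := hb' _ hyS; omega
      · rcases Finset.mem_insert.1 hy with hyt | hyS
        · rw [hyt]; exact htS x hxS
        · exact hS x hxS y hyS hlt

/-! ### The exponential `e` -/

lemma eFun_add (x y : ℝ) : eFun (x + y) = eFun x * eFun y := by
  rw [eFun, eFun, eFun, ← Complex.exp_add]; push_cast; ring_nf

lemma eFun_int (k : ℤ) : eFun k = 1 := by
  rw [eFun, ← Complex.exp_int_mul_two_pi_mul_I k]; push_cast; ring_nf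

lemma eFun_zero : eFun 0 = 1 := by simpa using eFun_int 0

lemma eFun_eq_exp_mul_I (x : ℝ) : eFun x = Complex.exp (Complex.I * (2 * Real.pi * x : ℝ)) := by
  rw [eFun]; push_cast; ring_nf

lemma norm_eFun (x : ℝ) : ‖eFun x‖ = 1 := by
  rw [eFun_eq_exp_mul_I, mul_comm, Complex.norm_exp_ofReal_mul_I]

lemma eFun_neg (x : ℝ) : eFun (-x) = conj (eFun x) := by
  rw [eFun, eFun, ← Complex.exp_conj]; simp [map_ofNat]

lemma eFun_add_int (x : ℝ) (k : ℤ) : eFun (x + k) = eFun x := by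
  rw [eFun_add, eFun_int, mul_one]

lemma eFun_mul_conj (x y : ℝ) : eFun x * conj (eFun y) = eFun (x - y) := by
  rw [← eFun_neg, ← eFun_add, sub_eq_add_neg]

lemma norm_eFun_sub_one_le (x : ℝ) : ‖eFun x - 1‖ ≤ 2 * Real.pi * |x| := by
  rw [eFun_eq_exp_mul_I]
  refine (Real.norm_exp_I_mul_ofReal_sub_one_le).trans ?_
  rw [Real.norm_eq_abs, abs_mul, abs_of_pos (by positivity)]

lemma norm_eFun_sub_eFun_le (x y : ℝ) : ‖eFun x - eFun y‖ ≤ 2 * Real.pi * |x - y| := by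
  have : eFun x - eFun y = eFun y * (eFun (x - y) - 1) := by
    rw [mul_sub, ← eFun_add]; simp
  rw [this, norm_mul, norm_eFun, one_mul]
  exact norm_eFun_sub_one_le _

/-- The distance from `eFun x` to `1` is at least four times the distance from `x` to `ℤ`. -/
lemma four_mul_abs_sub_round_le (x : ℝ) : 4 * |x - round x| ≤ ‖1 - eFun x‖ := by
  have h1 : eFun x = eFun (x - round x) := by
    rw [← eFun_add_int (x - round x) (round x)]; simp
  have h2 := abs_sub_round x
  set t := x - round x
  rw [h1, norm_sub_rev, eFun_eq_exp_mul_I, Complex.norm_exp_I_mul_ofReal_sub_one,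
    show 2 * Real.pi * t / 2 = Real.pi * t by ring, Real.norm_eq_abs, abs_mul, abs_two]
  have h3 : |Real.sin (Real.pi * t)| = Real.sin (Real.pi * |t|) := by
    rcases abs_cases t with ⟨h, h0⟩ | ⟨h, h0⟩
    · rw [h, abs_of_nonneg]
      exact Real.sin_nonneg_of_nonneg_of_le_pi (by positivity)
        (by nlinarith [Real.pi_pos])
    · rw [h, mul_neg, Real.sin_neg, abs_of_nonpos]
      rw [← neg_nonneg, ← Real.sin_neg]
      exact Real.sin_nonneg_of_nonneg_of_le_pi (by nlinarith [Real.pi_pos])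
        (by nlinarith [Real.pi_pos])
  rw [h3]
  have h4 := Real.mul_le_sin (x := Real.pi * |t|) (by positivity) (by nlinarith [Real.pi_pos])
  have h5 : 2 / Real.pi * (Real.pi * |t|) = 2 * |t| := by
    have := Real.pi_pos.ne'
    field_simp
  linarith

lemma eFun_ne_one_of_irrational {x : ℝ} (hx : Irrational x) : eFun x ≠ 1 := by
  intro h
  have h1 := four_mul_abs_sub_round_le x
  rw [h, sub_self, norm_zero] at h1
  have h2 : x - round x = 0 := abs_nonpos_iff.1 (by linarith)
  exact hx.ne_int (round x) (by linarith)

/-! ### Exponential sums of degree at most two -/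

/-- Summation of a sequence that approximately is a geometric progression. -/
lemma norm_one_sub_mul_norm_sum_le {z : ℕ → ℂ} (hz : ∀ n, ‖z n‖ ≤ 1) (w : ℂ) (M : ℕ) :
    ‖1 - w‖ * ‖∑ m ∈ range M, z m‖ ≤ 2 + ∑ m ∈ range M, ‖z (m + 1) - w * z m‖ := by
  have h : (1 - w) * ∑ m ∈ range M, z m
      = z 0 - z M + ∑ m ∈ range M, (z (m + 1) - w * z m) := by
    have h1 := sum_range_succ z M
    rw [sum_range_succ'] at h1
    rw [sum_sub_distrib, ← mul_sum]
    linear_combination -h1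
  rw [← norm_mul, h]
  have h2 := norm_add_le (z 0 - z M) (∑ m ∈ range M, (z (m + 1) - w * z m))
  have h3 := norm_sub_le (z 0) (z M)
  have h4 := norm_sum_le (range M) fun m => z (m + 1) - w * z m
  linarith [hz 0, hz M]

lemma eventually_avg_le_of_ratio {u : ℕ → ℂ} (hu : ∀ n, ‖u n‖ ≤ 1) {q : ℕ} {w : ℂ} (hw : w ≠ 1)
    (h : ∀ n, u (n + q) = w * u n) {η : ℝ} (hη : 0 < η) : ∀ᶠ N in atTop, ‖avg u N‖ ≤ η := by
  have hw' : 0 < ‖1 - w‖ := norm_pos_iff.2 (sub_ne_zero.2 hw.symm)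
  obtain ⟨M, hM⟩ := exists_nat_gt (2 / (‖1 - w‖ * (η / 2)))
  have hM0 : (0 : ℝ) < M := lt_trans (by positivity) hM
  refine eventually_avg_le_of_progression hu (q := q) (M := M) (by exact_mod_cast hM0)
    (half_lt_self hη) fun n => ?_
  have h1 := norm_one_sub_mul_norm_sum_le (z := fun m => u (n + m * q)) (fun m => hu _) w M
  have h2 : ∀ m, u (n + (m + 1) * q) - w * u (n + m * q) = 0 := fun m => by
    rw [← h, sub_eq_zero]; congr 1; ring
  simp only [h2, norm_zero, sum_const_zero, add_zero] at h1
  rw [div_lt_iff₀ (by positivity)] at hM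
  refine le_of_mul_le_mul_left (h1.trans ?_) hw'
  linarith

/-- Weyl's theorem for quadratic polynomials. -/
theorem tendsto_avg_quadratic {γ δ : ℝ} (h : Irrational γ ∨ Irrational δ) :
    Tendsto (avg fun n => eFun (γ * n ^ 2 + δ * n)) atTop (𝓝 0) := by
  by_cases hγ : Irrational γ
  · refine tendsto_avg_zero_of_shifts (fun n => (norm_eFun _).le) fun η hη J =>
      ⟨range J, by simp, fun s _ t _ hst => ?_⟩
    have hd : 0 < t - s := by omega
    generalize t - s = d at hd
    refine eventually_avg_le_of_ratio (q := 1) (w := eFun ((2 * d : ℕ) * γ)) (fun n => ?_) ?_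
      (fun n => ?_) hη
    · rw [eFun_mul_conj, norm_eFun]
    · exact eFun_ne_one_of_irrational (hγ.natCast_mul (by omega))
    · rw [eFun_mul_conj, eFun_mul_conj, ← eFun_add]
      congr 1; push_cast; ring
  · have hδ : Irrational δ := h.resolve_left hγ
    obtain ⟨r, rfl⟩ : ∃ r : ℚ, (r : ℝ) = γ := by simpa [Irrational] using hγ
    rw [Metric.tendsto_nhds]
    intro ε hε
    have := eventually_avg_le_of_ratio (u := fun n : ℕ => eFun (r * n ^ 2 + δ * n)) (q := r.den)
      (w := eFun (r.den * δ)) (fun n => (norm_eFun _).le)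
      (eFun_ne_one_of_irrational (hδ.natCast_mul r.den_nz)) (fun n => ?_) (half_pos hε)
    · filter_upwards [this] with N hN
      rw [dist_zero_right]; linarith
    · rw [← eFun_add, ← eFun_add_int (r.den * δ + _) (r.num * (2 * n + r.den))]
      congr 1
      have : (r : ℝ) * r.den = r.num := by exact_mod_cast r.mul_den_eq_num
      push_cast
      rw [← this]; ring

/-! ### Bracket quadratic phases -/

/-- The bracket quadratic polynomial `n (α [nβ] - β [nα])`, where `[x]` is an integer nearest
to `x`. -/
noncomputable def bracket (α β : ℝ) (n : ℕ) : ℝ := n * (α * round (n * β) - β * round (n * α))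

/-- The step `q` moves `(nα, nβ)` by `(ε, ε') + ℤ²`, where both `ε` and `ε'` are nonnegative
and at most `2 / Q`. -/
structure IsScale (α β : ℝ) (q Q : ℕ) (P P' : ℤ) (ε ε' : ℝ) : Prop where
  pos : 0 < Q
  left_eq : q * α = P + ε
  right_eq : q * β = P' + ε'
  left_nonneg : 0 ≤ ε
  right_nonneg : 0 ≤ ε'
  left_le : Q * ε ≤ 2
  right_le : Q * ε' ≤ 2

/-- The excess of the increment of `round (N * α)` over `P` when `N` increases by `q`. -/
noncomputable def roundJump (α : ℝ) (q : ℕ) (P : ℤ) (N : ℕ) : ℤ :=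
  round ((N + q : ℕ) * α) - round (N * α) - P

lemma roundJump_nonneg {α ε : ℝ} {q : ℕ} {P : ℤ} (h : q * α = P + ε) (hε : 0 ≤ ε) (N : ℕ) :
    0 ≤ roundJump α q P N := by
  have h1 : ((N + q : ℕ) : ℝ) * α = (N * α + ε) + P := by push_cast; linear_combination h
  have h2 : round (N * α) ≤ round (N * α + ε) := by
    rw [round_eq, round_eq]; exact Int.floor_mono (by linarith)
  rw [roundJump, h1, round_add_intCast]
  linarith

lemma sum_roundJump_le {α ε : ℝ} {q M : ℕ} {P : ℤ} (h : q * α = P + ε) (hM : M * ε ≤ 2)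
    (n : ℕ) : ∑ m ∈ range M, roundJump α q P (n + m * q) ≤ 3 := by
  have h1 : ∑ m ∈ range M, roundJump α q P (n + m * q)
      = round ((n + M * q : ℕ) * α) - round (n * α) - M * P := by
    have := sum_range_sub (fun m => round (((n + m * q : ℕ) : ℝ) * α)) M
    simp only [roundJump, sum_sub_distrib, sum_const, card_range, nsmul_eq_mul]
    simp only [sum_sub_distrib, zero_mul, add_zero] at this
    rw [← this]
    simp only [add_mul, one_mul, add_assoc]
  have h2 : ((n + M * q : ℕ) : ℝ) * α = (n * α + M * ε) + (M * P : ℤ) := by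
    push_cast; linear_combination (M : ℝ) * h
  rw [h1, h2, round_add_intCast]
  have h3 := abs_le.1 (abs_sub_round (n * α + M * ε))
  have h4 := abs_le.1 (abs_sub_round (n * α))
  have : (round (n * α + M * ε) : ℝ) ≤ (round (n * α) + 3 : ℤ) := by push_cast; linarith
  have := Int.cast_le.1 this
  linarith

/-- The phase of the sequences whose averages are estimated. -/
noncomputable def phase (α β : ℝ) (k : ℤ) (γ δ : ℝ) (n : ℕ) : ℝ :=
  k * bracket α β n + (γ * n ^ 2 + δ * n)

section

variable {α β ε ε' : ℝ} {q Q : ℕ} {P P' : ℤ}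

lemma abs_second_difference_phase_le (hs : IsScale α β q Q P P' ε ε') (k : ℤ) (γ δ : ℝ) (h N : ℕ)
    (h1 : roundJump α q P N = 0) (h2 : roundJump α q P (N + h) = 0)
    (h3 : roundJump β q P' N = 0) (h4 : roundJump β q P' (N + h) = 0) :
    ∃ t : ℤ, |(phase α β k γ δ (N + q + h) - phase α β k γ δ (N + q))
      - (2 * h * (k * (β * ε - α * ε') + γ * q)
        + (phase α β k γ δ (N + h) - phase α β k γ δ N)) - t| ≤ |(k : ℝ)| * (ε + ε') := by
  obtain ⟨-, hα, hβ, hε, hε', -, -⟩ := hs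
  simp only [roundJump] at h1 h2 h3 h4
  have e : N + q + h = N + h + q := by ring
  have r1 : round (((N + q : ℕ) : ℝ) * α) = round ((N : ℝ) * α) + P := by linarith
  have r2 : round (((N + h + q : ℕ) : ℝ) * α) = round (((N + h : ℕ) : ℝ) * α) + P := by linarith
  have r3 : round (((N + q : ℕ) : ℝ) * β) = round ((N : ℝ) * β) + P' := by linarith
  have r4 : round (((N + h + q : ℕ) : ℝ) * β) = round (((N + h : ℕ) : ℝ) * β) + P' := by linarith
  have b1 := abs_le.1 (abs_sub_round ((N : ℝ) * α))
  have b2 := abs_le.1 (abs_sub_round (((N + h : ℕ) : ℝ) * α))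
  have b3 := abs_le.1 (abs_sub_round ((N : ℝ) * β))
  have b4 := abs_le.1 (abs_sub_round (((N + h : ℕ) : ℝ) * β))
  rw [e]
  simp only [phase, bracket, r1, r2, r3, r4]
  generalize round ((N : ℝ) * α) = X at *
  generalize round (((N + h : ℕ) : ℝ) * α) = X' at *
  generalize round ((N : ℝ) * β) = Y at *
  generalize round (((N + h : ℕ) : ℝ) * β) = Y' at *
  refine ⟨k * (P * (Y' - Y) - P' * (X' - X)), ?_⟩
  push_cast at b2 b4 ⊢
  have hP : (P : ℝ) = q * α - ε := by linarith
  have hP' : (P' : ℝ) = q * β - ε' := by linarith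
  rw [hP, hP']
  have key : ∀ E : ℝ, E = k * (ε * (Y' - Y - h * β) - ε' * (X' - X - h * α)) →
      |E| ≤ |(k : ℝ)| * (ε + ε') := by
    rintro E rfl
    rw [abs_mul]
    gcongr
    refine (abs_sub _ _).trans ?_
    rw [abs_mul, abs_mul, abs_of_nonneg hε, abs_of_nonneg hε']
    have c1 : |(Y' : ℝ) - Y - h * β| ≤ 1 := abs_le.2 ⟨by linarith, by linarith⟩
    have c2 : |(X' : ℝ) - X - h * α| ≤ 1 := abs_le.2 ⟨by linarith, by linarith⟩
    nlinarith
  apply key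
  ring

lemma norm_sum_progression_le (hs : IsScale α β q Q P P' ε ε') {k : ℤ} (hk : k ≠ 0) (γ δ : ℝ)
    (h n : ℕ) :
    ‖1 - eFun (2 * h * (k * (β * ε - α * ε') + γ * q))‖ *
      ‖∑ m ∈ range Q, eFun (phase α β k γ δ (n + m * q + h)) *
        conj (eFun (phase α β k γ δ (n + m * q)))‖ ≤ 60 * |(k : ℝ)| := by
  simp only [eFun_mul_conj]
  set τ := 2 * h * (k * (β * ε - α * ε') + γ * q)
  set f := phase α β k γ δ
  have hk1 : (1 : ℝ) ≤ |(k : ℝ)| := by exact_mod_cast Int.one_le_abs hk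
  set J : ℕ → ℤ := fun N => roundJump α q P N + roundJump α q P (N + h) + roundJump β q P' N
    + roundJump β q P' (N + h) with hJ
  have step : ∀ N, ‖eFun (f (N + q + h) - f (N + q)) - eFun τ * eFun (f (N + h) - f N)‖
      ≤ 2 * Real.pi * (|(k : ℝ)| * (ε + ε')) + 2 * (J N : ℝ) := by
    intro N
    have j1 := roundJump_nonneg hs.left_eq hs.left_nonneg N
    have j2 := roundJump_nonneg hs.left_eq hs.left_nonneg (N + h)
    have j3 := roundJump_nonneg hs.right_eq hs.right_nonneg N
    have j4 := roundJump_nonneg hs.right_eq hs.right_nonneg (N + h)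
    rw [← eFun_add]
    by_cases h0 : J N = 0
    · obtain ⟨t, ht⟩ := abs_second_difference_phase_le hs k γ δ h N (by simp only [hJ] at h0; omega)
        (by simp only [hJ] at h0; omega) (by simp only [hJ] at h0; omega)
        (by simp only [hJ] at h0; omega)
      rw [h0, ← eFun_add_int (τ + (f (N + h) - f N)) t]
      refine (norm_eFun_sub_eFun_le _ _).trans ?_
      simp only [Int.cast_zero, mul_zero, add_zero]
      gcongr
      rwa [← sub_sub]
    · have h1 : (1 : ℝ) ≤ J N := by
        have : 1 ≤ J N := by simp only [hJ] at h0 ⊢; omega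
        exact_mod_cast this
      have h2 : 0 ≤ 2 * Real.pi * (|(k : ℝ)| * (ε + ε')) :=
        mul_nonneg Real.two_pi_pos.le
          (mul_nonneg (abs_nonneg _) (add_nonneg hs.left_nonneg hs.right_nonneg))
      have h3 := norm_sub_le (eFun (f (N + q + h) - f (N + q))) (eFun (τ + (f (N + h) - f N)))
      rw [norm_eFun, norm_eFun] at h3
      linarith
  have hsum : ∑ m ∈ range Q, (J (n + m * q) : ℝ) ≤ 12 := by
    have hJs : ∑ m ∈ range Q, J (n + m * q) ≤ 12 := by
      have s1 := sum_roundJump_le hs.left_eq hs.left_le n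
      have s2 := sum_roundJump_le hs.left_eq hs.left_le (n + h)
      have s3 := sum_roundJump_le hs.right_eq hs.right_le n
      have s4 := sum_roundJump_le hs.right_eq hs.right_le (n + h)
      simp only [hJ, sum_add_distrib]
      simp only [add_right_comm n h] at s2 s4
      linarith
    exact_mod_cast hJs
  have main := norm_one_sub_mul_norm_sum_le
    (z := fun m => eFun (f (n + m * q + h) - f (n + m * q))) (fun m => (norm_eFun _).le)
    (eFun τ) Q
  refine main.trans ?_
  have total : ∑ m ∈ range Q, ‖eFun (f (n + (m + 1) * q + h) - f (n + (m + 1) * q))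
      - eFun τ * eFun (f (n + m * q + h) - f (n + m * q))‖
      ≤ ∑ m ∈ range Q, (2 * Real.pi * (|(k : ℝ)| * (ε + ε')) + 2 * (J (n + m * q) : ℝ)) := by
    refine sum_le_sum fun m _ => ?_
    rw [show n + (m + 1) * q = n + m * q + q by ring]
    exact step _
  rw [sum_add_distrib, sum_const, card_range, nsmul_eq_mul, ← mul_sum] at total
  have hQ : (Q : ℝ) * (2 * Real.pi * (|(k : ℝ)| * (ε + ε'))) ≤ 26 * |(k : ℝ)| := by
    have hpi : Real.pi < 3.15 := Real.pi_lt_d2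
    calc (Q : ℝ) * (2 * Real.pi * (|(k : ℝ)| * (ε + ε')))
        = 2 * Real.pi * (|(k : ℝ)| * (Q * ε + Q * ε')) := by ring
      _ ≤ 2 * Real.pi * (|(k : ℝ)| * (2 + 2)) := by
          gcongr
          · exact hs.left_le
          · exact hs.right_le
      _ ≤ 26 * |(k : ℝ)| := by nlinarith
  linarith

lemma eventually_avg_difference_le (hs : IsScale α β q Q P P' ε ε') {k : ℤ} (hk : k ≠ 0)
    {γ : ℝ} (δ : ℝ) {h : ℕ} {η : ℝ} (hη : 0 < η)
    (hτ : 16 * |(k : ℝ)| / η ≤ Q * |2 * h * (k * (β * ε - α * ε') + γ * q)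
      - round (2 * h * (k * (β * ε - α * ε') + γ * q))|) :
    ∀ᶠ N in atTop, ‖avg (fun n => eFun (phase α β k γ δ (n + h)) *
      conj (eFun (phase α β k γ δ n))) N‖ ≤ η := by
  have hk0 : (0 : ℝ) < |(k : ℝ)| := by positivity
  have hQ : (0 : ℝ) < Q := by exact_mod_cast hs.pos
  refine eventually_avg_le_of_progression (fun n => ?_) hs.pos (q := q)
    (show η * (15 / 16) < η by linarith) fun n => ?_
  · rw [eFun_mul_conj, norm_eFun]
  have h1 := norm_sum_progression_le hs hk γ δ h n
  have h2 := four_mul_abs_sub_round_le (2 * h * (k * (β * ε - α * ε') + γ * q))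
  set s := ‖∑ m ∈ range Q, eFun (phase α β k γ δ (n + m * q + h)) *
        conj (eFun (phase α β k γ δ (n + m * q)))‖
  have hs0 : 0 ≤ s := norm_nonneg _
  set T := |2 * h * (k * (β * ε - α * ε') + γ * q)
      - round (2 * h * (k * (β * ε - α * ε') + γ * q))|
  have h3 : 4 * T * s ≤ 60 * |(k : ℝ)| := (mul_le_mul_of_nonneg_right h2 hs0).trans h1
  rw [div_le_iff₀ hη] at hτ
  have h4 : |(k : ℝ)| * (16 * s) ≤ |(k : ℝ)| * (15 * (Q * η)) := by
    calc |(k : ℝ)| * (16 * s) = (16 * |(k : ℝ)|) * s := by ring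
      _ ≤ (Q * T * η) * s := by gcongr
      _ = Q * η * (4 * T * s) / 4 := by ring
      _ ≤ Q * η * (60 * |(k : ℝ)|) / 4 := by gcongr
      _ = _ := by ring
  have h5 := le_of_mul_le_mul_left h4 hk0
  linarith

end

/-- `α` and `β` have pairs of consecutive scales, at the first of which `α` moves by about `1 / Q`
and `β` moves much less, but does move. -/
def HasScalePairs (α β : ℝ) : Prop :=
  ∀ θ : ℝ, 0 < θ → ∃ (q Q Q' : ℕ) (P P' R R' : ℤ) (ε ε' κ κ' : ℝ),
    IsScale α β q Q P P' ε ε' ∧ IsScale α β (q * Q) Q' R R' κ κ' ∧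
    1 ≤ θ * Q ∧ 1 ≤ θ * Q' ∧ |Q * ε - 1| ≤ θ ∧ 0 < ε' ∧ Q * ε' ≤ θ

/-- The shift `h` is good with constant `K` if at some scale the second difference of the phase is
at distance at least `K / Q` from the integers. -/
def GoodShift (α β : ℝ) (k : ℤ) (γ K : ℝ) (h : ℕ) : Prop :=
  ∃ (q Q : ℕ) (P P' : ℤ) (ε ε' : ℝ), IsScale α β q Q P P' ε ε' ∧
    K ≤ Q * |2 * h * (k * (β * ε - α * ε') + γ * q)
      - round (2 * h * (k * (β * ε - α * ε') + γ * q))|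

lemma mul_abs_sub_lt_of_two_multiples {ρ B : ℝ} {h d Q : ℕ} {Z Z' : ℤ}
    (h1 : |h * ρ - Q * Z| < B) (h2 : |((h + d : ℕ) : ℝ) * ρ - Q * Z'| < B)
    (hQ : (2 * h + d) * B < Q) :
    h * |d * ρ - Q * (Z' - Z)| ≤ d * B := by
  have hB : 0 < B := (abs_nonneg _).trans_lt h1
  have hh : (0 : ℝ) ≤ h := by positivity
  have hd : (0 : ℝ) ≤ d := by positivity
  set s := d * ρ - Q * (Z' - Z) with hs
  have h3 : |s| ≤ 2 * B := by
    have : s = (((h + d : ℕ) : ℝ) * ρ - Q * Z') - (h * ρ - Q * Z) := by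
      rw [hs]; push_cast; ring
    rw [this]
    exact (abs_sub _ _).trans (by linarith)
  have h4 : h * s - Q * ((d * Z - h * (Z' - Z) : ℤ) : ℝ) = d * (h * ρ - Q * Z) := by
    rw [hs]; push_cast; ring
  have h5 : |h * s - Q * ((d * Z - h * (Z' - Z) : ℤ) : ℝ)| ≤ d * B := by
    rw [h4, abs_mul, abs_of_nonneg hd]
    gcongr
  rcases Nat.eq_zero_or_pos h with rfl | hpos
  · simp only [Nat.cast_zero, zero_mul]; positivity
  have hpos' : (0 : ℝ) < h := by exact_mod_cast hpos
  have hQ0 : (0 : ℝ) < Q := lt_trans (by positivity) hQ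
  have h6 : d * Z - h * (Z' - Z) = 0 := by
    by_contra hne
    have hone : (1 : ℝ) ≤ |((d * Z - h * (Z' - Z) : ℤ) : ℝ)| := by
      exact_mod_cast Int.one_le_abs hne
    have h7 : (Q : ℝ) ≤ |Q * ((d * Z - h * (Z' - Z) : ℤ) : ℝ)| := by
      rw [abs_mul, abs_of_pos hQ0]; nlinarith
    have h8 : |Q * ((d * Z - h * (Z' - Z) : ℤ) : ℝ)| ≤ |h * s| + d * B := by
      have := abs_sub_abs_le_abs_sub (Q * ((d * Z - h * (Z' - Z) : ℤ) : ℝ)) (h * s)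
      rw [abs_sub_comm] at this
      linarith
    have h9 : |h * s| ≤ h * (2 * B) := by rw [abs_mul, abs_of_nonneg hh]; gcongr
    linarith
  rw [h6, Int.cast_zero, mul_zero, sub_zero, abs_mul, abs_of_nonneg hh] at h5
  exact h5

lemma HasScalePairs.irrational_right {α β : ℝ} (h : HasScalePairs α β) : Irrational β := by
  rintro ⟨r, rfl⟩
  have hr : (0 : ℝ) < r.den := by exact_mod_cast r.den_pos
  obtain ⟨q, Q, -, P, P', -, -, ε, ε', -, -, hs, -, -, -, -, hpos, hle⟩ :=
    h (1 / (2 * r.den)) (by positivity)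
  have hQ : (1 : ℝ) ≤ Q := by exact_mod_cast hs.pos
  have h1 : ε' ≤ 1 / (2 * r.den) := by nlinarith
  have h2 : r.den * ε' = (q * r.num - r.den * P' : ℤ) := by
    have e1 := hs.right_eq
    have e2 : (r : ℝ) * r.den = r.num := by exact_mod_cast r.mul_den_eq_num
    push_cast
    linear_combination -(r.den : ℝ) * e1 + (q : ℝ) * e2
  have h3 : 0 < r.den * ε' := by positivity
  have h4 : r.den * ε' < 1 := by
    calc r.den * ε' ≤ r.den * (1 / (2 * r.den)) := by gcongr
      _ = 1 / 2 := by field_simp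
      _ < 1 := by norm_num
  rw [h2] at h3 h4
  have h5 : (0 : ℤ) < q * r.num - r.den * P' := by exact_mod_cast h3
  have h6 : (q * r.num - r.den * P' : ℤ) < 1 := by exact_mod_cast h4
  omega

lemma goodShift_or_goodShift {α β : ℝ} (hα : |α| ≤ 1) (hβ : |β| ≤ 1)
    (hsc : HasScalePairs α β) {k : ℤ} (hk : k ≠ 0) (γ : ℝ) {K : ℝ} (hK : 0 < K) {d : ℕ}
    (hd : 1 ≤ d) :
    ∃ H : ℕ, ∀ h ≥ H, GoodShift α β k γ K h ∨ GoodShift α β k γ K (h + d) := by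
  set x : ℝ := 2 * d * k * β with hx
  set m := |x - round x| with hm
  have hm0 : 0 < m := by
    refine abs_pos.2 (sub_ne_zero.2 ?_)
    have : Irrational x := by
      have := hsc.irrational_right.intCast_mul (m := 2 * d * k) (by positivity)
      simpa [hx] using this
    exact this.ne_int _
  have hd0 : (0 : ℝ) < d := by exact_mod_cast hd
  obtain ⟨H, hH⟩ := exists_nat_gt (4 * (d * (K + 1)) / m)
  refine ⟨H, fun h hh => ?_⟩
  have hhH : 4 * (d * (K + 1)) / m < h := hH.trans_le (by exact_mod_cast hh)
  have hh0 : (0 : ℝ) < h := lt_trans (by positivity) hhH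
  rw [div_lt_iff₀ hm0] at hhH
  have hk0 : (0 : ℝ) < |(k : ℝ)| := by positivity
  set A : ℝ := 4 * (h + d) * |(k : ℝ)| + (2 * h + d) * (K + 1) + 8 * (K + 8 * (h + d) * |(k : ℝ)|) / m
    with hA
  have hA0 : 0 < A := by positivity
  obtain ⟨q, Q, Q', P, P', R, R', ε, ε', κ, κ', hs, hs', hθQ, hθQ', hε, -, hε'⟩ :=
    hsc (1 / (2 * A)) (by positivity)
  set θ := 1 / (2 * A) with hθ
  have hθ0 : 0 < θ := by positivity
  have hθA : θ * A = 1 / 2 := by rw [hθ]; field_simp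
  have hb1 : θ * (4 * (h + d) * |(k : ℝ)|) ≤ 1 := by
    have : θ * (4 * (h + d) * |(k : ℝ)|) ≤ θ * A := by
      gcongr
      rw [hA, add_assoc]
      exact le_add_of_nonneg_right (by positivity)
    linarith
  have hb2 : (2 * h + d) * (K + 1) < Q := by
    have h1 : θ * ((2 * h + d) * (K + 1)) ≤ θ * A := by
      gcongr
      have : 0 ≤ 4 * (h + d) * |(k : ℝ)| + 8 * (K + 8 * (h + d) * |(k : ℝ)|) / m := by positivity
      linarith
    refine lt_of_mul_lt_mul_left ?_ hθ0.le
    linarith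
  have hb3 : θ * (K + 8 * (h + d) * |(k : ℝ)|) ≤ m / 8 := by
    have h1 : θ * (8 * (K + 8 * (h + d) * |(k : ℝ)|) / m) ≤ θ * A := by
      gcongr
      rw [hA]
      exact le_add_of_nonneg_left (by positivity)
    have h2 : θ * (8 * (K + 8 * (h + d) * |(k : ℝ)|) / m) * m ≤ 1 * m := by gcongr; linarith
    have h3 : θ * (8 * (K + 8 * (h + d) * |(k : ℝ)|) / m) * m
        = 8 * (θ * (K + 8 * (h + d) * |(k : ℝ)|)) := by field_simp
    linarith
  by_contra! hcon
  have hQ0 : (0 : ℝ) < Q := by exact_mod_cast hs.pos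
  have hQpos' : (0 : ℝ) < Q' := by exact_mod_cast hs'.pos
  have first : ∀ a : ℕ, (a : ℝ) ≤ h + d → ¬ GoodShift α β k γ K a →
      ∃ Z : ℤ, |a * (2 * (k * β + γ * (q * Q : ℕ))) - Q * Z| < K + 1 := by
    intro a ha hbad
    simp only [GoodShift, not_exists, not_and, not_le] at hbad
    have h1 := hbad q Q P P' ε ε' hs
    set Z := round (2 * a * (k * (β * ε - α * ε') + γ * q))
    refine ⟨Z, ?_⟩
    rw [← abs_of_pos hQ0, ← abs_mul] at h1
    have e : a * (2 * (k * β + γ * (q * Q : ℕ))) - Q * Z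
        = Q * (2 * a * (k * (β * ε - α * ε') + γ * q) - Z)
          - 2 * a * k * (β * (Q * ε - 1) - α * (Q * ε')) := by push_cast; ring
    have b : |2 * a * k * (β * (Q * ε - 1) - α * (Q * ε'))| ≤ 1 := by
      have b1 : |β * (Q * ε - 1) - α * (Q * ε')| ≤ 2 * θ := by
        refine (abs_sub _ _).trans ?_
        rw [abs_mul, abs_mul α, abs_of_nonneg (mul_nonneg hQ0.le hs.right_nonneg)]
        have := mul_le_mul hβ hε (abs_nonneg _) zero_le_one
        have := mul_le_mul hα hε' (mul_nonneg hQ0.le hs.right_nonneg) zero_le_one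
        linarith
      rw [abs_mul, abs_mul, abs_of_nonneg (by positivity : (0 : ℝ) ≤ 2 * a)]
      calc 2 * a * |(k : ℝ)| * _ ≤ 2 * (h + d) * |(k : ℝ)| * (2 * θ) := by gcongr
        _ = θ * (4 * (h + d) * |(k : ℝ)|) := by ring
        _ ≤ 1 := hb1
    rw [e]
    refine (abs_sub _ _).trans_lt ?_
    linarith
  have second : ∀ a : ℕ, (a : ℝ) ≤ h + d → ¬ GoodShift α β k γ K a →
      ∃ Z : ℤ, |a * (2 * (γ * (q * Q : ℕ))) - Z| ≤ m / 8 := by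
    intro a ha hbad
    simp only [GoodShift, not_exists, not_and, not_le] at hbad
    have h1 := hbad (q * Q) Q' R R' κ κ' hs'
    set Z := round (2 * a * (k * (β * κ - α * κ') + γ * (q * Q : ℕ)))
    refine ⟨Z, ?_⟩
    have e : Q' * (a * (2 * (γ * (q * Q : ℕ))) - Z)
        = Q' * (2 * a * (k * (β * κ - α * κ') + γ * (q * Q : ℕ)) - Z)
          - 2 * a * k * (β * (Q' * κ) - α * (Q' * κ')) := by push_cast; ring
    have b : |2 * a * k * (β * (Q' * κ) - α * (Q' * κ'))| ≤ 8 * (h + d) * |(k : ℝ)| := by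
      have p1 := mul_nonneg hQpos'.le hs'.left_nonneg
      have p2 := mul_nonneg hQpos'.le hs'.right_nonneg
      have b1 : |β * (Q' * κ) - α * (Q' * κ')| ≤ 4 := by
        refine (abs_sub _ _).trans ?_
        rw [abs_mul, abs_mul α, abs_of_nonneg p1, abs_of_nonneg p2]
        have := mul_le_mul hβ hs'.left_le p1 zero_le_one
        have := mul_le_mul hα hs'.right_le p2 zero_le_one
        linarith
      rw [abs_mul, abs_mul, abs_of_nonneg (by positivity : (0 : ℝ) ≤ 2 * a)]
      calc 2 * a * |(k : ℝ)| * _ ≤ 2 * (h + d) * |(k : ℝ)| * 4 := by gcongr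
        _ = _ := by ring
    have h2 : Q' * |a * (2 * (γ * (q * Q : ℕ))) - Z| ≤ K + 8 * (h + d) * |(k : ℝ)| := by
      rw [← abs_of_pos hQpos', ← abs_mul] at h1 ⊢
      rw [e]
      exact (abs_sub _ _).trans (by linarith)
    calc _ ≤ θ * Q' * |a * (2 * (γ * (q * Q : ℕ))) - Z| :=
          le_mul_of_one_le_left (abs_nonneg _) hθQ'
      _ = θ * (Q' * |a * (2 * (γ * (q * Q : ℕ))) - Z|) := by ring
      _ ≤ θ * (K + 8 * (h + d) * |(k : ℝ)|) := by gcongr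
      _ ≤ m / 8 := hb3
  obtain ⟨Z, hZ⟩ := first h (by linarith) hcon.1
  obtain ⟨Z', hZ'⟩ := first (h + d) (by push_cast; rfl) hcon.2
  obtain ⟨V, hV⟩ := second h (by linarith) hcon.1
  obtain ⟨V', hV'⟩ := second (h + d) (by push_cast; rfl) hcon.2
  have hs1 := mul_abs_sub_lt_of_two_multiples hZ hZ' hb2
  set s := d * (2 * (k * β + γ * (q * Q : ℕ))) - Q * (Z' - Z) with hsdef
  have hs2 : |s| < m / 4 := by
    refine lt_of_mul_lt_mul_left ?_ hh0.le
    linarith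
  have hround := round_le x (Q * (Z' - Z) - (V' - V))
  have e : x - ((Q * (Z' - Z) - (V' - V) : ℤ) : ℝ)
      = s - ((((h + d : ℕ) : ℝ) * (2 * (γ * (q * Q : ℕ))) - V')
        - (h * (2 * (γ * (q * Q : ℕ))) - V)) := by
    rw [hx, hsdef]; push_cast; ring
  rw [e] at hround
  have := abs_sub s ((((h + d : ℕ) : ℝ) * (2 * (γ * (q * Q : ℕ))) - V')
        - (h * (2 * (γ * (q * Q : ℕ))) - V))
  have := abs_sub (((h + d : ℕ) : ℝ) * (2 * (γ * (q * Q : ℕ))) - V')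
        (h * (2 * (γ * (q * Q : ℕ))) - V)
  linarith

/-- Bracket quadratic phases do not correlate with quadratic phases. -/
theorem tendsto_avg_phase {α β : ℝ} (hα : |α| ≤ 1) (hβ : |β| ≤ 1)
    (hsc : HasScalePairs α β) {k : ℤ} (hk : k ≠ 0) (γ δ : ℝ) :
    Tendsto (avg fun n => eFun (phase α β k γ δ n)) atTop (𝓝 0) := by
  refine tendsto_avg_zero_of_shifts (fun n => (norm_eFun _).le) fun η hη J => ?_
  have hk0 : (0 : ℝ) < |(k : ℝ)| := by positivity
  have hK : 0 < 16 * |(k : ℝ)| / η := by positivity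
  have hG : ∀ D : ℕ, ∃ H : ℕ, ∀ h ≥ H, ∀ d : ℕ, 1 ≤ d → d ≤ D →
      GoodShift α β k γ (16 * |(k : ℝ)| / η) h ∨ GoodShift α β k γ (16 * |(k : ℝ)| / η) (h + d) := by
    intro D
    choose! H hH using fun d (hd : 1 ≤ d) => goodShift_or_goodShift hα hβ hsc hk γ hK hd
    refine ⟨(range (D + 1)).sup H, fun h hh d hd hdD => hH d hd h ?_⟩
    exact (le_sup (f := H) (mem_range.2 (by omega))).trans hh
  obtain ⟨S, hSJ, hS⟩ := exists_finset_differences hG J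
  refine ⟨S, hSJ, fun s hs t ht hst => ?_⟩
  obtain ⟨q, Q, P, P', ε, ε', hsc', hτ⟩ := hS s hs t ht hst
  exact eventually_avg_difference_le hsc' hk δ hη hτ

/-! ### Construction of the frequencies -/

/-- The tail from `J` on of the series `∑ 2 ^ (-3 ^ (2 j + c))`. -/
noncomputable def lacunaryTail (c J : ℕ) : ℝ := ∑' j : ℕ, (1 / 2 : ℝ) ^ 3 ^ (2 * (j + J) + c)

lemma add_le_three_pow (n j : ℕ) : 3 ^ n + j ≤ 3 ^ (2 * j + n) := by
  induction j with
  | zero => simp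
  | succ j ih =>
    rw [show 2 * (j + 1) + n = 2 * j + n + 2 by ring, pow_add]
    have : 1 ≤ 3 ^ (2 * j + n) := Nat.one_le_pow _ _ (by norm_num)
    omega

lemma lacunary_term_le (c J j : ℕ) :
    (1 / 2 : ℝ) ^ 3 ^ (2 * (j + J) + c) ≤ (1 / 2 : ℝ) ^ 3 ^ (2 * J + c) * (1 / 2) ^ j := by
  rw [← pow_add]
  refine pow_le_pow_of_le_one (by norm_num) (by norm_num) ?_
  rw [show 2 * (j + J) + c = 2 * j + (2 * J + c) by ring]
  exact add_le_three_pow _ _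

lemma summable_lacunary (c J : ℕ) :
    Summable fun j : ℕ => (1 / 2 : ℝ) ^ 3 ^ (2 * (j + J) + c) :=
  Summable.of_nonneg_of_le (fun j => by positivity) (lacunary_term_le c J)
    (summable_geometric_two.mul_left _)

lemma lacunaryTail_le (c J : ℕ) : lacunaryTail c J ≤ 2 * (1 / 2 : ℝ) ^ 3 ^ (2 * J + c) := by
  refine ((summable_lacunary c J).tsum_le_tsum (lacunary_term_le c J)
    (summable_geometric_two.mul_left _)).trans ?_
  rw [tsum_mul_left, tsum_geometric_two, mul_comm]

lemma lacunaryTail_pos (c J : ℕ) : 0 < lacunaryTail c J :=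
  (summable_lacunary c J).tsum_pos (fun j => by positivity) 0 (by positivity)

lemma sum_add_lacunaryTail (c J : ℕ) :
    ∑ j ∈ range J, (1 / 2 : ℝ) ^ 3 ^ (2 * j + c) + lacunaryTail c J = lacunaryTail c 0 := by
  exact (summable_lacunary c 0).sum_add_tsum_nat_add J

lemma lacunaryTail_eq (c J : ℕ) :
    lacunaryTail c J = (1 / 2 : ℝ) ^ 3 ^ (2 * J + c) + lacunaryTail c (J + 1) := by
  have h1 := sum_add_lacunaryTail c J
  have h2 := sum_add_lacunaryTail c (J + 1)
  rw [sum_range_succ] at h2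
  linarith

lemma two_pow_mul_half_pow {a b : ℕ} (h : a ≤ b) : (2 : ℝ) ^ b * (1 / 2) ^ a = 2 ^ (b - a) := by
  rw [one_div, inv_pow, pow_sub₀ _ two_ne_zero h]

lemma two_pow_mul_half_pow' {a b : ℕ} (h : a ≤ b) :
    (2 : ℝ) ^ a * (1 / 2) ^ b = (1 / 2) ^ (b - a) := by
  obtain ⟨d, rfl⟩ := Nat.exists_eq_add_of_le h
  rw [pow_add, ← mul_assoc, two_pow_mul_half_pow le_rfl]; simp

lemma exists_two_pow_mul_lacunary_eq {c J i : ℕ} (h : ∀ j < J, 2 * j + c ≤ i) :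
    ∃ P : ℤ, ((2 ^ 3 ^ i : ℕ) : ℝ) * lacunaryTail c 0 = P + 2 ^ 3 ^ i * lacunaryTail c J := by
  refine ⟨∑ j ∈ range J, 2 ^ (3 ^ i - 3 ^ (2 * j + c)), ?_⟩
  rw [← sum_add_lacunaryTail c J, mul_add, mul_sum]
  push_cast
  congr 1
  refine sum_congr rfl fun j hj => two_pow_mul_half_pow ?_
  exact Nat.pow_le_pow_right (by norm_num) (h j (mem_range.1 hj))

lemma abs_lacunaryTail_le_one (c : ℕ) : |lacunaryTail c 0| ≤ 1 := by
  rw [abs_of_pos (lacunaryTail_pos c 0)]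
  refine (lacunaryTail_le c 0).trans ?_
  have : (1 / 2 : ℝ) ^ 3 ^ (2 * 0 + c) ≤ (1 / 2) ^ 1 :=
    pow_le_pow_of_le_one (by norm_num) (by norm_num) (Nat.one_le_pow _ _ (by norm_num))
  linarith

lemma hasScalePairs_lacunary : HasScalePairs (lacunaryTail 1 0) (lacunaryTail 0 0) := by
  intro θ hθ
  obtain ⟨J, hJ⟩ := exists_pow_lt_of_lt_one hθ (by norm_num : (1 / 2 : ℝ) < 1)
  obtain ⟨P, hP⟩ := exists_two_pow_mul_lacunary_eq (c := 1) (J := J) (i := 2 * J) (by omega)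
  obtain ⟨P', hP'⟩ := exists_two_pow_mul_lacunary_eq (c := 0) (J := J + 1) (i := 2 * J) (by omega)
  obtain ⟨R, hR⟩ := exists_two_pow_mul_lacunary_eq (c := 1) (J := J + 1) (i := 2 * J + 1) (by omega)
  obtain ⟨R', hR'⟩ := exists_two_pow_mul_lacunary_eq (c := 0) (J := J + 1) (i := 2 * J + 1)
    (by omega)
  set X := 3 ^ (2 * J) with hX
  have hJX : J + 1 ≤ X := by have := add_le_three_pow 0 J; rw [add_zero] at this; omega
  have hX1 : 3 ^ (2 * J + 1) = 3 * X := by rw [pow_succ]; ring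
  have ha := lacunaryTail_eq 1 J
  have hb := lacunaryTail_le 0 (J + 1)
  have hc := lacunaryTail_le 1 (J + 1)
  rw [show 2 * (J + 1) + 1 = 2 * J + 1 + 2 by ring, pow_add, hX1] at hc
  rw [show 2 * (J + 1) + 0 = 2 * J + 1 + 1 by ring, pow_add, hX1] at hb
  rw [hX1] at ha hR hR'
  have pos10 := lacunaryTail_pos 1 J
  have pos01 := lacunaryTail_pos 0 (J + 1)
  have pos11 := lacunaryTail_pos 1 (J + 1)
  have anti : ∀ {a b : ℕ}, a ≤ b → (1 / 2 : ℝ) ^ b ≤ (1 / 2) ^ a := fun h =>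
    pow_le_pow_of_le_one (by norm_num) (by norm_num) h
  have b1 : (2 : ℝ) ^ (3 * X) * lacunaryTail 1 (J + 1) ≤ 2 * (1 / 2) ^ (J + 1) := by
    calc _ ≤ (2 : ℝ) ^ (3 * X) * (2 * (1 / 2) ^ (3 * X * 3 ^ 2)) := by gcongr
      _ = 2 * (2 ^ (3 * X) * (1 / 2) ^ (3 * X * 3 ^ 2)) := by ring
      _ = 2 * (1 / 2) ^ (3 * X * 3 ^ 2 - 3 * X) := by rw [two_pow_mul_half_pow' (by omega)]
      _ ≤ _ := mul_le_mul_of_nonneg_left (anti (by omega)) zero_le_two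
  have b2 : (2 : ℝ) ^ (3 * X) * lacunaryTail 0 (J + 1) ≤ 2 * (1 / 2) ^ (J + 1) := by
    calc _ ≤ (2 : ℝ) ^ (3 * X) * (2 * (1 / 2) ^ (3 * X * 3 ^ 1)) := by gcongr
      _ = 2 * (2 ^ (3 * X) * (1 / 2) ^ (3 * X * 3 ^ 1)) := by ring
      _ = 2 * (1 / 2) ^ (3 * X * 3 ^ 1 - 3 * X) := by rw [two_pow_mul_half_pow' (by omega)]
      _ ≤ _ := mul_le_mul_of_nonneg_left (anti (by omega)) zero_le_two
  have b3 : (2 : ℝ) ^ (9 * X) * lacunaryTail 1 (J + 1) ≤ 2 := by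
    calc _ ≤ (2 : ℝ) ^ (9 * X) * (2 * (1 / 2) ^ (3 * X * 3 ^ 2)) := by gcongr
      _ = 2 * (2 ^ (9 * X) * (1 / 2) ^ (3 * X * 3 ^ 2)) := by ring
      _ = 2 * (1 / 2) ^ (3 * X * 3 ^ 2 - 9 * X) := by rw [two_pow_mul_half_pow' (by omega)]
      _ ≤ 2 * (1 / 2) ^ 0 := mul_le_mul_of_nonneg_left (anti (by omega)) zero_le_two
      _ = 2 := by norm_num
  have b4 : (2 : ℝ) ^ (9 * X) * lacunaryTail 0 (J + 1) ≤ 2 := by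
    calc _ ≤ (2 : ℝ) ^ (9 * X) * (2 * (1 / 2) ^ (3 * X * 3 ^ 1)) := by gcongr
      _ = 2 * (2 ^ (9 * X) * (1 / 2) ^ (3 * X * 3 ^ 1)) := by ring
      _ = 2 * (1 / 2) ^ (3 * X * 3 ^ 1 - 9 * X) := by rw [two_pow_mul_half_pow' (by omega)]
      _ ≤ 2 * (1 / 2) ^ 0 := mul_le_mul_of_nonneg_left (anti (by omega)) zero_le_two
      _ = 2 := by norm_num
  have b5 : (2 : ℝ) ^ (3 * X) * lacunaryTail 1 J - 1
      = 2 ^ (3 * X) * lacunaryTail 1 (J + 1) := by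
    rw [ha, mul_add, two_pow_mul_half_pow le_rfl]; simp
  have halfJ : (2 : ℝ) * (1 / 2) ^ (J + 1) = (1 / 2) ^ J := by rw [pow_succ]; ring
  have hJ1 : (1 / 2 : ℝ) ^ J ≤ 1 := pow_le_one₀ (by norm_num) (by norm_num)
  have e1 : ∀ t : ℝ, ((2 ^ (2 * X) : ℕ) : ℝ) * (2 ^ X * t) = 2 ^ (3 * X) * t := by
    intro t; push_cast; ring
  have e2 : ∀ t : ℝ, ((2 ^ (6 * X) : ℕ) : ℝ) * (2 ^ (3 * X) * t) = 2 ^ (9 * X) * t := by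
    intro t; push_cast; ring
  have large : ∀ {Y : ℕ}, J ≤ Y → 1 ≤ θ * ((2 ^ Y : ℕ) : ℝ) := by
    intro Y hY
    calc (1 : ℝ) ≤ 2 ^ (Y - J) := one_le_pow₀ (by norm_num)
      _ = (1 / 2) ^ J * 2 ^ Y := by rw [← two_pow_mul_half_pow hY, mul_comm]
      _ ≤ θ * ((2 ^ Y : ℕ) : ℝ) := by push_cast; gcongr
  have hq : 2 ^ X * 2 ^ (2 * X) = 2 ^ (3 * X) := by rw [← pow_add]; congr 1; ring
  refine ⟨2 ^ X, 2 ^ (2 * X), 2 ^ (6 * X), P, P', R, R', _, _, _, _,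
    ⟨by positivity, hP, hP', by positivity, by positivity, ?_, ?_⟩,
    ⟨by positivity, by rw [hq]; exact hR, by rw [hq]; exact hR', by positivity, by positivity,
      ?_, ?_⟩, large (by omega), large (by omega), ?_, by positivity, ?_⟩
  · rw [e1]; linarith
  · rw [e1]; linarith
  · rw [e2]; exact b3
  · rw [e2]; exact b4
  · rw [e1, b5, abs_of_pos (by positivity)]; linarith
  · rw [e1]; linarith

/-! ### Weighted equidistribution on the circle -/

lemma integral_fourier_of_ne_zero {k : ℤ} (hk : k ≠ 0) :
    ∫ x : UnitAddCircle, fourier k x = 0 := by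
  have h := congrFun (fourierCoeff_fourier (T := 1) k) 0
  rw [Pi.single_eq_of_ne hk.symm] at h
  simpa [fourierCoeff, AddCircle.integral_haarAddCircle] using h

lemma volume_real_univ_unitAddCircle : (volume : Measure UnitAddCircle).real Set.univ = 1 := by
  simp [Measure.real]

lemma unitAddCircle_coe_eq_coe_iff {x y : ℝ} :
    (x : UnitAddCircle) = y ↔ ∃ k : ℤ, x = y + k := by
  rw [← sub_eq_zero, ← AddCircle.coe_sub, AddCircle.coe_eq_zero_iff]
  simp only [zsmul_one, eq_sub_iff_add_eq']
  exact exists_congr fun k => eq_comm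

lemma fourier_coe_eq_eFun (k : ℤ) (x : ℝ) : fourier k (x : UnitAddCircle) = eFun (k * x) := by
  rw [fourier_coe_apply, eFun]
  congr 1
  push_cast
  ring

lemma tendsto_avg_continuous_mul_sub {φ : ℕ → ℝ} {v : ℕ → ℂ} (hv : ∀ n, ‖v n‖ ≤ 1)
    (h : ∀ k : ℤ, k ≠ 0 → Tendsto (avg fun n => eFun (k * φ n) * v n) atTop (𝓝 0))
    (f : C(UnitAddCircle, ℂ)) :
    Tendsto (fun N => avg (fun n => f (φ n) * v n) N - (∫ x, f x) * avg v N) atTop (𝓝 0) := by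
  have hcint (g : C(UnitAddCircle, ℂ)) : Integrable (g : UnitAddCircle → ℂ) :=
    g.continuous.integrable_of_hasCompactSupport (HasCompactSupport.of_compactSpace _)
  have hspan : ∀ g ∈ Submodule.span ℂ (Set.range (@fourier 1)),
      Tendsto (fun N => avg (fun n => g (φ n) * v n) N - (∫ x, g x) * avg v N) atTop (𝓝 0) := by
    intro g hg
    induction hg using Submodule.span_induction with
    | mem g hg =>
      obtain ⟨k, rfl⟩ := hg
      rcases eq_or_ne k 0 with rfl | hk
      · simp [volume_real_univ_unitAddCircle]
      · simpa only [fourier_coe_eq_eFun, integral_fourier_of_ne_zero hk, zero_mul, sub_zero]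
          using h k hk
    | zero => simp [avg]
    | add f g _ _ hf hg =>
      have := hf.add hg
      rw [add_zero] at this
      refine this.congr fun N => ?_
      simp only [ContinuousMap.add_apply, add_mul]
      rw [avg_add, integral_add (hcint f) (hcint g)]
      ring
    | smul c g _ hg =>
      have := hg.const_mul c
      rw [mul_zero] at this
      refine this.congr fun N => ?_
      simp only [ContinuousMap.smul_apply, smul_eq_mul, mul_assoc]
      rw [avg_const_mul, integral_const_mul]
      ring
  have hf : f ∈ closure (Submodule.span ℂ (Set.range (@fourier 1)) : Set C(UnitAddCircle, ℂ)) := by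
    have := span_fourier_closure_eq_top (T := 1)
    rw [← Submodule.topologicalClosure_coe, this]
    trivial
  rw [Metric.tendsto_atTop]
  intro ε hε
  obtain ⟨g, hg, hfg⟩ := Metric.mem_closure_iff.1 hf (ε / 3) (by positivity)
  obtain ⟨N₀, hN₀⟩ := Metric.tendsto_atTop.1 (hspan g hg) (ε / 3) (by positivity)
  refine ⟨N₀, fun N hN => ?_⟩
  have hd (x : UnitAddCircle) : ‖f x - g x‖ ≤ ε / 3 := by
    rw [← dist_eq_norm]
    exact (ContinuousMap.dist_apply_le_dist x).trans hfg.le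
  have h1 : ‖avg (fun n => (f (φ n) - g (φ n)) * v n) N‖ ≤ ε / 3 := by
    refine norm_avg_le_of_le (fun n => ?_) N
    rw [norm_mul]
    exact (mul_le_of_le_one_right (norm_nonneg _) (hv n)).trans (hd _)
  have h2 : ‖(∫ x, (f x - g x)) * avg v N‖ ≤ ε / 3 := by
    rw [norm_mul]
    refine (mul_le_of_le_one_right (norm_nonneg _) (norm_avg_le_of_le hv N)).trans ?_
    simpa [volume_real_univ_unitAddCircle] using norm_integral_le_of_norm_le_const (μ := (volume : Measure UnitAddCircle))
      (ae_of_all _ hd)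
  have h3 := hN₀ N hN
  rw [dist_zero_right] at h3 ⊢
  simp only [sub_mul] at h1
  rw [avg_sub] at h1
  rw [integral_sub (hcint f) (hcint g)] at h2
  calc _ = ‖(avg (fun n => f (φ n) * v n) N - avg (fun n => g (φ n) * v n) N)
        + (avg (fun n => g (φ n) * v n) N - (∫ x, g x) * avg v N)
        - ((∫ x, f x) - ∫ x, g x) * avg v N‖ := by congr 1; ring
    _ < ε := by
      refine (norm_sub_le _ _).trans_lt ?_
      have := norm_add_le (avg (fun n => f (φ n) * v n) N - avg (fun n => g (φ n) * v n) N)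
        (avg (fun n => g (φ n) * v n) N - (∫ x, g x) * avg v N)
      linarith

/-- The real part of the basic character of the circle. -/
noncomputable def circleCos (x : UnitAddCircle) : ℝ := (fourier 1 x).re

lemma continuous_circleCos : Continuous circleCos :=
  Complex.continuous_re.comp (fourier 1).continuous

lemma circleCos_coe (x : ℝ) : circleCos x = Real.cos (2 * Real.pi * x) := by
  rw [circleCos, fourier_coe_eq_eFun, eFun_eq_exp_mul_I, mul_comm, Complex.exp_ofReal_mul_I_re]
  simp

lemma volume_circleCos_eq_zero : volume {x | circleCos x = 0} = 0 := by
  have hsub : {x | circleCos x = 0}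
      ⊆ {((1 / 4 : ℝ) : UnitAddCircle), ((3 / 4 : ℝ) : UnitAddCircle)} := by
    intro x hx
    induction x using QuotientAddGroup.induction_on with
    | H x =>
    change circleCos (x : UnitAddCircle) = 0 at hx
    rw [circleCos_coe, Real.cos_eq_zero_iff] at hx
    obtain ⟨k, hk⟩ := hx
    have hx' : x = (2 * k + 1) / 4 := by
      field_simp at hk ⊢
      have := Real.pi_pos
      linarith
    rcases Int.even_or_odd' k with ⟨j, rfl | rfl⟩
    · exact Or.inl (unitAddCircle_coe_eq_coe_iff.2 ⟨j, by rw [hx']; push_cast; ring⟩)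
    · exact Or.inr (unitAddCircle_coe_eq_coe_iff.2 ⟨j, by rw [hx']; push_cast; ring⟩)
  have hs (x : UnitAddCircle) : volume {x} = 0 := by
    simpa using AddCircle.volume_closedBall 1 (x := x) 0
  exact measure_mono_null hsub (measure_union_null (hs _) (hs _))

lemma volume_circleCos_nonpos_pos : 0 < volume.real {x | circleCos x ≤ 0} := by
  have hopen : IsOpen {x | circleCos x < 0} := isOpen_lt continuous_circleCos continuous_const
  have hne : {x | circleCos x < 0}.Nonempty := by
    refine ⟨((1 / 2 : ℝ) : UnitAddCircle), ?_⟩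
    rw [Set.mem_ofPred_eq, circleCos_coe, show 2 * Real.pi * (1 / 2) = Real.pi by ring, Real.cos_pi]
    norm_num
  have hpos := (hopen.measure_pos volume hne).trans_le
    (measure_mono fun x (hx : circleCos x < 0) => (hx.le : circleCos x ≤ 0))
  exact ENNReal.toReal_pos hpos.ne' (measure_ne_top _ _)

/-- A continuous approximation of the indicator of `{x | circleCos x ≤ 0}`. -/
noncomputable def cosRamp (m : ℕ) (x : UnitAddCircle) : ℝ := max 0 (min 1 (-(m * circleCos x)))

/-- A continuous bump around the zeros of `circleCos`. -/
noncomputable def cosBump (m : ℕ) (x : UnitAddCircle) : ℝ := max 0 (1 - m * |circleCos x|)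

lemma continuous_cosRamp (m : ℕ) : Continuous (cosRamp m) :=
  continuous_const.max (continuous_const.min (continuous_const.mul continuous_circleCos).neg)

lemma continuous_cosBump (m : ℕ) : Continuous (cosBump m) :=
  continuous_const.max (continuous_const.sub (continuous_const.mul continuous_circleCos.abs))

lemma abs_indicator_sub_cosRamp_le (m : ℕ) (x : UnitAddCircle) :
    |Set.indicator {x | circleCos x ≤ 0} 1 x - cosRamp m x| ≤ cosBump m x := by
  have hm : (0 : ℝ) ≤ m := m.cast_nonneg
  rcases le_or_gt (circleCos x) 0 with h | h
  · rw [Set.indicator_of_mem (by exact h), cosRamp, cosBump, abs_of_nonpos h, Pi.one_apply]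
    have : 0 ≤ -(m * circleCos x) := by nlinarith
    rw [max_eq_right (le_min zero_le_one this), abs_of_nonneg (sub_nonneg.2 (min_le_left _ _))]
    rcases le_total 1 (-(m * circleCos x)) with h1 | h1
    · simp [min_eq_left h1]
    · rw [min_eq_right h1]
      exact le_max_of_le_right (by linarith)
  · rw [Set.indicator_of_notMem (by exact not_le.2 h), cosRamp]
    have : -(m * circleCos x) ≤ 0 := by nlinarith
    rw [max_eq_left ((min_le_right _ _).trans this)]
    simp [cosBump]

lemma cosBump_nonneg (m : ℕ) (x : UnitAddCircle) : 0 ≤ cosBump m x := le_max_left _ _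

lemma cosBump_le_one (m : ℕ) (x : UnitAddCircle) : cosBump m x ≤ 1 :=
  max_le zero_le_one (sub_le_self _ (by positivity))

lemma tendsto_integral_cosBump : Tendsto (fun m => ∫ x, cosBump m x) atTop (𝓝 0) := by
  have h : Tendsto (fun m => ∫ x, cosBump m x) atTop (𝓝 (∫ _ : UnitAddCircle, (0 : ℝ))) := by
    refine tendsto_integral_of_dominated_convergence (fun _ => 1)
      (fun m => (continuous_cosBump m).aestronglyMeasurable) (integrable_const _) ?_ ?_
    · refine fun m => ae_of_all _ fun x => ?_
      rw [Real.norm_of_nonneg (cosBump_nonneg m x)]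
      exact cosBump_le_one m x
    · have hae : ∀ᵐ x : UnitAddCircle, circleCos x ≠ 0 := by
        rw [ae_iff]
        simpa using volume_circleCos_eq_zero
      filter_upwards [hae] with x hx
      refine tendsto_const_nhds.congr' ?_
      obtain ⟨M, hM⟩ := exists_nat_gt (|circleCos x|⁻¹)
      filter_upwards [eventually_ge_atTop M] with m hm
      have hx' : 0 < |circleCos x| := abs_pos.2 hx
      have hmM : |circleCos x|⁻¹ < m := hM.trans_le (by exact_mod_cast hm)
      rw [inv_lt_iff_one_lt_mul₀ hx'] at hmM
      rw [cosBump, max_eq_left (by linarith)]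
  simpa using h

lemma tendsto_avg_indicator_mul_sub {φ : ℕ → ℝ} {v : ℕ → ℂ} (hv : ∀ n, ‖v n‖ ≤ 1)
    (h : ∀ k : ℤ, k ≠ 0 → Tendsto (avg fun n => eFun (k * φ n) * v n) atTop (𝓝 0))
    (h1 : ∀ k : ℤ, k ≠ 0 → Tendsto (avg fun n => eFun (k * φ n)) atTop (𝓝 0)) :
    Tendsto (fun N =>
      avg (fun n => (Set.indicator {x | circleCos x ≤ 0} 1 (φ n : UnitAddCircle) : ℝ) * v n) N - (volume.real {x | circleCos x ≤ 0} : ℂ) * avg v N) atTop (𝓝 0) := by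
  set E : Set UnitAddCircle := {x | circleCos x ≤ 0}
  have hE : MeasurableSet E := measurableSet_le continuous_circleCos.measurable measurable_const
  have hcint {g : UnitAddCircle → ℝ} (hg : Continuous g) : Integrable g :=
    hg.integrable_of_hasCompactSupport (HasCompactSupport.of_compactSpace _)
  rw [Metric.tendsto_atTop]
  intro ε hε
  obtain ⟨m, hm⟩ := ((tendsto_order.1 tendsto_integral_cosBump).2 (ε / 5) (by positivity)).exists
  have hf := tendsto_avg_continuous_mul_sub hv h
    ⟨fun x => (cosRamp m x : ℂ), Complex.continuous_ofReal.comp (continuous_cosRamp m)⟩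
  have hg := tendsto_avg_continuous_mul_sub (v := 1) (by simp) (by simpa using h1)
    ⟨fun x => (cosBump m x : ℂ), Complex.continuous_ofReal.comp (continuous_cosBump m)⟩
  obtain ⟨N₁, hN₁⟩ := Metric.tendsto_atTop.1 hf (ε / 5) (by positivity)
  obtain ⟨N₂, hN₂⟩ := Metric.tendsto_atTop.1 hg (ε / 5) (by positivity)
  refine ⟨max N₁ N₂, fun N hN => ?_⟩
  have h₁ := hN₁ N (le_of_max_le_left hN)
  have h₂ := hN₂ N (le_of_max_le_right hN)
  rw [dist_zero_right] at h₁ h₂ ⊢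
  simp only [ContinuousMap.coe_mk, integral_complex_ofReal, Pi.one_apply, mul_one] at h₁ h₂
  have hI0 : 0 ≤ ∫ x, cosBump m x := integral_nonneg (cosBump_nonneg m)
  have hbump : ‖avg (fun n => (cosBump m (φ n) : ℂ)) N‖ ≤ 2 * ε / 5 := by
    have h₃ : ‖((∫ x, cosBump m x : ℝ) : ℂ) * avg 1 N‖ ≤ ∫ x, cosBump m x := by
      rw [norm_mul, Complex.norm_real, Real.norm_of_nonneg hI0]
      exact mul_le_of_le_one_right hI0 (norm_avg_le_of_le (by simp) N)
    have := norm_le_norm_add_norm_sub' (avg (fun n => (cosBump m (φ n) : ℂ)) N)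
      (((∫ x, cosBump m x : ℝ) : ℂ) * avg 1 N)
    linarith
  have hdiff : ‖avg (fun n => ((E.indicator 1 (φ n : UnitAddCircle) : ℝ) : ℂ) * v n
      - (cosRamp m (φ n) : ℂ) * v n) N‖ ≤ ‖avg (fun n => (cosBump m (φ n) : ℂ)) N‖ := by
    simp only [avg, norm_mul]
    gcongr
    have : ‖∑ n ∈ range N, (cosBump m (φ n) : ℂ)‖ = ∑ n ∈ range N, cosBump m (φ n) := by
      rw [← Complex.ofReal_sum, Complex.norm_real,
        Real.norm_of_nonneg (sum_nonneg fun n _ => cosBump_nonneg _ _)]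
    rw [this]
    refine (norm_sum_le _ _).trans (sum_le_sum fun n _ => ?_)
    rw [← sub_mul, norm_mul, ← Complex.ofReal_sub, Complex.norm_real]
    exact (mul_le_of_le_one_right (norm_nonneg _) (hv n)).trans
      (abs_indicator_sub_cosRamp_le m _)
  have hmean : ‖((volume.real E : ℝ) - (∫ x, cosRamp m x : ℝ) : ℂ) * avg v N‖ ≤ ε / 5 := by
    rw [norm_mul, ← Complex.ofReal_sub, Complex.norm_real]
    refine (mul_le_of_le_one_right (norm_nonneg _) (norm_avg_le_of_le hv N)).trans ?_
    have hE' : volume.real E = ∫ x, E.indicator (1 : UnitAddCircle → ℝ) x := by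
      rw [integral_indicator_one hE]
    have hEint : Integrable (E.indicator (1 : UnitAddCircle → ℝ)) :=
      (integrable_const 1).indicator hE
    rw [hE', ← integral_sub hEint (hcint (continuous_cosRamp m))]
    refine (norm_integral_le_integral_norm _).trans (le_trans ?_ hm.le)
    exact integral_mono (hEint.sub (hcint (continuous_cosRamp m))).norm
      (hcint (continuous_cosBump m)) (abs_indicator_sub_cosRamp_le m)
  rw [avg_sub] at hdiff
  set a := avg (fun n => ((E.indicator 1 (φ n : UnitAddCircle) : ℝ) : ℂ) * v n) N
  set b := avg (fun n => (cosRamp m (φ n) : ℂ) * v n) N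
  calc ‖a - (volume.real E : ℂ) * avg v N‖
      = ‖(a - b) + (b - ((∫ x, cosRamp m x : ℝ) : ℂ) * avg v N)
        - ((volume.real E : ℝ) - (∫ x, cosRamp m x : ℝ) : ℂ) * avg v N‖ := by congr 1; ring
    _ < ε := by
      refine (norm_sub_le _ _).trans_lt ?_
      have := norm_add_le (a - b) (b - ((∫ x, cosRamp m x : ℝ) : ℂ) * avg v N)
      linarith

/-! ### Averages along the enumeration of a set of positive density -/

lemma sum_range_ite_eq_sum_range_count (p : ℕ → Prop) [DecidablePred p] (v : ℕ → ℂ) (M : ℕ) :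
    ∑ m ∈ range M, (if p m then v m else 0)
      = ∑ n ∈ range (Nat.count p M), v (Nat.nth p n) := by
  induction M with
  | zero => simp
  | succ M ih =>
    rw [sum_range_succ, ih, Nat.count_succ]
    split_ifs with h
    · rw [sum_range_succ, Nat.nth_count h]
    · simp

lemma infinite_of_tendsto_avg {p : ℕ → Prop} [DecidablePred p] {c : ℂ} (hc : c ≠ 0)
    (h : Tendsto (avg fun n => if p n then 1 else 0) atTop (𝓝 c)) : {n | p n}.Infinite := by
  intro hfin
  refine hc (tendsto_nhds_unique h ?_)
  refine squeeze_zero_norm (fun N => ?_)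
    (tendsto_const_div_atTop_nhds_zero_nat (#hfin.toFinset : ℝ))
  rw [avg, sum_boole, norm_mul, norm_inv, Complex.norm_natCast, Complex.norm_natCast,
    div_eq_inv_mul]
  gcongr
  intro n hn
  exact hfin.mem_toFinset.2 (mem_filter.1 hn).2

lemma tendsto_avg_comp_nth {p : ℕ → Prop} [DecidablePred p] {c L : ℂ} {v : ℕ → ℂ} (hc : c ≠ 0)
    (h : Tendsto (avg fun n => if p n then 1 else 0) atTop (𝓝 c))
    (hv : Tendsto (avg fun n => if p n then v n else 0) atTop (𝓝 L)) :
    Tendsto (avg fun n => v (Nat.nth p n)) atTop (𝓝 (L / c)) := by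
  have hinf := infinite_of_tendsto_avg hc h
  have hmono := Nat.nth_strictMono hinf
  refine ((hv.div h hc).comp hmono.tendsto_atTop).congr fun N => ?_
  have h1 := sum_range_ite_eq_sum_range_count p 1 (Nat.nth p N)
  have h2 := sum_range_ite_eq_sum_range_count p v (Nat.nth p N)
  rw [Nat.count_nth_of_infinite hinf] at h1 h2
  simp only [Pi.one_apply, sum_const, card_range, nsmul_one] at h1
  simp only [Function.comp_apply, Pi.div_apply, avg, h1, h2]
  rcases Nat.eq_zero_or_pos N with rfl | hN
  · simp
  have hM : (Nat.nth p N : ℂ) ≠ 0 := by exact_mod_cast (hN.trans_le (hmono.le_apply)).ne'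
  have hN' : (N : ℂ) ≠ 0 := by exact_mod_cast hN.ne'
  field_simp

lemma ite_dvd_eq_sum_eFun {d : ℕ} (hd : 0 < d) (n : ℕ) :
    (if d ∣ n then 1 else 0 : ℂ) = (d : ℂ)⁻¹ * ∑ a ∈ range d, eFun ((a / d : ℝ) * n) := by
  have hd' : (d : ℝ) ≠ 0 := by exact_mod_cast hd.ne'
  have hdc : (d : ℂ) ≠ 0 := by exact_mod_cast hd.ne'
  have hpow (a : ℕ) : eFun ((a / d : ℝ) * n) = eFun (n / d) ^ a := by
    rw [eFun, eFun, ← Complex.exp_nat_mul]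
    congr 1
    push_cast
    ring
  simp only [hpow]
  split_ifs with h
  · obtain ⟨k, rfl⟩ := h
    have : eFun (((d * k : ℕ) : ℝ) / d) = 1 := by
      have := eFun_int k
      rw [← this]
      congr 1
      push_cast
      field_simp
    simp only [this, one_pow, sum_const, card_range, nsmul_one, inv_mul_cancel₀ hdc]
  · have hne : eFun (n / d) ≠ 1 := by
      rw [eFun, Ne, Complex.exp_eq_one_iff]
      rintro ⟨k, hk⟩
      have hk' : (n : ℂ) / d = k := by
        have h0 : (2 * Real.pi * Complex.I : ℂ) ≠ 0 := Complex.two_pi_I_ne_zero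
        refine mul_left_cancel₀ h0 ?_
        push_cast at hk
        rw [hk]
        ring
      rw [div_eq_iff hdc] at hk'
      have hk'' : (n : ℤ) = k * d := by exact_mod_cast hk'
      exact h (Int.natCast_dvd_natCast.1 ⟨k, by rw [hk'', mul_comm]⟩)
    rw [geom_sum_eq hne, ← hpow d, div_self hd', one_mul]
    have := eFun_int n
    simp only [Int.cast_natCast] at this
    simp [this]

lemma tendsto_avg_ite_dvd {d : ℕ} (hd : 0 < d) :
    Tendsto (avg fun n => if d ∣ n then 1 else 0) atTop (𝓝 (d : ℂ)⁻¹) := by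
  have hd' : (0 : ℝ) < d := by exact_mod_cast hd
  have hcount (N : ℕ) : |(Nat.count (d ∣ ·) N : ℝ) - N / d| ≤ 1 := by
    have h := Nat.count_modEq_card_eq_ceil N hd 0
    simp only [Nat.zero_mod, Nat.cast_zero, sub_zero, Nat.modEq_zero_iff_dvd] at h
    have h1 := Int.le_ceil ((N : ℚ) / d)
    have h2 := (Int.ceil_lt_add_one ((N : ℚ) / d)).le
    rw [← h] at h1 h2
    have h1' : (N : ℝ) / d ≤ Nat.count (d ∣ ·) N := by
      have := (Rat.cast_le (K := ℝ)).2 h1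
      push_cast at this
      exact this
    have h2' : (Nat.count (d ∣ ·) N : ℝ) ≤ N / d + 1 := by
      have := (Rat.cast_le (K := ℝ)).2 h2
      push_cast at this
      exact this
    rw [abs_le]
    constructor <;> linarith
  rw [tendsto_iff_norm_sub_tendsto_zero]
  refine squeeze_zero' (Eventually.of_forall fun N => norm_nonneg _) ?_
    (tendsto_const_div_atTop_nhds_zero_nat (1 : ℝ))
  filter_upwards [eventually_gt_atTop 0] with N hN
  have hN' : (0 : ℝ) < N := by exact_mod_cast hN
  have h : avg (fun n => if d ∣ n then 1 else 0) N - (d : ℂ)⁻¹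
      = (((Nat.count (d ∣ ·) N : ℝ) - N / d) / N : ℝ) := by
    rw [avg, sum_boole, Nat.count_eq_card_filter_range]
    have : (N : ℂ) ≠ 0 := by exact_mod_cast hN.ne'
    push_cast
    field_simp
  rw [h, Complex.norm_real, norm_div, Real.norm_eq_abs, Real.norm_of_nonneg hN'.le]
  gcongr
  exact hcount N

/-! ### The set of return times -/

/-- The positions where twice the bracket polynomial lies in the left half of the circle. -/
def IsReturn (α β : ℝ) (n : ℕ) : Prop := circleCos (2 * bracket α β n : ℝ) ≤ 0

lemma IsReturn.pos {α β : ℝ} {n : ℕ} (h : IsReturn α β n) : 0 < n := by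
  rcases Nat.eq_zero_or_pos n with rfl | hn
  · rw [IsReturn, circleCos_coe] at h
    norm_num [bracket] at h
  · exact hn

open Classical in
lemma tendsto_avg_isReturn_sub {α β : ℝ} (hα : |α| ≤ 1) (hβ : |β| ≤ 1) (hsc : HasScalePairs α β)
    (γ δ : ℝ) :
    Tendsto (fun N => avg (fun n => if IsReturn α β n then eFun (γ * n ^ 2 + δ * n) else 0) N
      - (volume.real {x | circleCos x ≤ 0} : ℂ) * avg (fun n => eFun (γ * n ^ 2 + δ * n)) N)
      atTop (𝓝 0) := by
  have hphase (γ δ : ℝ) (k : ℤ) (hk : k ≠ 0) :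
      Tendsto (avg fun n => eFun (k * (2 * bracket α β n)) * eFun (γ * n ^ 2 + δ * n))
        atTop (𝓝 0) := by
    refine (tendsto_avg_phase hα hβ hsc (mul_ne_zero hk two_ne_zero) γ δ).congr fun N => ?_
    congr 1
    funext n
    rw [← eFun_add, phase]
    push_cast
    congr 1
    ring
  refine (tendsto_avg_indicator_mul_sub (φ := fun n => 2 * bracket α β n)
    (fun n => (norm_eFun (γ * n ^ 2 + δ * n)).le) (hphase γ δ) fun k hk => ?_).congr fun N => ?_
  · simpa [eFun_zero] using hphase 0 0 k hk
  · congr 2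
    funext n
    by_cases h : IsReturn α β n
    · rw [if_pos h, Set.indicator_of_mem (by exact h)]
      simp
    · rw [if_neg h, Set.indicator_of_notMem (by exact h)]
      simp

open Classical in
lemma tendsto_avg_isReturn {α β : ℝ} (hα : |α| ≤ 1) (hβ : |β| ≤ 1) (hsc : HasScalePairs α β)
    {γ δ : ℝ} {L : ℂ} (h : Tendsto (avg fun n => eFun (γ * n ^ 2 + δ * n)) atTop (𝓝 L)) :
    Tendsto (avg fun n => if IsReturn α β n then eFun (γ * n ^ 2 + δ * n) else 0) atTop
      (𝓝 ((volume.real {x | circleCos x ≤ 0} : ℂ) * L)) := by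
  have := (tendsto_avg_isReturn_sub hα hβ hsc γ δ).add
    (h.const_mul (volume.real {x | circleCos x ≤ 0} : ℂ))
  simpa using this

open Classical in
lemma tendsto_avg_isReturn_one {α β : ℝ} (hα : |α| ≤ 1) (hβ : |β| ≤ 1)
    (hsc : HasScalePairs α β) :
    Tendsto (avg fun n => if IsReturn α β n then 1 else 0) atTop
      (𝓝 (volume.real {x | circleCos x ≤ 0} : ℂ)) := by
  have h1 : Tendsto (avg fun _ => 1) atTop (𝓝 1) := by
    refine tendsto_const_nhds.congr' ?_
    filter_upwards [eventually_ne_atTop 0] with N hN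
    simp [avg, hN]
  simpa [eFun_zero] using tendsto_avg_isReturn hα hβ hsc (γ := 0) (δ := 0) (L := 1)
    (by simpa [eFun_zero])

open Classical in
lemma tendsto_avg_isReturn_dvd {α β : ℝ} (hα : |α| ≤ 1) (hβ : |β| ≤ 1)
    (hsc : HasScalePairs α β) {d : ℕ} (hd : 0 < d) :
    Tendsto (avg fun n => if IsReturn α β n then (if d ∣ n then 1 else 0) else 0) atTop
      (𝓝 ((volume.real {x | circleCos x ≤ 0} : ℂ) * (d : ℂ)⁻¹)) := by
  set c : ℂ := (volume.real {x | circleCos x ≤ 0} : ℂ)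
  have hsum := (tendsto_finsetSum (range d) fun a _ =>
    tendsto_avg_isReturn_sub hα hβ hsc 0 (a / d)).const_mul (d : ℂ)⁻¹
  simp only [sum_const_zero, mul_zero, zero_mul, zero_add] at hsum
  have := hsum.add ((tendsto_avg_ite_dvd hd).const_mul c)
  rw [zero_add] at this
  refine this.congr fun N => ?_
  have e1 (n : ℕ) : (if IsReturn α β n then (if d ∣ n then 1 else 0) else 0 : ℂ)
      = (d : ℂ)⁻¹ * ∑ a ∈ range d, if IsReturn α β n then eFun ((a / d : ℝ) * n) else 0 := by
    rw [ite_dvd_eq_sum_eFun hd]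
    split_ifs <;> simp
  simp only [e1]
  simp only [ite_dvd_eq_sum_eFun hd]
  rw [avg_const_mul, avg_const_mul, avg_finset_sum, avg_finset_sum, sum_sub_distrib, ← mul_sum]
  ring

lemma card_filter_dvd_div_eq_avg (r : ℕ → ℕ) (d N : ℕ) :
    ((((range N).filter fun n => d ∣ r n).card : ℝ) / N : ℝ)
      = (avg (fun n => if d ∣ r n then 1 else 0) N).re := by
  have : avg (fun n => if d ∣ r n then 1 else 0) N
      = ((((range N).filter fun n => d ∣ r n).card : ℝ) / N : ℝ) := by
    rw [avg, sum_boole]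
    push_cast
    ring
  rw [this, Complex.ofReal_re]

/-! ### A skew product over a rotation of the torus -/

/-- The representative in `[0, 1)` of a point of the circle. -/
noncomputable def circleRep (x : UnitAddCircle) : ℝ := AddCircle.measurableEquivIco 1 0 x

lemma measurable_circleRep : Measurable circleRep :=
  measurable_subtype_coe.comp (AddCircle.measurableEquivIco 1 0).measurable

lemma circleRep_mem (x : UnitAddCircle) : circleRep x ∈ Set.Ico (0 : ℝ) 1 := by
  simpa [circleRep] using (AddCircle.measurableEquivIco 1 0 x).2

lemma coe_circleRep (x : UnitAddCircle) : (circleRep x : UnitAddCircle) = x :=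
  (AddCircle.measurableEquivIco 1 0).symm_apply_apply x

lemma circleRep_coe (x : ℝ) : circleRep x = Int.fract x := by
  have h := circleRep_mem x
  obtain ⟨k, hk⟩ := unitAddCircle_coe_eq_coe_iff.1 (coe_circleRep (x : UnitAddCircle))
  rw [← Int.fract_eq_self.2 h, hk, Int.fract_add_intCast]

/-- The cocycle of the skew product. -/
noncomputable def heisCocycle (α β : ℝ) (p : UnitAddCircle × UnitAddCircle) : ℝ :=
  (circleRep p.1 + α) * ⌊circleRep p.2 + β⌋ - (circleRep p.2 + β) * ⌊circleRep p.1 + α⌋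
    - (circleRep p.1 + α) * circleRep p.2 + (circleRep p.2 + β) * circleRep p.1

lemma measurable_heisCocycle (α β : ℝ) : Measurable (heisCocycle α β) := by
  have h1 : Measurable fun p : UnitAddCircle × UnitAddCircle => circleRep p.1 :=
    measurable_circleRep.comp measurable_fst
  have h2 : Measurable fun p : UnitAddCircle × UnitAddCircle => circleRep p.2 :=
    measurable_circleRep.comp measurable_snd
  have hf {g : UnitAddCircle × UnitAddCircle → ℝ} (hg : Measurable g) :
      Measurable fun p => (⌊g p⌋ : ℝ) := (Measurable.of_discrete (f := Int.cast)).comp hg.floor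
  have h3 := hf (h1.add_const α)
  have h4 := hf (h2.add_const β)
  unfold heisCocycle
  fun_prop

lemma measurable_coe_heisCocycle (α β : ℝ) :
    Measurable fun p => (heisCocycle α β p : UnitAddCircle) :=
  AddCircle.measurable_mk'.comp (measurable_heisCocycle α β)

/-- The rotation vector of the base of the skew product. -/
noncomputable def torusStep (α β : ℝ) : UnitAddCircle × UnitAddCircle := (↑α, ↑β)

/-- The skew product `((x, y), z) ↦ ((x + α, y + β), z + heisCocycle (x, y))`, a model of a
rotation on a Heisenberg nilmanifold. -/
noncomputable def heisMap (α β : ℝ) :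
    (UnitAddCircle × UnitAddCircle) × UnitAddCircle ≃ᵐ
      (UnitAddCircle × UnitAddCircle) × UnitAddCircle where
  toFun p := (p.1 + torusStep α β, heisCocycle α β p.1 + p.2)
  invFun p := (p.1 - torusStep α β, -heisCocycle α β (p.1 - torusStep α β) + p.2)
  left_inv p := by simp
  right_inv p := by simp
  measurable_toFun := (measurable_fst.add_const _).prodMk
    (((measurable_coe_heisCocycle α β).comp measurable_fst).add measurable_snd)
  measurable_invFun := (measurable_fst.sub_const _).prodMk
    (((measurable_coe_heisCocycle α β).comp (measurable_fst.sub_const _)).neg.add measurable_snd)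

lemma heisMap_apply (α β : ℝ) (p : (UnitAddCircle × UnitAddCircle) × UnitAddCircle) :
    heisMap α β p = (p.1 + torusStep α β, heisCocycle α β p.1 + p.2) := rfl

lemma measurePreserving_heisMap (α β : ℝ) :
    MeasurePreserving (heisMap α β) (volume.prod volume) (volume.prod volume) := by
  have hbase : MeasurePreserving (fun p : UnitAddCircle × UnitAddCircle => p + torusStep α β)
      (volume.prod volume) (volume.prod volume) :=
    (measurePreserving_add_right volume (α : UnitAddCircle)).prod
      (measurePreserving_add_right volume (β : UnitAddCircle))
  exact hbase.skew_product
    (g := fun p z => (heisCocycle α β p : UnitAddCircle) + z)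
    (((measurable_coe_heisCocycle α β).comp measurable_fst).add measurable_snd)
    (ae_of_all _ fun p => (measurePreserving_add_left volume _).map_eq)

/-- The displacement of the fibre coordinate after `n` steps of the skew product. -/
noncomputable def heisSum (α β x y : ℝ) (n : ℕ) : ℝ :=
  (x + n * α) * ⌊y + n * β⌋ - (y + n * β) * ⌊x + n * α⌋ - (x + n * α) * y + (y + n * β) * x

lemma heisMap_pow_apply (α β : ℝ) {x y : ℝ} (hx : x ∈ Set.Ico (0 : ℝ) 1)
    (hy : y ∈ Set.Ico (0 : ℝ) 1) (z : UnitAddCircle) (n : ℕ) :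
    ((heisMap α β).toEquiv ^ n) ((↑x, ↑y), z)
      = ((((x + n * α : ℝ) : UnitAddCircle), ((y + n * β : ℝ) : UnitAddCircle)),
        (heisSum α β x y n : UnitAddCircle) + z) := by
  induction n with
  | zero =>
    have h1 : ⌊x⌋ = 0 := Int.floor_eq_zero_iff.2 hx
    have h2 : ⌊y⌋ = 0 := Int.floor_eq_zero_iff.2 hy
    have h3 : heisSum α β x y 0 = 0 := by
      simp only [heisSum, Nat.cast_zero, zero_mul, add_zero, h1, h2, Int.cast_zero]
      ring
    simp [h3]
  | succ n ih =>
    rw [pow_succ', Equiv.Perm.mul_apply, ih]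
    change heisMap α β _ = _
    rw [heisMap_apply]
    refine Prod.ext (Prod.ext ?_ ?_) ?_
    · change ((x + n * α : ℝ) : UnitAddCircle) + (α : UnitAddCircle) = _
      rw [← AddCircle.coe_add]
      push_cast
      ring_nf
    · change ((y + n * β : ℝ) : UnitAddCircle) + (β : UnitAddCircle) = _
      rw [← AddCircle.coe_add]
      push_cast
      ring_nf
    · change (heisCocycle α β ((x + n * α : ℝ), (y + n * β : ℝ)) : UnitAddCircle)
        + ((heisSum α β x y n : UnitAddCircle) + z) = (heisSum α β x y (n + 1) : UnitAddCircle) + z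
      rw [← add_assoc, ← AddCircle.coe_add]
      congr 1
      rw [unitAddCircle_coe_eq_coe_iff]
      refine ⟨⌊y + n * β⌋ * ⌊x + (n + 1 : ℕ) * α⌋ - ⌊x + n * α⌋ * ⌊y + (n + 1 : ℕ) * β⌋, ?_⟩
      have h1 : ⌊Int.fract (x + n * α) + α⌋ = ⌊x + (n + 1 : ℕ) * α⌋ - ⌊x + n * α⌋ := by
        rw [← Int.floor_sub_intCast, Int.fract]
        push_cast
        ring_nf
      have h2 : ⌊Int.fract (y + n * β) + β⌋ = ⌊y + (n + 1 : ℕ) * β⌋ - ⌊y + n * β⌋ := by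
        rw [← Int.floor_sub_intCast, Int.fract]
        push_cast
        ring_nf
      simp only [heisCocycle, circleRep_coe, h1, h2, heisSum]
      simp only [Int.fract]
      push_cast
      ring

/-- The target set of the non-recurrence argument. -/
def heisBox : Set ((UnitAddCircle × UnitAddCircle) × UnitAddCircle) :=
  ((circleRep ⁻¹' Set.Iio (1 / 2)) ×ˢ (circleRep ⁻¹' Set.Iio (1 / 2))) ×ˢ
    (circleRep ⁻¹' Set.Iio (1 / 16))

lemma measurableSet_heisBox : MeasurableSet heisBox :=
  ((measurable_circleRep measurableSet_Iio).prod (measurable_circleRep measurableSet_Iio)).prod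
    (measurable_circleRep measurableSet_Iio)

lemma volume_circleRep_lt_pos {t : ℝ} (ht : 0 < t) :
    0 < volume (circleRep ⁻¹' Set.Iio t) := by
  have hopen : IsOpen (((↑) : ℝ → UnitAddCircle) '' Set.Ioo 0 (min t 1)) :=
    QuotientAddGroup.isOpenMap_coe _ isOpen_Ioo
  have hne : (((↑) : ℝ → UnitAddCircle) '' Set.Ioo 0 (min t 1)).Nonempty :=
    (Set.nonempty_Ioo.2 (lt_min ht one_pos)).image _
  refine (hopen.measure_pos volume hne).trans_le (measure_mono ?_)
  rintro _ ⟨x, ⟨h0, h1⟩, rfl⟩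
  rw [lt_min_iff] at h1
  change circleRep x < t
  rw [circleRep_coe, Int.fract_eq_self.2 ⟨h0.le, h1.2⟩]
  exact h1.1

lemma volume_heisBox_pos : 0 < ((volume.prod volume).prod volume) heisBox := by
  rw [heisBox, Measure.prod_prod, Measure.prod_prod]
  have h1 := volume_circleRep_lt_pos (t := 1 / 2) (by norm_num)
  have h2 := volume_circleRep_lt_pos (t := 1 / 16) (by norm_num)
  exact ENNReal.mul_pos (ENNReal.mul_pos h1.ne' h1.ne').ne' h2.ne'

lemma floor_eq_round_of_fract_lt {x s : ℝ} (hx : x ∈ Set.Ico (0 : ℝ) (1 / 2))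
    (h1 : Int.fract (x + s) < 1 / 2) (h2 : Int.fract (x + 2 * s) < 1 / 2) :
    ⌊x + s⌋ = round s ∧ ⌊x + 2 * s⌋ = 2 * round s := by
  have hround {k : ℤ} (h : |s - k| < 1 / 2) : k = round s := by
    rw [abs_lt] at h
    rw [round_eq, eq_comm, Int.floor_eq_iff]
    constructor <;> linarith
  have e1 := Int.floor_add_fract (x + s)
  have e2 := Int.floor_add_fract (x + 2 * s)
  have n1 := Int.fract_nonneg (x + s)
  have n2 := Int.fract_nonneg (x + 2 * s)
  have r1 : ⌊x + s⌋ = round s := hround (by rw [abs_lt]; constructor <;> linarith [hx.1, hx.2])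
  have r2 : ⌊x + 2 * s⌋ - ⌊x + s⌋ = round s := hround (by
    push_cast
    rw [abs_lt]
    constructor <;> linarith)
  exact ⟨r1, by linarith⟩

lemma heisSum_two_mul_sub {α β x y : ℝ} {n : ℕ}
    (hx1 : ⌊x + n * α⌋ = round (n * α)) (hx2 : ⌊x + 2 * (n * α)⌋ = 2 * round (n * α))
    (hy1 : ⌊y + n * β⌋ = round (n * β)) (hy2 : ⌊y + 2 * (n * β)⌋ = 2 * round (n * β)) :
    heisSum α β x y (2 * n) - 2 * heisSum α β x y n = 2 * bracket α β n := by
  simp only [heisSum, bracket, Nat.cast_mul, Nat.cast_ofNat, mul_assoc, hx1, hx2, hy1, hy2]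
  push_cast
  ring

lemma not_isReturn_of_mem_heisBox {α β : ℝ} {n : ℕ}
    {p : (UnitAddCircle × UnitAddCircle) × UnitAddCircle} (h0 : p ∈ heisBox)
    (h1 : ((heisMap α β).toEquiv ^ n) p ∈ heisBox)
    (h2 : ((heisMap α β).toEquiv ^ (2 * n)) p ∈ heisBox) : ¬ IsReturn α β n := by
  obtain ⟨⟨x', y'⟩, z⟩ := p
  obtain ⟨⟨hx, hy⟩, hz⟩ := h0
  have hxm := circleRep_mem x'
  have hym := circleRep_mem y'
  rw [← coe_circleRep x', ← coe_circleRep y', heisMap_pow_apply α β hxm hym] at h1 h2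
  set x := circleRep x'
  set y := circleRep y'
  obtain ⟨⟨hx1, hy1⟩, hz1⟩ := h1
  obtain ⟨⟨hx2, hy2⟩, hz2⟩ := h2
  simp only [Set.mem_preimage, Set.mem_Iio, circleRep_coe, Nat.cast_mul, Nat.cast_ofNat,
    mul_assoc] at hx hy hz hx1 hy1 hz1 hx2 hy2 hz2
  obtain ⟨fx1, fx2⟩ := floor_eq_round_of_fract_lt ⟨hxm.1, hx⟩ hx1 hx2
  obtain ⟨fy1, fy2⟩ := floor_eq_round_of_fract_lt ⟨hym.1, hy⟩ hy1 hy2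
  have hsum := heisSum_two_mul_sub fx1 fx2 fy1 fy2
  set z₁ : UnitAddCircle := (heisSum α β x y n : UnitAddCircle) + z
  set z₂ : UnitAddCircle := (heisSum α β x y (2 * n) : UnitAddCircle) + z
  have hcoe : ((2 * bracket α β n : ℝ) : UnitAddCircle)
      = ((circleRep z₂ - (circleRep z₁ + circleRep z₁) + circleRep z : ℝ) : UnitAddCircle) := by
    rw [← hsum, two_mul (heisSum α β x y n)]
    simp only [AddCircle.coe_add, AddCircle.coe_sub, coe_circleRep, z₁, z₂]
    abel
  rw [IsReturn, hcoe, circleCos_coe, not_le]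
  have m0 := (circleRep_mem z).1
  have m1 := (circleRep_mem z₁).1
  have m2 := (circleRep_mem z₂).1
  have hpi := Real.pi_pos
  apply Real.cos_pos_of_mem_Ioo
  constructor <;> nlinarith

/-! ### The main theorem -/

theorem statement11 :
    ∃ r : ℕ → ℕ, StrictMono r ∧ (∀ n, 0 < r n) ∧
      (∀ γ δ : ℝ, (Irrational γ ∨ Irrational δ) → ∀ m : ℤ, m ≠ 0 →
        Tendsto (fun N : ℕ => (N : ℂ)⁻¹ *
            ∑ n ∈ Finset.range N, eFun ((m : ℝ) * ((r n : ℝ) ^ 2 * γ + (r n : ℝ) * δ)))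
          atTop (nhds 0)) ∧
      (∀ d : ℕ, 0 < d → ∃ c : ℝ, 0 < c ∧
        Tendsto (fun N : ℕ =>
            (((Finset.range N).filter fun n => d ∣ r n).card : ℝ) / N)
          atTop (nhds c)) ∧
      (∃ (X : Type) (_ : MeasurableSpace X) (μ : Measure X) (T : X ≃ᵐ X) (A : Set X),
        IsProbabilityMeasure μ ∧ MeasurePreserving (⇑T) μ μ ∧
        MeasurableSet A ∧ 0 < μ A ∧
        ∀ ρ : ℤ, ρ ∈ Set.range (fun n => (r n : ℤ)) → ρ ≠ 0 →
          μ (⋂ i ∈ Finset.range 3, (⇑(T.toEquiv ^ ((i : ℤ) * ρ))) ⁻¹' A) = 0) := by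
  classical
  set α := lacunaryTail 1 0
  set β := lacunaryTail 0 0
  have hα : |α| ≤ 1 := abs_lacunaryTail_le_one 1
  have hβ : |β| ≤ 1 := abs_lacunaryTail_le_one 0
  have hsc : HasScalePairs α β := hasScalePairs_lacunary
  have hc : (volume.real {x | circleCos x ≤ 0} : ℂ) ≠ 0 :=
    Complex.ofReal_ne_zero.2 volume_circleCos_nonpos_pos.ne'
  have hone := tendsto_avg_isReturn_one hα hβ hsc
  have hinf := infinite_of_tendsto_avg hc hone
  have hmem (n : ℕ) : IsReturn α β (Nat.nth (IsReturn α β) n) := Nat.nth_mem_of_infinite hinf n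
  refine ⟨Nat.nth (IsReturn α β), Nat.nth_strictMono hinf, fun n => (hmem n).pos, ?_, ?_,
    (UnitAddCircle × UnitAddCircle) × UnitAddCircle, inferInstance,
    (volume.prod volume).prod volume, heisMap α β, heisBox, ?_, measurePreserving_heisMap α β,
    measurableSet_heisBox, volume_heisBox_pos, ?_⟩
  · intro γ δ h m hm
    have hirr : Irrational (m * γ) ∨ Irrational (m * δ) :=
      h.imp (fun h => h.intCast_mul hm) fun h => h.intCast_mul hm
    have := tendsto_avg_comp_nth hc hone
      (tendsto_avg_isReturn hα hβ hsc (tendsto_avg_quadratic hirr))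
    rw [mul_zero, zero_div] at this
    refine this.congr fun N => ?_
    rw [avg]
    congr 2
    funext n
    congr 1
    ring
  · intro d hd
    have := tendsto_avg_comp_nth hc hone (tendsto_avg_isReturn_dvd hα hβ hsc hd)
    rw [mul_div_cancel_left₀ _ hc] at this
    refine ⟨(d : ℝ)⁻¹, by positivity, ?_⟩
    simp only [card_filter_dvd_div_eq_avg]
    have hre := (Complex.continuous_re.tendsto _).comp this
    rwa [← Complex.ofReal_natCast, ← Complex.ofReal_inv, Complex.ofReal_re] at hre
  · have : IsProbabilityMeasure (volume : Measure UnitAddCircle) := ⟨UnitAddCircle.measure_univ⟩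
    infer_instance
  · rintro _ ⟨n, rfl⟩ -
    refine measure_mono_null (t := ∅) (fun p hp => ?_) measure_empty
    have h (i : ℕ) (hi : i < 3) :
        ((heisMap α β).toEquiv ^ (i * Nat.nth (IsReturn α β) n)) p ∈ heisBox := by
      have := Set.mem_iInter₂.1 hp i (Finset.mem_range.2 hi)
      rwa [Set.mem_preimage, ← Nat.cast_mul, zpow_natCast] at this
    have h0 := h 0 (by norm_num)
    have h1 := h 1 (by norm_num)
    rw [zero_mul, pow_zero] at h0
    rw [one_mul] at h1
    exact not_isReturn_of_mem_heisBox h0 h1 (h 2 (by norm_num)) (hmem n)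
end

section
/- Suppose the real numbers 1, α, β are rationally independent and R is a set of 2-recurrence. Then for every ε > 0 there exists a nonzero r ∈ R such that the fractional part {⌊r·α⌋·r·β} lies in [0,ε] ∪ [1−ε,1). -/
open Filter MeasureTheory

/-- A set `R` of integers is a set of `ℓ`-recurrence if for every invertible measure
preserving system `(X, ℬ, μ, T)` and every measurable set `A` with `μ(A) > 0` there is a
nonzero `r ∈ R` with `μ(A ∩ T^{-r}A ∩ T^{-2r}A ∩ … ∩ T^{-ℓr}A) > 0`. -/
def IsSetOfMultRecurrence (ℓ : ℕ) (R : Set ℤ) : Prop :=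
  ∀ (X : Type) (_ : MeasurableSpace X) (μ : Measure X),
    IsProbabilityMeasure μ →
    ∀ T : X ≃ᵐ X, MeasurePreserving (⇑T) μ μ →
    ∀ A : Set X, MeasurableSet A → 0 < μ A →
      ∃ r ∈ R, r ≠ 0 ∧
        0 < μ (⋂ i ∈ Finset.range (ℓ + 1), (⇑(T.toEquiv ^ ((i : ℤ) * r))) ⁻¹' A)

/-- The representative in `[-1/2, 1/2)` of a point of the circle `ℝ / ℤ`. -/
noncomputable def centeredLift (x : UnitAddCircle) : ℝ :=
  (AddCircle.measurableEquivIco 1 (-1 / 2) x : ℝ)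

theorem measurable_centeredLift : Measurable centeredLift :=
  measurable_subtype_coe.comp (AddCircle.measurableEquivIco 1 (-1 / 2)).measurable

theorem coe_centeredLift (x : UnitAddCircle) : (centeredLift x : UnitAddCircle) = x :=
  (AddCircle.equivIco 1 (-1 / 2)).symm_apply_apply x

theorem abs_centeredLift (x : UnitAddCircle) : |centeredLift x| = ‖x‖ := by
  have hmem : centeredLift x ∈ Set.Ico (-1 / 2 : ℝ) (-1 / 2 + 1) :=
    (AddCircle.measurableEquivIco 1 (-1 / 2) x).2
  have hle : |centeredLift x| ≤ |(1 : ℝ)| / 2 := by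
    rw [abs_one, abs_le]
    constructor <;> linarith [hmem.1, hmem.2]
  rw [← (AddCircle.norm_coe_eq_abs_iff 1 one_ne_zero).2 hle, coe_centeredLift]

/-- The integer by which translating by `t` the centered representative of `x` overshoots the
centered representative of `x + t`. -/
noncomputable def carry (t : ℝ) (x : UnitAddCircle) : ℤ :=
  round (centeredLift x + t - centeredLift (x + t))

theorem carry_cast (t : ℝ) (x : UnitAddCircle) :
    (carry t x : ℝ) = centeredLift x + t - centeredLift (x + t) := by
  have hzero : ((centeredLift x + t - centeredLift (x + t) : ℝ) : UnitAddCircle) = 0 := by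
    rw [AddCircle.coe_sub, AddCircle.coe_add, coe_centeredLift, coe_centeredLift, sub_self]
  obtain ⟨n, hn⟩ := (AddCircle.coe_eq_zero_iff 1).1 hzero
  rw [carry, ← hn]
  simp

theorem carry_add (s t : ℝ) (x : UnitAddCircle) :
    carry (s + t) x = carry s x + carry t (x + s) := by
  have h : (carry (s + t) x : ℝ) = carry s x + carry t (x + s) := by
    simp only [carry_cast, AddCircle.coe_add, add_assoc]
    ring
  exact_mod_cast h

theorem measurable_carry (t : ℝ) : Measurable (carry t) := by
  refine Measurable.comp (g := round) ?_ ((measurable_centeredLift.add_const t).sub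
    (measurable_centeredLift.comp (measurable_add_const _)))
  rw [funext (round_eq (α := ℝ))]
  exact Int.measurable_floor.comp (measurable_add_const _)

theorem measurable_zsmul_prod : Measurable fun p : ℤ × UnitAddCircle => p.1 • p.2 :=
  measurable_from_prod_countable_right fun n => (continuous_zsmul n).measurable

section SkewProduct

variable {Y K : Type*} [MeasurableSpace Y] [MeasurableSpace K] [AddGroup K] [MeasurableAdd₂ K]
  [MeasurableSub₂ K]

/-- The skew product of `S` with right translations of the group `K` along the cocycle
generated by `g`. -/
def skewTranslation (S : Y ≃ᵐ Y) (g : Y → K) (hg : Measurable g) : Y × K ≃ᵐ Y × K where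
  toFun p := (S p.1, p.2 + g p.1)
  invFun p := (S.symm p.1, p.2 - g (S.symm p.1))
  left_inv p := by simp
  right_inv p := by simp
  measurable_toFun := by dsimp; fun_prop
  measurable_invFun := by dsimp; fun_prop

theorem MeasureTheory.MeasurePreserving.skewTranslation {ν : Measure Y} [SFinite ν]
    {κ : Measure K} [SFinite κ] [κ.IsAddRightInvariant] {S : Y ≃ᵐ Y}
    (hS : MeasurePreserving S ν ν) {g : Y → K} (hg : Measurable g) :
    MeasurePreserving (skewTranslation S g hg) (ν.prod κ) (ν.prod κ) :=
  hS.skew_product (g := fun y k => k + g y)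
    (measurable_snd.add (hg.comp measurable_fst))
    (ae_of_all _ fun y => map_add_right_eq_self κ (g y))

end SkewProduct

/-- The transformation `(x, y, w, z) ↦ (x + α, y + β, w + c β, z + w + c (y + β))` of the
four-dimensional torus, where `c = carry α x`. -/
noncomputable def bracketShift (α β : ℝ) :
    ((UnitAddCircle × UnitAddCircle) × UnitAddCircle) × UnitAddCircle ≃ᵐ
      ((UnitAddCircle × UnitAddCircle) × UnitAddCircle) × UnitAddCircle :=
  skewTranslation
    (skewTranslation
      (skewTranslation (MeasurableEquiv.addRight (α : UnitAddCircle))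
        (fun _ => (β : UnitAddCircle)) measurable_const)
      (fun p => carry α p.1 • (β : UnitAddCircle))
      ((measurable_from_top (f := fun n : ℤ => n • (β : UnitAddCircle))).comp
        ((measurable_carry α).comp measurable_fst)))
    (fun p => p.2 + carry α p.1.1 • (p.1.2 + (β : UnitAddCircle)))
    (measurable_snd.add (measurable_zsmul_prod.comp
      (((measurable_carry α).comp (measurable_fst.comp measurable_fst)).prodMk
        ((measurable_snd.comp measurable_fst).add_const _))))

theorem measurePreserving_bracketShift (α β : ℝ) :
    MeasurePreserving (bracketShift α β) volume volume :=
  (((measurePreserving_add_right volume (α : UnitAddCircle)).skewTranslation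
    measurable_const).skewTranslation _).skewTranslation _

theorem bracketShift_zpow (α β : ℝ) (n : ℤ) (x y w z : UnitAddCircle) :
    ((bracketShift α β).toEquiv ^ n) (((x, y), w), z) =
      (((x + ((n * α : ℝ) : UnitAddCircle), y + n • (β : UnitAddCircle)),
        w + carry (n * α) x • (β : UnitAddCircle)),
        z + n • w + carry (n * α) x • (y + n • (β : UnitAddCircle))) := by
  have step : ∀ m : ℤ, (bracketShift α β).toEquiv
      (((x + ((m * α : ℝ) : UnitAddCircle), y + m • (β : UnitAddCircle)),
        w + carry (m * α) x • (β : UnitAddCircle)),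
        z + m • w + carry (m * α) x • (y + m • (β : UnitAddCircle))) =
      (((x + (((m + 1 : ℤ) * α : ℝ) : UnitAddCircle), y + (m + 1) • (β : UnitAddCircle)),
        w + carry ((m + 1 : ℤ) * α) x • (β : UnitAddCircle)),
        z + (m + 1) • w +
          carry ((m + 1 : ℤ) * α) x • (y + (m + 1) • (β : UnitAddCircle))) := by
    intro m
    have hmul : ((m + 1 : ℤ) : ℝ) * α = m * α + α := by push_cast; ring
    rw [hmul, carry_add]
    simp only [bracketShift, skewTranslation, MeasurableEquiv.coe_mk,
      Equiv.coe_fn_mk, MeasurableEquiv.coe_addRight, Prod.mk.injEq, AddCircle.coe_add]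
    refine ⟨⟨⟨by abel, by module⟩, by module⟩, by module⟩
  induction n with
  | zero =>
    have h0 : carry 0 x = 0 := by
      have h : (carry 0 x : ℝ) = 0 := by rw [carry_cast]; simp
      exact_mod_cast h
    simp [h0]
  | succ k ih => rw [← step, ← ih, ← Equiv.Perm.mul_apply, ← zpow_one_add, add_comm]
  | pred k ih =>
    apply (bracketShift α β).toEquiv.injective
    rw [step, sub_add_cancel, ← ih, ← Equiv.Perm.mul_apply, ← zpow_one_add]
    congr 2
    ring

theorem Int.fract_mem_of_norm_coe_le {t ε : ℝ} (h : ‖(t : UnitAddCircle)‖ ≤ ε) :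
    Int.fract t ∈ Set.Icc 0 ε ∪ Set.Ico (1 - ε) 1 := by
  rw [UnitAddCircle.norm_eq, abs_sub_round_eq_min, min_le_iff] at h
  rcases h with h | h
  · exact Or.inl ⟨Int.fract_nonneg t, h⟩
  · exact Or.inr ⟨by linarith, Int.fract_lt_one t⟩

theorem norm_second_difference_le {E : Type*} [SeminormedAddCommGroup E] {a b c : E} {δ : ℝ}
    (ha : ‖a‖ ≤ δ) (hb : ‖b‖ ≤ δ) (hc : ‖c‖ ≤ δ) : ‖(c - b) - (b - a)‖ ≤ 4 * δ := by
  linarith [norm_sub_le (c - b) (b - a), norm_sub_le c b, norm_sub_le b a]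

/-- If the points at times `0`, `r`, `2r` of an orbit of `bracketShift α (β / 2)` have first,
second and fourth coordinates close to `0`, then so is `⌊r α⌋ r β` modulo `1`. -/
theorem norm_floor_mul_mul_le {α β δ : ℝ} (hδ : δ < 1 / 4) {r : ℤ}
    {x y w z : UnitAddCircle}
    (h : ∀ i ∈ Finset.range 3, ∀ q,
      q = ((bracketShift α (β / 2)).toEquiv ^ ((i : ℤ) * r)) (((x, y), w), z) →
        ‖q.1.1.1‖ ≤ δ ∧ ‖q.1.1.2‖ ≤ δ ∧ ‖q.2‖ ≤ δ) :
    ‖((⌊(r : ℝ) * α⌋ * r * β : ℝ) : UnitAddCircle)‖ ≤ 8 * δ := by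
  obtain ⟨hx0, hy0, hz0⟩ := h 0 (by simp) (((x, y), w), z) (by simp)
  obtain ⟨hx1, hy1, hz1⟩ := h 1 (by simp) _ (bracketShift_zpow ..).symm
  obtain ⟨hx2, -, hz2⟩ := h 2 (by simp) _ (bracketShift_zpow ..).symm
  simp only [Nat.cast_one, one_mul, Nat.cast_ofNat] at hx0 hy0 hz0 hx1 hy1 hz1 hx2 hz2
  have hm := carry_cast (r * α) x
  have hm2 := carry_cast ((2 * r : ℤ) * α) x
  rw [← abs_centeredLift, abs_le] at hx0 hx1 hx2
  have hdouble : carry ((2 * r : ℤ) * α) x = 2 * carry (r * α) x := by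
    have hlo : (carry ((2 * r : ℤ) * α) x : ℝ) < 2 * carry (r * α) x + 1 := by
      rw [hm, hm2]; push_cast at *; linarith
    have hhi : (2 * carry (r * α) x : ℝ) < carry ((2 * r : ℤ) * α) x + 1 := by
      rw [hm, hm2]; push_cast at *; linarith
    have hlo' : carry ((2 * r : ℤ) * α) x < 2 * carry (r * α) x + 1 := by exact_mod_cast hlo
    have hhi' : 2 * carry (r * α) x < carry ((2 * r : ℤ) * α) x + 1 := by exact_mod_cast hhi
    lia
  rw [hdouble] at hz2
  set m := carry (r * α) x
  set b : UnitAddCircle := ((β / 2 : ℝ) : UnitAddCircle)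
  have hb : ∀ k : ℤ, ((k * r * β : ℝ) : UnitAddCircle) = (2 * k * r) • b := by
    intro k
    rw [← AddCircle.coe_zsmul, zsmul_eq_mul]
    push_cast
    congr 1
    ring
  have hmain : ‖(2 * m * r) • b‖ ≤ 4 * δ := by
    refine le_of_eq_of_le (congrArg norm ?_) (norm_second_difference_le hz0 hz1 hz2)
    module
  have hrb : ‖(2 * r) • b‖ ≤ 4 * δ := by
    have hsplit : (2 * r) • b = ((y + r • b) - y) + ((y + r • b) - y) := by module
    rw [hsplit]
    linarith [norm_add_le ((y + r • b) - y) ((y + r • b) - y), norm_sub_le (y + r • b) y]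
  have hδ0 : 0 ≤ δ := (norm_nonneg _).trans hy0
  have hfloor : ⌊(r : ℝ) * α⌋ = m ∨ ⌊(r : ℝ) * α⌋ = m - 1 := by
    rcases le_or_gt (m : ℝ) (r * α) with hle | hlt
    · exact Or.inl (Int.floor_eq_iff.2 ⟨hle, by linarith⟩)
    · refine Or.inr (Int.floor_eq_iff.2 ⟨?_, ?_⟩) <;> push_cast <;> linarith
  rw [hb]
  rcases hfloor with hf | hf <;> rw [hf]
  · linarith
  · have hsplit : (2 * (m - 1) * r) • b = (2 * m * r) • b - (2 * r) • b := by module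
    rw [hsplit]
    linarith [norm_sub_le ((2 * m * r) • b) ((2 * r) • b)]

theorem statement12 (α β : ℝ)
    (hind : ∀ a b c : ℚ, (a : ℝ) + (b : ℝ) * α + (c : ℝ) * β = 0 →
      a = 0 ∧ b = 0 ∧ c = 0)
    (R : Set ℤ) (hR : IsSetOfMultRecurrence 2 R)
    (ε : ℝ) (hε : 0 < ε) :
    ∃ r ∈ R, r ≠ 0 ∧
      Int.fract ((⌊(r : ℝ) * α⌋ : ℝ) * (r : ℝ) * β) ∈
        Set.Icc 0 ε ∪ Set.Ico (1 - ε) 1 := by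
  obtain ⟨δ, hδ0, hδ⟩ : ∃ δ : ℝ, 0 < δ ∧ δ < min (1 / 4) (ε / 8) :=
    exists_between (by positivity)
  obtain ⟨hδ4, hδε⟩ := lt_min_iff.1 hδ
  have : IsProbabilityMeasure (volume : Measure UnitAddCircle) :=
    ⟨by simp [AddCircle.measure_univ]⟩
  let B : Set UnitAddCircle := Metric.ball 0 δ
  have hB : IsOpen B := Metric.isOpen_ball
  have hA : IsOpen (((B ×ˢ B) ×ˢ (Set.univ : Set UnitAddCircle)) ×ˢ B) :=
    ((hB.prod hB).prod isOpen_univ).prod hB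
  have h0 : (((0, 0), 0), 0) ∈ ((B ×ˢ B) ×ˢ (Set.univ : Set UnitAddCircle)) ×ˢ B := by
    simp [B, hδ0]
  obtain ⟨r, hrR, hr0, hpos⟩ := hR _ _ volume inferInstance (bracketShift α (β / 2))
    (measurePreserving_bracketShift _ _) _ hA.measurableSet (hA.measure_pos _ ⟨_, h0⟩)
  obtain ⟨⟨⟨⟨x, y⟩, w⟩, z⟩, hp⟩ := nonempty_of_measure_ne_zero hpos.ne'
  refine ⟨r, hrR, hr0, Int.fract_mem_of_norm_coe_le
    ((norm_floor_mul_mul_le hδ4 (x := x) (y := y) (w := w) (z := z) ?_).trans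
      (by linarith : 8 * δ ≤ ε))⟩
  rintro i hi q rfl
  have hq := Set.mem_iInter₂.1 hp i hi
  simp only [B, Set.mem_preimage, Set.mem_prod, Set.mem_univ, and_true, mem_ball_zero_iff] at hq
  exact ⟨hq.1.1.le, hq.1.2.le, hq.2.le⟩
end

section
/- Let ℓ, d ∈ ℕ and let T be an ℓ-step unipotent affine transformation of the torus 𝕋^d = ℝ^d/ℤ^d, i.e. T(x) = M·x + b where b ∈ 𝕋^d and M is a d×d integer matrix inducing an endomorphism of 𝕋^d with (M − I)^ℓ = 0. Let β be an irrational number, let s ∈ ℕ, and let k, k₁, …, k_s be distinct positive integers. Then for every x ∈ 𝕋^d, every continuous f : 𝕋^d → ℂ, and all continuous 1-periodic h₁,…,h_s : ℝ → ℂ, both limits lim_{N→∞} (1/N)·Σ_{n=1}^N h₁((n^{ℓk₁}+n^{k₁})β)·…·h_s((n^{ℓk_s}+n^{k_s})β)·f(T^{n^k}x) and lim_{N→∞} (1/N)·Σ_{n=1}^N f(T^{n^k}x) exist, and the first equals (∫₀¹h₁ dt)·…·(∫₀¹h_s dt) times the second. -/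
open Filter MeasureTheory

open scoped Polynomial ComplexConjugate

/-- The average of the first `N` terms of a complex sequence. -/
noncomputable def cesaro (u : ℕ → ℂ) (N : ℕ) : ℂ := (N : ℂ)⁻¹ * ∑ n ∈ Finset.range N, u n

lemma cesaro_add (u v : ℕ → ℂ) (N : ℕ) :
    cesaro (fun n => u n + v n) N = cesaro u N + cesaro v N := by
  simp [cesaro, Finset.sum_add_distrib, mul_add]

lemma cesaro_sub (u v : ℕ → ℂ) (N : ℕ) :
    cesaro (fun n => u n - v n) N = cesaro u N - cesaro v N := by
  simp [cesaro, Finset.sum_sub_distrib, mul_sub]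

lemma cesaro_const_mul (c : ℂ) (u : ℕ → ℂ) (N : ℕ) :
    cesaro (fun n => c * u n) N = c * cesaro u N := by
  simp [cesaro, ← Finset.mul_sum]; ring

lemma cesaro_sum {ι : Type*} (s : Finset ι) (u : ι → ℕ → ℂ) (N : ℕ) :
    cesaro (fun n => ∑ i ∈ s, u i n) N = ∑ i ∈ s, cesaro (u i) N := by
  simp only [cesaro, Finset.mul_sum]
  exact Finset.sum_comm

lemma norm_cesaro_le {u : ℕ → ℂ} {K : ℝ} (hK : 0 ≤ K) (hu : ∀ n, ‖u n‖ ≤ K) (N : ℕ) :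
    ‖cesaro u N‖ ≤ K := by
  rcases N.eq_zero_or_pos with rfl | hN
  · simpa [cesaro] using hK
  have hN' : (0 : ℝ) < N := by exact_mod_cast hN
  rw [cesaro, norm_mul, norm_inv, Complex.norm_natCast, inv_mul_le_iff₀ hN']
  simpa using norm_sum_le_of_le (Finset.range N) fun n _ => hu n

lemma tendsto_cesaro_zero_of_norm_sum_le {u : ℕ → ℂ} {K : ℝ}
    (hu : ∀ N, ‖∑ n ∈ Finset.range N, u n‖ ≤ K) : Tendsto (cesaro u) atTop (nhds 0) := by
  have h0 : Tendsto (fun N : ℕ => (N : ℝ)⁻¹ * K) atTop (nhds 0) := by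
    simpa using (tendsto_inv_atTop_nhds_zero_nat (𝕜 := ℝ)).mul_const K
  refine squeeze_zero_norm (fun N => ?_) h0
  rw [cesaro, norm_mul, norm_inv, Complex.norm_natCast]
  gcongr
  exact hu N

lemma tendsto_cesaro_one : Tendsto (cesaro fun _ => 1) atTop (nhds 1) := by
  refine tendsto_const_nhds.congr' ?_
  filter_upwards [eventually_gt_atTop 0] with N hN
  have : (N : ℂ) ≠ 0 := by exact_mod_cast hN.ne'
  simp [cesaro, this]

lemma sum_range_shift_sub (u : ℕ → ℂ) (h N : ℕ) :
    ∑ n ∈ Finset.range N, u (n + h) - ∑ n ∈ Finset.range N, u n =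
      ∑ n ∈ Finset.range h, u (N + n) - ∑ n ∈ Finset.range h, u n := by
  have h1 := Finset.sum_range_add u h N
  have h2 := Finset.sum_range_add u N h
  rw [add_comm N h, h1] at h2
  simp only [add_comm h] at h2
  linear_combination h2

lemma tendsto_cesaro_shift_sub {u : ℕ → ℂ} {K : ℝ} (hu : ∀ n, ‖u n‖ ≤ K) (h : ℕ) :
    Tendsto (fun N => cesaro (fun n => u (n + h)) N - cesaro u N) atTop (nhds 0) := by
  simp_rw [← cesaro_sub]
  refine tendsto_cesaro_zero_of_norm_sum_le (K := h * K + h * K) fun N => ?_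
  rw [Finset.sum_sub_distrib, sum_range_shift_sub]
  refine (norm_sub_le _ _).trans (add_le_add ?_ ?_)
  · simpa using norm_sum_le_of_le (Finset.range h) fun n _ => hu (N + n)
  · simpa using norm_sum_le_of_le (Finset.range h) fun n _ => hu n

lemma tendsto_cesaro_shift {u : ℕ → ℂ} {K : ℝ} (hu : ∀ n, ‖u n‖ ≤ K) (h : ℕ) {L : ℂ}
    (hL : Tendsto (cesaro u) atTop (nhds L)) :
    Tendsto (cesaro fun n => u (n + h)) atTop (nhds L) := by
  simpa using (tendsto_cesaro_shift_sub hu h).add hL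

lemma norm_sq_cesaro_le (g : ℕ → ℂ) (N : ℕ) :
    ‖cesaro g N‖ ^ 2 ≤ ‖cesaro (fun n => g n * conj (g n)) N‖ := by
  have key : ‖cesaro (fun n => g n * conj (g n)) N‖ =
      (N : ℝ)⁻¹ * ∑ n ∈ Finset.range N, ‖g n‖ ^ 2 := by
    have : ∑ n ∈ Finset.range N, g n * conj (g n) =
        ((∑ n ∈ Finset.range N, ‖g n‖ ^ 2 : ℝ) : ℂ) := by
      push_cast
      exact Finset.sum_congr rfl fun n _ => Complex.mul_conj' (g n)
    rw [cesaro, this, norm_mul, norm_inv, Complex.norm_natCast, Complex.norm_real,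
      Real.norm_of_nonneg (by positivity)]
  rw [key]
  rcases N.eq_zero_or_pos with rfl | hN
  · simp [cesaro]
  have hN' : (0 : ℝ) < N := by exact_mod_cast hN
  have h1 : ‖∑ n ∈ Finset.range N, g n‖ ^ 2 ≤ N * ∑ n ∈ Finset.range N, ‖g n‖ ^ 2 :=
    calc _ ≤ (∑ n ∈ Finset.range N, ‖g n‖) ^ 2 := by gcongr; exact norm_sum_le _ _
      _ ≤ _ := by simpa using sq_sum_le_card_mul_sum_sq (s := Finset.range N) (f := fun n => ‖g n‖)
  rw [cesaro, norm_mul, norm_inv, Complex.norm_natCast, mul_pow]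
  calc (N : ℝ)⁻¹ ^ 2 * ‖∑ n ∈ Finset.range N, g n‖ ^ 2
      ≤ (N : ℝ)⁻¹ ^ 2 * (N * ∑ n ∈ Finset.range N, ‖g n‖ ^ 2) := by gcongr
    _ = _ := by field_simp

/-- Correlations of a unimodular sequence along two shifts, given that all nontrivial
autocorrelations vanish in the mean. -/
lemma tendsto_cesaro_correlation {u : ℕ → ℂ} (hu : ∀ n, ‖u n‖ = 1)
    (hcor : ∀ h, 0 < h → Tendsto (cesaro fun n => u (n + h) * conj (u n)) atTop (nhds 0))
    (i j : ℕ) :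
    Tendsto (cesaro fun n => u (n + i) * conj (u (n + j))) atTop
      (nhds (if i = j then 1 else 0)) := by
  have hlt : ∀ i j, j < i →
      Tendsto (cesaro fun n => u (n + i) * conj (u (n + j))) atTop (nhds 0) := by
    intro i j hij
    have := tendsto_cesaro_shift (K := 1) (fun n => by simp [hu]) j (hcor (i - j) (by omega))
    refine this.congr fun N => ?_
    congr 1
    ext n
    rw [show n + j + (i - j) = n + i by omega]
  rcases lt_trichotomy i j with hij | rfl | hij
  · rw [if_neg hij.ne]
    have := (Complex.continuous_conj.tendsto _).comp (hlt j i hij)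
    rw [map_zero] at this
    refine this.congr fun N => ?_
    simp [cesaro, mul_comm]
  · rw [if_pos rfl]
    refine tendsto_cesaro_one.congr fun N => ?_
    congr 1
    ext n
    rw [Complex.mul_conj', hu]
    simp
  · rw [if_neg hij.ne']
    exact hlt i j hij

/-- **Van der Corput's difference theorem** for unimodular sequences. -/
theorem tendsto_cesaro_of_vanDerCorput {u : ℕ → ℂ} (hu : ∀ n, ‖u n‖ = 1)
    (hcor : ∀ h, 0 < h → Tendsto (cesaro fun n => u (n + h) * conj (u n)) atTop (nhds 0)) :
    Tendsto (cesaro u) atTop (nhds 0) := by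
  have hcorr := tendsto_cesaro_correlation hu hcor
  rw [Metric.tendsto_nhds]
  intro ε hε
  obtain ⟨H, hH⟩ := exists_nat_gt (1 / (ε / 2) ^ 2)
  have hH0 : (0 : ℝ) < H := lt_of_le_of_lt (by positivity) hH
  have hHc : (H : ℂ) ≠ 0 := by exact_mod_cast hH0.ne'
  set g : ℕ → ℂ := fun n => (H : ℂ)⁻¹ * ∑ h ∈ Finset.range H, u (n + h) with hg
  have hb : Tendsto (fun N => cesaro g N - cesaro u N) atTop (nhds 0) := by
    have h1 : Tendsto (fun N => (H : ℂ)⁻¹ * ∑ h ∈ Finset.range H,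
        (cesaro (fun n => u (n + h)) N - cesaro u N)) atTop
        (nhds ((H : ℂ)⁻¹ * ∑ h ∈ Finset.range H, 0)) :=
      (tendsto_finsetSum _ fun h _ =>
        tendsto_cesaro_shift_sub (fun n => (hu n).le) h).const_mul _
    simp only [Finset.sum_const_zero, mul_zero] at h1
    refine h1.congr fun N => ?_
    rw [hg, cesaro_const_mul, cesaro_sum, Finset.sum_sub_distrib]
    simp [mul_sub, hHc]
  have hc : Tendsto (cesaro fun n => g n * conj (g n)) atTop (nhds (H : ℂ)⁻¹) := by
    have h1 : Tendsto (fun N => ((H : ℂ)⁻¹ * (H : ℂ)⁻¹) * ∑ i ∈ Finset.range H,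
        ∑ j ∈ Finset.range H, cesaro (fun n => u (n + i) * conj (u (n + j))) N) atTop
        (nhds (((H : ℂ)⁻¹ * (H : ℂ)⁻¹) * ∑ i ∈ Finset.range H, ∑ j ∈ Finset.range H,
          if i = j then 1 else 0)) :=
      (tendsto_finsetSum _ fun i _ => tendsto_finsetSum _ fun j _ => hcorr i j).const_mul _
    have h2 : ((H : ℂ)⁻¹ * (H : ℂ)⁻¹) * ∑ i ∈ Finset.range H, ∑ j ∈ Finset.range H,
        (if i = j then 1 else 0) = (H : ℂ)⁻¹ := by
      rw [Finset.sum_congr rfl fun i hi => (Finset.sum_ite_eq (Finset.range H) i _).trans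
        (if_pos hi)]
      simp [hHc]
    rw [h2] at h1
    refine h1.congr fun N => ?_
    simp_rw [← cesaro_sum]
    rw [← cesaro_const_mul]
    congr 1
    ext n
    simp only [hg, map_mul, map_inv₀, map_natCast, map_sum]
    rw [mul_mul_mul_comm, Finset.sum_mul_sum]
  have hc' : ∀ᶠ N in atTop, ‖cesaro (fun n => g n * conj (g n)) N‖ < (ε / 2) ^ 2 := by
    refine (hc.norm).eventually_lt_const ?_
    rw [norm_inv, Complex.norm_natCast]
    rw [div_lt_iff₀ (by positivity)] at hH
    rw [inv_lt_iff_one_lt_mul₀ hH0]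
    linarith
  have hb' : ∀ᶠ N in atTop, ‖cesaro g N - cesaro u N‖ < ε / 2 := by
    have := hb.norm
    rw [norm_zero] at this
    exact this.eventually_lt_const (by positivity)
  filter_upwards [hb', hc'] with N h1 h2
  have h3 : ‖cesaro g N‖ < ε / 2 :=
    lt_of_pow_lt_pow_left₀ 2 (by positivity) ((norm_sq_cesaro_le g N).trans_lt h2)
  rw [dist_zero_right]
  calc ‖cesaro u N‖ = ‖cesaro g N - (cesaro g N - cesaro u N)‖ := by simp
    _ ≤ _ := norm_sub_le _ _
    _ < ε := by linarith

lemma exists_tendsto_cesaro_of_periodic {u : ℕ → ℂ} {q : ℕ} (hq : 0 < q)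
    (hu : ∀ n, u (n + q) = u n) : ∃ L, Tendsto (cesaro u) atTop (nhds L) := by
  set L : ℂ := (q : ℂ)⁻¹ * ∑ n ∈ Finset.range q, u n with hL
  have hqc : (q : ℂ) ≠ 0 := by exact_mod_cast hq.ne'
  set g : ℕ → ℂ := fun N => ∑ n ∈ Finset.range N, (u n - L * 1) with hg
  have hper : Function.Periodic g q := by
    intro N
    simp only [hg]
    rw [add_comm, Finset.sum_range_add]
    simp only [add_comm q, hu]
    have h0 : ∑ n ∈ Finset.range q, (u n - L * 1) = 0 := by
      rw [Finset.sum_sub_distrib]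
      simp [hL, hqc]
    rw [h0, zero_add]
  have hbound : ∀ N, ‖g N‖ ≤ ∑ m ∈ Finset.range q, ‖g m‖ := by
    intro N
    rw [← hper.map_mod_nat N]
    exact Finset.single_le_sum (f := fun m => ‖g m‖) (fun _ _ => norm_nonneg _)
      (Finset.mem_range.2 (Nat.mod_lt N hq))
  have h1 := (tendsto_cesaro_zero_of_norm_sum_le hbound).add (tendsto_cesaro_one.const_mul L)
  refine ⟨0 + L * 1, h1.congr fun N => ?_⟩
  rw [cesaro_sub, cesaro_const_mul]
  ring

lemma tendsto_cesaro_of_shift_eq_mul {u : ℕ → ℂ} {K : ℝ} (hK : ∀ n, ‖u n‖ ≤ K) {q : ℕ} {ζ : ℂ}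
    (hζ : ζ ≠ 1) (hu : ∀ n, u (n + q) = ζ * u n) : Tendsto (cesaro u) atTop (nhds 0) := by
  have h1 := tendsto_cesaro_shift_sub hK q
  simp_rw [hu, cesaro_const_mul] at h1
  have h2 := h1.const_mul (ζ - 1)⁻¹
  rw [mul_zero] at h2
  refine h2.congr fun N => ?_
  have : ζ - 1 ≠ 0 := sub_ne_zero.2 hζ
  field_simp

/-- The additive character `x ↦ exp (2πix)` of the reals. -/
noncomputable def unitExp (x : ℝ) : ℂ := (AddCircle.toCircle (x : AddCircle (1 : ℝ)) : ℂ)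

lemma unitExp_add (x y : ℝ) : unitExp (x + y) = unitExp x * unitExp y := by
  simp [unitExp, AddCircle.toCircle_add]

lemma norm_unitExp (x : ℝ) : ‖unitExp x‖ = 1 := Circle.norm_coe _

lemma unitExp_neg (x : ℝ) : unitExp (-x) = conj (unitExp x) := by
  rw [unitExp, AddCircle.coe_neg, AddCircle.toCircle_neg, Circle.coe_inv_eq_conj, unitExp]

lemma unitExp_eq_one_iff (x : ℝ) : unitExp x = 1 ↔ ∃ n : ℤ, (n : ℝ) = x := by
  rw [unitExp, Circle.coe_eq_one, ← AddCircle.toCircle_zero (T := (1 : ℝ)),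
    (AddCircle.injective_toCircle one_ne_zero).eq_iff, AddCircle.coe_eq_zero_iff]
  simp

lemma unitExp_ne_one_of_irrational {x : ℝ} (hx : Irrational x) : unitExp x ≠ 1 := fun h =>
  let ⟨n, hn⟩ := (unitExp_eq_one_iff x).1 h
  hx ⟨n, by simpa using hn⟩

/-- A rational polynomial is periodic modulo one along the natural numbers. -/
lemma exists_period_of_rat_polynomial (R : ℚ[X]) :
    ∃ q : ℕ, 0 < q ∧ ∀ n : ℕ, ∃ m : ℤ,
      (R.map (algebraMap ℚ ℝ)).eval ((n + q : ℕ) : ℝ) =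
        m + (R.map (algebraMap ℚ ℝ)).eval (n : ℝ) := by
  obtain ⟨D, hD, hP⟩ := IsLocalization.integerNormalization_spec (nonZeroDivisors ℤ) R
  set P := IsLocalization.integerNormalization (nonZeroDivisors ℤ) R
  have hD0 : D ≠ 0 := nonZeroDivisors.ne_zero hD
  have hDr : (D : ℝ) ≠ 0 := by exact_mod_cast hD0
  have heval : ∀ n : ℕ, ((P.eval (n : ℤ) : ℤ) : ℝ) =
      D * (R.map (algebraMap ℚ ℝ)).eval (n : ℝ) := by
    intro n
    have h1 := congrArg (fun p : ℚ[X] => (p.map (algebraMap ℚ ℝ)).eval (n : ℝ)) hP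
    simpa [Polynomial.eval_map, ← Polynomial.aeval_def, Polynomial.eval₂_at_natCast,
      Polynomial.map_map, zsmul_eq_mul] using h1
  refine ⟨D.natAbs, Int.natAbs_pos.2 hD0, fun n => ?_⟩
  have hdvd : D ∣ P.eval ((n + D.natAbs : ℕ) : ℤ) - P.eval (n : ℤ) := by
    refine (Int.dvd_natAbs.2 dvd_rfl).trans ?_
    have := Polynomial.sub_dvd_eval_sub ((n + D.natAbs : ℕ) : ℤ) (n : ℤ) P
    have h2 : ((n + D.natAbs : ℕ) : ℤ) - n = (D.natAbs : ℤ) := by push_cast; ring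
    rwa [h2] at this
  obtain ⟨m, hm⟩ := hdvd
  refine ⟨m, mul_left_cancel₀ hDr ?_⟩
  have hm' := congrArg (Int.cast : ℤ → ℝ) hm
  rw [Int.cast_sub, heval, heval, Int.cast_mul] at hm'
  linarith

lemma eval_taylor_sub (Q : ℝ[X]) (h n : ℕ) :
    (Polynomial.taylor (h : ℝ) Q - Q).eval (n : ℝ) =
      Q.eval ((n + h : ℕ) : ℝ) - Q.eval (n : ℝ) := by
  simp [Polynomial.taylor_eval]

lemma coeff_taylor_of_natDegree_le_succ {L : ℝ[X]} {j : ℕ} (hL : L.natDegree ≤ j + 1) (h : ℝ) :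
    (Polynomial.taylor h L).coeff j = L.coeff j + (j + 1) * L.coeff (j + 1) * h := by
  have h1 : (Polynomial.hasseDeriv j L).natDegree < 2 :=
    lt_of_le_of_lt (Polynomial.natDegree_hasseDeriv_le L j) (by omega)
  rw [Polynomial.taylor_coeff, Polynomial.eval_eq_sum_range' h1, Finset.sum_range_succ,
    Finset.sum_range_one, Polynomial.hasseDeriv_coeff, Polynomial.hasseDeriv_coeff,
    add_comm 1 j, Nat.choose_succ_self_right]
  simp

/-- Weyl's theorem for a polynomial which is the sum of a rational polynomial and a polynomial
with irrational coefficient in the top degree. -/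
lemma tendsto_cesaro_unitExp_rat_add (j : ℕ) : ∀ (R : ℚ[X]) (L : ℝ[X]), L.natDegree ≤ j + 1 →
    Irrational (L.coeff (j + 1)) →
    Tendsto (cesaro fun n => unitExp ((R.map (algebraMap ℚ ℝ) + L).eval (n : ℝ)))
      atTop (nhds 0) := by
  induction j with
  | zero =>
    intro R L hL hirr
    obtain ⟨q, hq, hR⟩ := exists_period_of_rat_polynomial R
    have hirr' : Irrational (L.coeff 1 * q) := by
      simpa using hirr.mul_natCast hq.ne'
    refine tendsto_cesaro_of_shift_eq_mul (K := 1) (fun n => (norm_unitExp _).le)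
      (unitExp_ne_one_of_irrational hirr') (q := q) fun n => ?_
    obtain ⟨m, hm⟩ := hR n
    have hLe : ∀ x : ℝ, L.eval x = L.coeff 0 + L.coeff 1 * x := by
      intro x
      rw [Polynomial.eval_eq_sum_range' (n := 2) (by omega), Finset.sum_range_succ,
        Finset.sum_range_one]
      simp
    rw [Polynomial.eval_add, hm, Polynomial.eval_add, hLe, hLe, ← unitExp_add]
    have h1 : unitExp m = 1 := (unitExp_eq_one_iff _).2 ⟨m, rfl⟩
    rw [← one_mul (unitExp (L.coeff 1 * q + _)), ← h1, ← unitExp_add]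
    congr 1
    push_cast
    ring
  | succ j ih =>
    intro R L hL hirr
    refine tendsto_cesaro_of_vanDerCorput (fun n => norm_unitExp _) fun h hh => ?_
    have hdeg : (Polynomial.taylor (h : ℝ) L - L).natDegree ≤ j + 1 := by
      rw [Polynomial.natDegree_le_iff_coeff_eq_zero]
      intro i hi
      rw [Polynomial.coeff_sub,
        coeff_taylor_of_natDegree_le_succ (hL.trans (by omega : j + 1 + 1 ≤ i + 1)),
        Polynomial.coeff_eq_zero_of_natDegree_lt (n := i + 1) (by omega)]
      ring
    have hcoeff : Irrational ((Polynomial.taylor (h : ℝ) L - L).coeff (j + 1)) := by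
      rw [Polynomial.coeff_sub, coeff_taylor_of_natDegree_le_succ hL]
      have h1 : Irrational (L.coeff (j + 1 + 1) * (((j + 1 + 1) * h : ℕ) : ℝ)) :=
        hirr.mul_natCast (by positivity)
      convert! h1 using 1
      push_cast
      ring
    refine (ih (Polynomial.taylor (h : ℚ) R - R) _ hdeg hcoeff).congr fun N => ?_
    congr 1
    ext n
    rw [← unitExp_neg, ← unitExp_add]
    congr 1
    have h2 : (Polynomial.taylor (h : ℚ) R - R).map (algebraMap ℚ ℝ) =
        Polynomial.taylor (h : ℝ) (R.map (algebraMap ℚ ℝ)) - R.map (algebraMap ℚ ℝ) := by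
      rw [Polynomial.map_sub, Polynomial.map_taylor]
      simp
    rw [h2, Polynomial.eval_add, eval_taylor_sub, eval_taylor_sub, Polynomial.eval_add,
      Polynomial.eval_add]
    ring

/-- If the coefficients of degree above `j` are rational, the polynomial is a rational polynomial
plus its truncation to degree at most `j`. -/
lemma exists_rat_add_of_coeff (Q : ℝ[X]) (j : ℕ) (hQ : ∀ i, j < i → ¬ Irrational (Q.coeff i)) :
    ∃ (R : ℚ[X]) (L : ℝ[X]), Q = R.map (algebraMap ℚ ℝ) + L ∧ L.natDegree ≤ j ∧
      L.coeff j = Q.coeff j := by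
  set L : ℝ[X] := ∑ i ∈ Finset.range (j + 1), Polynomial.monomial i (Q.coeff i) with hL
  have hc : ∀ i, L.coeff i = if i < j + 1 then Q.coeff i else 0 := by
    intro i
    simp [hL, Polynomial.finsetSum_coeff, Polynomial.coeff_monomial]
  have hlift : Q - L ∈ Polynomial.lifts (algebraMap ℚ ℝ) := by
    rw [Polynomial.lifts_iff_coeff_lifts]
    intro i
    rw [Polynomial.coeff_sub, hc]
    split_ifs with hi
    · exact ⟨0, by simp⟩
    · rw [sub_zero]
      exact not_not.1 (hQ i (by omega))
  obtain ⟨R, hR⟩ := (Polynomial.mem_lifts _).1 hlift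
  refine ⟨R, L, by rw [hR]; ring, ?_, by simp [hc]⟩
  rw [Polynomial.natDegree_le_iff_coeff_eq_zero]
  intro i hi
  rw [hc, if_neg (by omega)]

/-- **Weyl's theorem** on polynomial exponential sums: the averages vanish in the limit as soon as
a nonconstant coefficient is irrational. -/
theorem tendsto_cesaro_unitExp_polynomial (Q : ℝ[X]) {i : ℕ} (hi : 0 < i)
    (hirr : Irrational (Q.coeff i)) :
    Tendsto (cesaro fun n => unitExp (Q.eval (n : ℝ))) atTop (nhds 0) := by
  classical
  have hbound : ∀ m, Irrational (Q.coeff m) → m ≤ Q.natDegree := by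
    intro m hm
    by_contra hlt
    rw [Polynomial.coeff_eq_zero_of_natDegree_lt (not_le.1 hlt)] at hm
    exact not_irrational_zero hm
  set j := Nat.findGreatest (fun m => Irrational (Q.coeff m)) Q.natDegree
  have hij : i ≤ j := Nat.le_findGreatest (hbound i hirr) hirr
  have hjirr : Irrational (Q.coeff j) :=
    Nat.findGreatest_spec (P := fun m => Irrational (Q.coeff m)) (hbound i hirr) hirr
  obtain ⟨R, L, hQ, hdeg, hcoeff⟩ := exists_rat_add_of_coeff Q j fun m hm h =>
    Nat.findGreatest_is_greatest hm (hbound m h) h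
  obtain ⟨l, hl⟩ : ∃ l, j = l + 1 := ⟨j - 1, by omega⟩
  rw [← hcoeff] at hjirr
  rw [hQ]
  rw [hl] at hdeg hjirr
  exact tendsto_cesaro_unitExp_rat_add l R L hdeg hjirr

/-- The averages of a polynomial exponential sequence always converge. -/
theorem exists_tendsto_cesaro_unitExp_polynomial (Q : ℝ[X]) :
    ∃ c, Tendsto (cesaro fun n => unitExp (Q.eval (n : ℝ))) atTop (nhds c) := by
  by_cases hQ : ∃ i, 0 < i ∧ Irrational (Q.coeff i)
  · obtain ⟨i, hi, hirr⟩ := hQ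
    exact ⟨0, tendsto_cesaro_unitExp_polynomial Q hi hirr⟩
  push Not at hQ
  obtain ⟨R, L, rfl, hdeg, -⟩ := exists_rat_add_of_coeff Q 0 fun i hi => hQ i hi
  obtain ⟨q, hq, hR⟩ := exists_period_of_rat_polynomial R
  refine exists_tendsto_cesaro_of_periodic hq fun n => ?_
  obtain ⟨m, hm⟩ := hR n
  have h1 : unitExp m = 1 := (unitExp_eq_one_iff _).2 ⟨m, rfl⟩
  rw [Polynomial.eq_C_of_natDegree_le_zero hdeg, Polynomial.eval_add, hm, Polynomial.eval_add,
    add_assoc, unitExp_add, h1, one_mul]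
  simp

/-- Binomial formula for the iterates of a unipotent affine map. -/
lemma iterate_unipotent_affine {A V : Type*} [Ring A] [AddCommGroup V] [Module A V] {M : A}
    {ℓ : ℕ} (hM : (M - 1) ^ ℓ = 0) (b x : V) (m : ℕ) :
    (fun y => b + M • y)^[m] x =
      x + ∑ j ∈ Finset.range ℓ, m.choose (j + 1) • (M - 1) ^ j • ((M - 1) • x + b) := by
  induction m with
  | zero => simp
  | succ m ih =>
    set v := (M - 1) • x + b with hv
    have hT : ∀ y : V, b + M • y = y + ((M - 1) • y + b) := by
      intro y
      rw [sub_smul, one_smul]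
      abel
    have hlast : ∑ j ∈ Finset.range ℓ, m.choose j • (M - 1) ^ j • v =
        v + ∑ j ∈ Finset.range ℓ, m.choose (j + 1) • (M - 1) ^ (j + 1) • v := by
      have h1 := Finset.sum_range_succ (fun j => m.choose j • (M - 1) ^ j • v) ℓ
      rw [Finset.sum_range_succ', hM] at h1
      simp only [Nat.choose_zero_right, pow_zero, one_smul, zero_smul, smul_zero, add_zero] at h1
      rw [← h1, add_comm]
    have hstep : (M - 1) • ∑ j ∈ Finset.range ℓ, m.choose (j + 1) • (M - 1) ^ j • v =
        ∑ j ∈ Finset.range ℓ, m.choose (j + 1) • (M - 1) ^ (j + 1) • v := by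
      rw [Finset.smul_sum]
      refine Finset.sum_congr rfl fun j _ => ?_
      rw [smul_comm, ← mul_smul, ← pow_succ']
    rw [Function.iterate_succ_apply', ih, hT, smul_add, hstep]
    simp only [Nat.choose_succ_succ m, add_smul, Finset.sum_add_distrib]
    rw [hlast, hv]
    abel

/-- Integer-valued binomial polynomials with coefficients in the circle lift to real polynomials. -/
lemma exists_polynomial_eq_sum_choose (ℓ : ℕ) (c : AddCircle (1 : ℝ))
    (a : ℕ → AddCircle (1 : ℝ)) :
    ∃ p : ℝ[X], p.natDegree ≤ ℓ ∧ ∀ n : ℕ, ((p.eval (n : ℝ) : ℝ) : AddCircle (1 : ℝ)) =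
      c + ∑ j ∈ Finset.range ℓ, n.choose (j + 1) • a j := by
  choose r hr using fun θ : AddCircle (1 : ℝ) => QuotientAddGroup.mk_surjective θ
  refine ⟨Polynomial.C (r c) + ∑ j ∈ Finset.range ℓ,
    Polynomial.C (r (a j) / (j + 1).factorial) * descPochhammer ℝ (j + 1), ?_, fun n => ?_⟩
  · refine Polynomial.natDegree_add_le_of_degree_le (by simp) ?_
    refine Polynomial.natDegree_sum_le_of_forall_le _ _ fun j hj => ?_
    refine (Polynomial.natDegree_C_mul_le _ _).trans ?_
    rw [descPochhammer_natDegree]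
    exact Finset.mem_range.1 hj
  · have h1 : ∀ j, r (a j) / (j + 1).factorial * (descPochhammer ℝ (j + 1)).eval (n : ℝ) =
        n.choose (j + 1) • r (a j) := by
      intro j
      rw [nsmul_eq_mul, Nat.cast_choose_eq_descPochhammer_div]
      ring
    rw [Polynomial.eval_add, Polynomial.eval_C, Polynomial.eval_finsetSum]
    simp only [Polynomial.eval_mul, Polynomial.eval_C, h1]
    have h2 : ∀ y : ℝ, (y : AddCircle (1 : ℝ)) =
      QuotientAddGroup.mk' (AddSubgroup.zmultiples (1 : ℝ)) y := fun _ => rfl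
    rw [h2, map_add, map_sum]
    simp only [map_nsmul]
    simp only [QuotientAddGroup.mk'_apply, hr]

/-- The real polynomial whose values are the phase of a character of the auxiliary torus. -/
noncomputable def phasePolynomial {s : ℕ} (ℓ : ℕ) (κ : Fin s → ℕ) (β : ℝ) (m : Fin s → ℤ) : ℝ[X] :=
  ∑ i, Polynomial.C (m i * β) * (Polynomial.X ^ (ℓ * κ i) + Polynomial.X ^ (κ i))

lemma coeff_phasePolynomial {s : ℕ} (ℓ : ℕ) (κ : Fin s → ℕ) (β : ℝ) (m : Fin s → ℤ) (j : ℕ) :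
    (phasePolynomial ℓ κ β m).coeff j =
      ∑ i, m i * β * ((if j = ℓ * κ i then 1 else 0) + if j = κ i then 1 else 0) := by
  simp only [phasePolynomial, Polynomial.finsetSum_coeff, Polynomial.coeff_C_mul,
    Polynomial.coeff_add, Polynomial.coeff_X_pow]

/-- An exponent attained by exactly one active frequency carries an irrational coefficient. -/
lemma irrational_coeff_phasePolynomial {s ℓ : ℕ} {κ : Fin s → ℕ} {β : ℝ} (hβ : Irrational β)
    {m : Fin s → ℤ} {i₀ : Fin s} (hi₀ : m i₀ ≠ 0) {j : ℕ} (hj : j = ℓ * κ i₀ ∨ j = κ i₀)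
    (hne : ∀ i, m i ≠ 0 → i ≠ i₀ → j ≠ ℓ * κ i ∧ j ≠ κ i) :
    Irrational ((phasePolynomial ℓ κ β m).coeff j) := by
  rw [coeff_phasePolynomial, Finset.sum_eq_single i₀]
  · obtain ⟨c, hc, hc'⟩ : ∃ c : ℕ, c ≠ 0 ∧
        ((if j = ℓ * κ i₀ then 1 else 0) + (if j = κ i₀ then 1 else 0) : ℝ) = c := by
      refine ⟨(if j = ℓ * κ i₀ then 1 else 0) + (if j = κ i₀ then 1 else 0), ?_, by push_cast; rfl⟩
      rcases hj with h | h <;> simp [← h]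
    rw [hc']
    exact (hβ.intCast_mul hi₀).mul_natCast hc
  · intro i _ hi
    by_cases hmi : m i = 0
    · simp [hmi]
    · simp [hne i hmi hi]
  · simp

/-- A nontrivial combination of the frequencies is not cancelled modulo the rationals by a
polynomial of degree at most `ℓ` in `n ^ k`. -/
lemma exists_irrational_coeff_phasePolynomial_add {s ℓ k : ℕ} (hℓ : 0 < ℓ) (hk : 0 < k)
    {κ : Fin s → ℕ} (hκ : ∀ i, 0 < κ i) (hκinj : Function.Injective κ) (hκk : ∀ i, κ i ≠ k)
    {β : ℝ} (hβ : Irrational β) {m : Fin s → ℤ} (hm : m ≠ 0) {p : ℝ[X]} (hp : p.natDegree ≤ ℓ) :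
    ∃ j, 0 < j ∧ Irrational ((phasePolynomial ℓ κ β m + Polynomial.expand ℝ k p).coeff j) := by
  classical
  set S : Finset (Fin s) := Finset.univ.filter fun i => m i ≠ 0 with hS
  have hmem : ∀ i, i ∈ S ↔ m i ≠ 0 := by simp [hS]
  have hSne : S.Nonempty := by
    obtain ⟨i, hi⟩ := Function.ne_iff.1 hm
    exact ⟨i, (hmem i).2 hi⟩
  by_cases hbig : ∃ i ∈ S, k < κ i
  · obtain ⟨i₀, hi₀, hmax⟩ := S.exists_max_image κ hSne
    have hk₀ : k < κ i₀ := by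
      obtain ⟨i, hi, hki⟩ := hbig
      exact hki.trans_le (hmax i hi)
    refine ⟨ℓ * κ i₀, Nat.mul_pos hℓ (hκ i₀), ?_⟩
    have hzero : (Polynomial.expand ℝ k p).coeff (ℓ * κ i₀) = 0 := by
      refine Polynomial.coeff_eq_zero_of_natDegree_lt ?_
      rw [Polynomial.natDegree_expand]
      exact (Nat.mul_le_mul_right k hp).trans_lt (Nat.mul_lt_mul_of_pos_left hk₀ hℓ)
    rw [Polynomial.coeff_add, hzero, add_zero]
    refine irrational_coeff_phasePolynomial hβ ((hmem i₀).1 hi₀) (Or.inl rfl) fun i hi hne => ?_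
    have hlt : κ i < κ i₀ := lt_of_le_of_ne (hmax i ((hmem i).2 hi)) (hκinj.ne hne)
    exact ⟨(Nat.mul_lt_mul_of_pos_left hlt hℓ).ne',
      (hlt.trans_le (Nat.le_mul_of_pos_left _ hℓ)).ne'⟩
  · push Not at hbig
    obtain ⟨i₀, hi₀, hmin⟩ := S.exists_min_image κ hSne
    refine ⟨κ i₀, hκ i₀, ?_⟩
    have hzero : (Polynomial.expand ℝ k p).coeff (κ i₀) = 0 := by
      rw [Polynomial.coeff_expand hk, if_neg]
      intro hdvd
      exact hκk i₀ (le_antisymm (hbig i₀ hi₀) (Nat.le_of_dvd (hκ i₀) hdvd))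
    rw [Polynomial.coeff_add, hzero, add_zero]
    refine irrational_coeff_phasePolynomial hβ ((hmem i₀).1 hi₀) (Or.inr rfl) fun i hi hne => ?_
    have hlt : κ i₀ < κ i := lt_of_le_of_ne (hmin i ((hmem i).2 hi)) (hκinj.ne hne.symm)
    exact ⟨(hlt.trans_le (Nat.le_mul_of_pos_left _ hℓ)).ne, hlt.ne⟩

lemma mFourier_eq_toCircle_sum {ι : Type*} [Fintype ι] (m : ι → ℤ) (z : UnitAddTorus ι) :
    UnitAddTorus.mFourier m z = (AddCircle.toCircle (∑ i, m i • z i) : ℂ) := by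
  classical
  have h1 : ∀ t : Finset ι, (AddCircle.toCircle (∑ i ∈ t, m i • z i) : ℂ) =
      ∏ i ∈ t, fourier (m i) (z i) := by
    intro t
    induction t using Finset.induction_on with
    | empty => simp
    | insert i t hi ih =>
      rw [Finset.sum_insert hi, Finset.prod_insert hi, AddCircle.toCircle_add, Circle.coe_mul, ih,
        fourier_apply]
  exact (h1 Finset.univ).symm

lemma mFourier_phase {s : ℕ} (ℓ : ℕ) (κ : Fin s → ℕ) (β : ℝ) (m : Fin s → ℤ) (n : ℕ) :
    UnitAddTorus.mFourier m (fun i =>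
        ((((n : ℝ) ^ (ℓ * κ i) + (n : ℝ) ^ (κ i)) * β : ℝ) : AddCircle (1 : ℝ))) =
      unitExp ((phasePolynomial ℓ κ β m).eval (n : ℝ)) := by
  rw [mFourier_eq_toCircle_sum, unitExp, phasePolynomial, Polynomial.eval_finsetSum]
  have h2 : ∀ y : ℝ, (y : AddCircle (1 : ℝ)) =
    QuotientAddGroup.mk' (AddSubgroup.zmultiples (1 : ℝ)) y := fun _ => rfl
  simp only [h2, ← map_zsmul, ← map_sum]
  congr 3
  refine Finset.sum_congr rfl fun i _ => ?_
  simp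
  ring

open scoped Matrix.Module in
/-- Characters along the orbit of a unipotent affine map are polynomial exponentials. -/
lemma exists_polynomial_mFourier_iterate {ℓ d : ℕ} {M : Matrix (Fin d) (Fin d) ℤ}
    (hM : (M - 1) ^ ℓ = 0) (b x : Fin d → AddCircle (1 : ℝ)) (m : Fin d → ℤ) :
    ∃ p : ℝ[X], p.natDegree ≤ ℓ ∧ ∀ n : ℕ,
      UnitAddTorus.mFourier m ((fun y (i : Fin d) => b i + ∑ j, M i j • y j)^[n] x) =
        unitExp (p.eval (n : ℝ)) := by
  let φ : (Fin d → AddCircle (1 : ℝ)) →+ AddCircle (1 : ℝ) :=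
    ∑ i, m i • Pi.evalAddMonoidHom (fun _ => AddCircle (1 : ℝ)) i
  have hφ : ∀ y, φ y = ∑ i, m i • y i := by
    intro y
    simp [φ, AddMonoidHom.finsetSum_apply]
  obtain ⟨p, hp, hpe⟩ := exists_polynomial_eq_sum_choose ℓ (φ x)
    fun j => φ ((M - 1) ^ j • ((M - 1) • x + b))
  refine ⟨p, hp, fun n => ?_⟩
  have hT : (fun (y : Fin d → AddCircle (1 : ℝ)) (i : Fin d) => b i + ∑ j, M i j • y j) =
      fun y => b + M • y := rfl
  rw [mFourier_eq_toCircle_sum, ← hφ, unitExp, hpe, hT, iterate_unipotent_affine hM, map_add,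
    map_sum]
  simp only [map_nsmul]

/-- A bounded family of linear functionals tending to zero on a set with dense span tends to zero
pointwise. -/
lemma tendsto_zero_of_dense_span {ι E : Type*} [NormedAddCommGroup E] [NormedSpace ℂ E]
    {l : Filter ι} {Φ : ι → E → ℂ} (hadd : ∀ i f g, Φ i (f + g) = Φ i f + Φ i g)
    (hsmul : ∀ i (c : ℂ) f, Φ i (c • f) = c * Φ i f) {K : ℝ} (hK : ∀ i f, ‖Φ i f‖ ≤ K * ‖f‖)
    {S : Set E} (hS : (Submodule.span ℂ S).topologicalClosure = ⊤)
    (h : ∀ f ∈ S, Tendsto (fun i => Φ i f) l (nhds 0)) (f : E) :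
    Tendsto (fun i => Φ i f) l (nhds 0) := by
  have hspan : ∀ g ∈ Submodule.span ℂ S, Tendsto (fun i => Φ i g) l (nhds 0) := by
    intro g hg
    induction hg using Submodule.span_induction with
    | mem g hg => exact h g hg
    | zero =>
      have h0 : ∀ i, Φ i 0 = 0 := fun i => by simpa using hsmul i 0 0
      simpa [h0] using tendsto_const_nhds
    | add g₁ g₂ _ _ h₁ h₂ => simpa [hadd] using h₁.add h₂
    | smul c g _ hg => simpa [hsmul] using hg.const_mul c
  rw [Metric.tendsto_nhds]
  intro ε hε
  have hf : f ∈ closure (Submodule.span ℂ S : Set E) := by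
    rw [← Submodule.topologicalClosure_coe, hS]
    trivial
  obtain ⟨g, hg, hfg⟩ := Metric.mem_closure_iff.1 hf (ε / 2 / (|K| + 1)) (by positivity)
  have hev := (Metric.tendsto_nhds.1 (hspan g hg)) (ε / 2) (by positivity)
  filter_upwards [hev] with i hi
  rw [dist_zero_right] at hi ⊢
  rw [dist_eq_norm, lt_div_iff₀ (by positivity)] at hfg
  have h1 : Φ i f = Φ i (f - g) + Φ i g := by rw [← hadd, sub_add_cancel]
  have h2 : ‖Φ i (f - g)‖ ≤ ‖f - g‖ * (|K| + 1) := by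
    refine (hK i _).trans ?_
    rw [mul_comm]
    gcongr
    linarith [le_abs_self K]
  rw [h1]
  refine (norm_add_le _ _).trans_lt ?_
  linarith

lemma exists_tendsto_cesaro_of_mFourier {ι : Type*} [Fintype ι] {z : ℕ → UnitAddTorus ι}
    (hz : ∀ m, ∃ L, Tendsto (cesaro fun n => UnitAddTorus.mFourier m (z n)) atTop (nhds L))
    (f : C(UnitAddTorus ι, ℂ)) : ∃ L, Tendsto (cesaro fun n => f (z n)) atTop (nhds L) := by
  suffices hc : CauchySeq (cesaro fun n => f (z n)) from cauchySeq_tendsto_of_complete hc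
  have hpair : ∀ u : ℕ → ℂ, CauchySeq u ↔
      Tendsto (fun q : ℕ × ℕ => u q.1 - u q.2) atTop (nhds 0) := by
    intro u
    simp only [cauchySeq_iff_tendsto_dist_atTop_0, dist_eq_norm]
    exact tendsto_zero_iff_norm_tendsto_zero.symm
  rw [hpair]
  refine tendsto_zero_of_dense_span
    (Φ := fun (q : ℕ × ℕ) (f : C(UnitAddTorus ι, ℂ)) =>
      cesaro (fun n => f (z n)) q.1 - cesaro (fun n => f (z n)) q.2) ?_ ?_
    (K := 2) ?_ UnitAddTorus.span_mFourier_closure_eq_top ?_ f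
  · intro q f g
    simp only [ContinuousMap.add_apply, cesaro_add]
    ring
  · intro q c f
    simp only [ContinuousMap.smul_apply, smul_eq_mul, cesaro_const_mul]
    ring
  · intro q f
    refine (norm_sub_le _ _).trans ?_
    have := norm_cesaro_le (norm_nonneg f) fun n => f.norm_coe_le_norm (z n)
    linarith [this q.1, this q.2]
  · rintro _ ⟨m, rfl⟩
    obtain ⟨L, hL⟩ := hz m
    exact (hpair _).1 hL.cauchySeq

lemma integral_fourier_of_ne_zero_s13 {m : ℤ} (hm : m ≠ 0) :
    ∫ t : AddCircle (1 : ℝ), fourier m t = 0 :=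
  integral_eq_zero_of_add_right_eq_neg (fourier_add_half_inv_index hm one_pos)

lemma integral_mFourier_of_ne_zero {ι : Type*} [Fintype ι] {m : ι → ℤ} (hm : m ≠ 0) :
    ∫ t : ι → AddCircle (1 : ℝ), UnitAddTorus.mFourier m t = 0 := by
  obtain ⟨i, hi⟩ := Function.ne_iff.1 hm
  have h1 := integral_fintype_prod_volume_eq_prod (𝕜 := ℂ)
    fun (i : ι) (t : AddCircle (1 : ℝ)) => fourier (m i) t
  exact h1.trans (Finset.prod_eq_zero (Finset.mem_univ i) (integral_fourier_of_ne_zero_s13 hi))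

/-- If nontrivial characters along `t` are uncorrelated with all characters along `z`, then
continuous functions along `t` may be replaced by their means. -/
lemma tendsto_cesaro_mul_sub_integral {ι ι' : Type*} [Fintype ι] [Fintype ι']
    {t : ℕ → ι → AddCircle (1 : ℝ)} {z : ℕ → UnitAddTorus ι'}
    (htz : ∀ m, m ≠ 0 → ∀ m', Tendsto (cesaro fun n =>
      UnitAddTorus.mFourier m (t n) * UnitAddTorus.mFourier m' (z n)) atTop (nhds 0))
    (G : C(ι → AddCircle (1 : ℝ), ℂ)) (f : C(UnitAddTorus ι', ℂ)) :
    Tendsto (fun N => cesaro (fun n => G (t n) * f (z n)) N -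
      (∫ y, G y) * cesaro (fun n => f (z n)) N) atTop (nhds 0) := by
  have : IsProbabilityMeasure (volume : Measure (AddCircle (1 : ℝ))) :=
    ⟨by simp [AddCircle.measure_univ]⟩
  have hint : ∀ G : C(ι → AddCircle (1 : ℝ), ℂ), Integrable (fun y => G y) := fun G =>
    G.continuous.integrable_of_hasCompactSupport (HasCompactSupport.of_compactSpace _)
  have hI : ∀ G : C(ι → AddCircle (1 : ℝ), ℂ), ‖∫ y, G y‖ ≤ ‖G‖ := by
    intro G
    simpa using norm_integral_le_of_norm_le_const (μ := volume)
      (Eventually.of_forall fun y => G.norm_coe_le_norm y)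
  have hf : ∀ (f : C(UnitAddTorus ι', ℂ)) N, ‖cesaro (fun n => f (z n)) N‖ ≤ ‖f‖ := fun f =>
    norm_cesaro_le (norm_nonneg f) fun n => f.norm_coe_le_norm (z n)
  have hGf : ∀ (G : C(ι → AddCircle (1 : ℝ), ℂ)) (f : C(UnitAddTorus ι', ℂ)) N,
      ‖cesaro (fun n => G (t n) * f (z n)) N - (∫ y, G y) * cesaro (fun n => f (z n)) N‖ ≤
        2 * ‖G‖ * ‖f‖ := by
    intro G f N
    refine (norm_sub_le _ _).trans ?_
    have h1 : ‖cesaro (fun n => G (t n) * f (z n)) N‖ ≤ ‖G‖ * ‖f‖ := by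
      refine norm_cesaro_le (by positivity) (fun n => ?_) N
      rw [norm_mul]
      gcongr
      · exact G.norm_coe_le_norm (t n)
      · exact f.norm_coe_le_norm (z n)
    have h2 : ‖(∫ y, G y) * cesaro (fun n => f (z n)) N‖ ≤ ‖G‖ * ‖f‖ := by
      rw [norm_mul]
      gcongr
      · exact hI G
      · exact hf f N
    linarith
  have hchar : ∀ m (f : C(UnitAddTorus ι', ℂ)),
      Tendsto (fun N => cesaro (fun n => UnitAddTorus.mFourier m (t n) * f (z n)) N -
        (∫ y : ι → AddCircle (1 : ℝ), UnitAddTorus.mFourier m y) * cesaro (fun n => f (z n)) N)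
        atTop (nhds 0) := by
    intro m f
    refine tendsto_zero_of_dense_span
      (Φ := fun N (f : C(UnitAddTorus ι', ℂ)) =>
        cesaro (fun n => UnitAddTorus.mFourier m (t n) * f (z n)) N -
        (∫ y : ι → AddCircle (1 : ℝ), UnitAddTorus.mFourier m y) * cesaro (fun n => f (z n)) N)
      ?_ ?_ (fun N f => hGf (UnitAddTorus.mFourier m) f N)
      UnitAddTorus.span_mFourier_closure_eq_top ?_ f
    · intro N f g
      simp only [ContinuousMap.add_apply, mul_add, cesaro_add]
      ring
    · intro N c f
      simp only [ContinuousMap.smul_apply, smul_eq_mul, mul_left_comm _ c, cesaro_const_mul]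
      ring
    · rintro _ ⟨m', rfl⟩
      by_cases hm : m = 0
      · subst hm
        simp [UnitAddTorus.mFourier_zero]
      · simpa [integral_mFourier_of_ne_zero hm] using htz m hm m'
  refine tendsto_zero_of_dense_span
    (Φ := fun N (G : C(ι → AddCircle (1 : ℝ), ℂ)) =>
      cesaro (fun n => G (t n) * f (z n)) N - (∫ y, G y) * cesaro (fun n => f (z n)) N)
    (K := 2 * ‖f‖) ?_ ?_ ?_ UnitAddTorus.span_mFourier_closure_eq_top ?_ G
  · intro N G₁ G₂
    simp only [ContinuousMap.add_apply, add_mul, cesaro_add]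
    rw [integral_add (hint G₁) (hint G₂)]
    ring
  · intro N c G
    simp only [ContinuousMap.smul_apply, smul_eq_mul, mul_assoc, cesaro_const_mul]
    rw [integral_const_mul]
    ring
  · intro N G
    exact (hGf G f N).trans_eq (by ring)
  · rintro _ ⟨m, rfl⟩
    exact hchar m f

lemma cesaro_shift_eq_sum_Icc (u : ℕ → ℂ) (N : ℕ) :
    cesaro (fun n => u (n + 1)) N = (N : ℂ)⁻¹ * ∑ n ∈ Finset.Icc 1 N, u n := by
  rw [cesaro, Finset.range_eq_Ico, Finset.sum_Ico_add' u 0 N 1]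
  rfl

theorem statement13 (ℓ d : ℕ) (hℓ : 0 < ℓ) (hd : 0 < d)
    (M : Matrix (Fin d) (Fin d) ℤ) (b : Fin d → AddCircle (1 : ℝ))
    (hM : (M - 1) ^ ℓ = 0)
    (β : ℝ) (hβ : Irrational β)
    (s : ℕ) (k : ℕ) (κ : Fin s → ℕ)
    (hk : 0 < k) (hκ : ∀ i, 0 < κ i)
    (hκinj : Function.Injective κ) (hκk : ∀ i, κ i ≠ k)
    (x : Fin d → AddCircle (1 : ℝ))
    (f : (Fin d → AddCircle (1 : ℝ)) → ℂ) (hf : Continuous f)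
    (h : Fin s → ℝ → ℂ) (h_cont : ∀ i, Continuous (h i))
    (h_per : ∀ i, Function.Periodic (h i) 1) :
    ∃ L : ℂ,
      Tendsto (fun N : ℕ => (N : ℂ)⁻¹ * ∑ n ∈ Finset.Icc 1 N,
          f ((fun y (i : Fin d) => b i + ∑ j, M i j • y j)^[n ^ k] x))
        atTop (nhds L) ∧
      Tendsto (fun N : ℕ => (N : ℂ)⁻¹ * ∑ n ∈ Finset.Icc 1 N,
          (∏ i, h i (((n : ℝ) ^ (ℓ * κ i) + (n : ℝ) ^ (κ i)) * β)) *
            f ((fun y (i : Fin d) => b i + ∑ j, M i j • y j)^[n ^ k] x))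
        atTop (nhds ((∏ i, ∫ t in (0:ℝ)..1, h i t) * L)) := by
  set T : (Fin d → AddCircle (1 : ℝ)) → Fin d → AddCircle (1 : ℝ) :=
    fun y i => b i + ∑ j, M i j • y j
  set z : ℕ → UnitAddTorus (Fin d) := fun n => T^[n ^ k] x with hz
  set t : ℕ → Fin s → AddCircle (1 : ℝ) := fun n i =>
    ((((n : ℝ) ^ (ℓ * κ i) + (n : ℝ) ^ (κ i)) * β : ℝ) : AddCircle (1 : ℝ)) with ht
  have hzp : ∀ m : Fin d → ℤ, ∃ p : ℝ[X], p.natDegree ≤ ℓ ∧ ∀ n : ℕ,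
      UnitAddTorus.mFourier m (z n) = unitExp ((Polynomial.expand ℝ k p).eval (n : ℝ)) := by
    intro m
    obtain ⟨p, hp, hpe⟩ := exists_polynomial_mFourier_iterate hM b x m
    refine ⟨p, hp, fun n => ?_⟩
    rw [hz, hpe, Polynomial.expand_eval]
    push_cast
    rfl
  have hzc : ∀ m, ∃ L, Tendsto (cesaro fun n => UnitAddTorus.mFourier m (z n)) atTop (nhds L) := by
    intro m
    obtain ⟨p, -, hpe⟩ := hzp m
    simp only [hpe]
    exact exists_tendsto_cesaro_unitExp_polynomial _
  have htz : ∀ m, m ≠ 0 → ∀ m', Tendsto (cesaro fun n =>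
      UnitAddTorus.mFourier m (t n) * UnitAddTorus.mFourier m' (z n)) atTop (nhds 0) := by
    intro m hm m'
    obtain ⟨p, hp, hpe⟩ := hzp m'
    obtain ⟨j, hj, hirr⟩ :=
      exists_irrational_coeff_phasePolynomial_add hℓ hk hκ hκinj hκk hβ hm hp
    simp only [hpe, ht, mFourier_phase, ← unitExp_add, ← Polynomial.eval_add]
    exact tendsto_cesaro_unitExp_polynomial _ hj hirr
  let F : C(UnitAddTorus (Fin d), ℂ) := ⟨f, hf⟩
  let g : Fin s → AddCircle (1 : ℝ) → ℂ := fun i => (h_per i).lift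
  have hg : ∀ i, Continuous (g i) := fun i => continuous_quot_lift _ (h_cont i)
  let G : C(Fin s → AddCircle (1 : ℝ), ℂ) :=
    ⟨fun y => ∏ i, g i (y i), continuous_finsetProd _ fun i _ =>
      (hg i).comp (continuous_apply i)⟩
  have hGint : ∫ y, G y = ∏ i, ∫ r in (0 : ℝ)..1, h i r := by
    refine (integral_fintype_prod_volume_eq_prod (𝕜 := ℂ) g).trans
      (Finset.prod_congr rfl fun i _ => ?_)
    rw [← AddCircle.intervalIntegral_preimage 1 0 (g i), zero_add]
    rfl
  obtain ⟨L, hL⟩ := exists_tendsto_cesaro_of_mFourier hzc F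
  have hprod : Tendsto (cesaro fun n => G (t n) * F (z n)) atTop
      (nhds ((∏ i, ∫ r in (0 : ℝ)..1, h i r) * L)) := by
    have h1 := (tendsto_cesaro_mul_sub_integral htz G F).add (hL.const_mul (∫ y, G y))
    rw [hGint] at h1
    simpa using h1
  refine ⟨L, ?_, ?_⟩
  · have h1 := tendsto_cesaro_shift (fun n => F.norm_coe_le_norm (z n)) 1 hL
    exact h1.congr fun N => cesaro_shift_eq_sum_Icc (fun n => F (z n)) N
  · have h1 := tendsto_cesaro_shift (K := ‖G‖ * ‖F‖) (fun n => by
      rw [norm_mul]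
      gcongr
      · exact G.norm_coe_le_norm (t n)
      · exact F.norm_coe_le_norm (z n)) 1 hprod
    exact h1.congr fun N => cesaro_shift_eq_sum_Icc (fun n => G (t n) * F (z n)) N
end

section
/- Let ℓ ∈ ℕ and let (u₁(n),…,u_ℓ(n))_{n∈ℕ} be a good sequence for multiple recurrence. Then for every ε > 0 there exist δ = δ(ε) > 0 and N₀ = N₀(ε) ∈ ℕ such that for every N ≥ N₀ and every set Λ of integers with Λ ⊆ {-N,…,N} and |Λ| ≥ εN, there exists n ∈ {1,…,N₀} with |Λ ∩ (Λ − u₁(n)) ∩ … ∩ (Λ − u_ℓ(n))| ≥ δN. -/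
open Filter MeasureTheory

/-- A sequence `(u₁(n), …, u_ℓ(n))` of `ℤ^ℓ`-valued data is a good sequence for multiple
recurrence if for every invertible measure preserving system and every measurable set `A`
of positive measure there is `n ∈ ℕ` with `μ(A ∩ T^{-u₁(n)}A ∩ … ∩ T^{-u_ℓ(n)}A) > 0`. -/
def GoodSeqForMultipleRecurrence (ℓ : ℕ) (u : Fin ℓ → ℕ → ℤ) : Prop :=
  ∀ (X : Type) (_ : MeasurableSpace X) (μ : Measure X),
    IsProbabilityMeasure μ →
    ∀ T : X ≃ᵐ X, MeasurePreserving (⇑T) μ μ →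
    ∀ A : Set X, MeasurableSet A → 0 < μ A →
      ∃ n : ℕ, 1 ≤ n ∧
        0 < μ (A ∩ ⋂ i : Fin ℓ, (⇑(T.toEquiv ^ (u i n))) ⁻¹' A)

open scoped Topology ENNReal BoundedContinuousFunction

noncomputable section

/-- The uniform probability measure on the points `p 0, …, p M`, counted with multiplicity. -/
def empiricalMeasure {X : Type*} [MeasurableSpace X] (M : ℕ) (p : ℕ → X) : Measure X :=
  ((M + 1 : ℕ) : ℝ≥0∞)⁻¹ • ∑ j ∈ Finset.range (M + 1), Measure.dirac (p j)

instance {X : Type*} [MeasurableSpace X] (M : ℕ) (p : ℕ → X) :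
    IsProbabilityMeasure (empiricalMeasure M p) := by
  constructor
  simp only [empiricalMeasure, Measure.smul_apply, Measure.finsetSum_apply, measure_univ,
    Finset.sum_const, Finset.card_range, nsmul_eq_mul, mul_one, smul_eq_mul]
  exact ENNReal.inv_mul_cancel (by simp) (ENNReal.natCast_ne_top _)

open Classical in
lemma empiricalMeasure_real_apply {X : Type*} [MeasurableSpace X] (M : ℕ) (p : ℕ → X)
    {s : Set X} (hs : MeasurableSet s) :
    (empiricalMeasure M p).real s =
      (((Finset.range (M + 1)).filter fun j => p j ∈ s).card : ℝ) / (M + 1 : ℕ) := by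
  have h : ∑ j ∈ Finset.range (M + 1), Measure.dirac (p j) s =
      (((Finset.range (M + 1)).filter fun j => p j ∈ s).card : ℝ≥0∞) := by
    simp [Measure.dirac_apply' _ hs, Set.indicator_apply]
  rw [Measure.real, empiricalMeasure, Measure.smul_apply, Measure.finsetSum_apply, h, smul_eq_mul,
    ENNReal.toReal_mul, ENNReal.toReal_inv, ENNReal.toReal_natCast, ENNReal.toReal_natCast,
    div_eq_inv_mul]

lemma integral_empiricalMeasure {X : Type*} [TopologicalSpace X] [MeasurableSpace X]
    [OpensMeasurableSpace X] (M : ℕ) (p : ℕ → X) (f : X →ᵇ ℝ) :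
    ∫ x, f x ∂empiricalMeasure M p =
      (∑ j ∈ Finset.range (M + 1), f (p j)) / (M + 1 : ℕ) := by
  rw [empiricalMeasure, integral_smul_measure,
    integral_finsetSum_measure fun i _ => f.integrable _]
  simp only [integral_dirac' _ _ f.continuous.measurable.stronglyMeasurable]
  rw [ENNReal.toReal_inv, ENNReal.toReal_natCast, smul_eq_mul, div_eq_inv_mul]

/-- A weak limit of empirical measures along longer and longer orbit segments is invariant. -/
lemma measurePreserving_of_tendsto_empiricalMeasure {X ι : Type*} [TopologicalSpace X]
    [MeasurableSpace X] [BorelSpace X] [HasOuterApproxClosed X] {F : Filter ι} [F.NeBot]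
    {T : X → X} (hT : Continuous T) {M : ι → ℕ} (hM : Tendsto M F atTop) (y : ι → X)
    {ν : ι → ProbabilityMeasure X} {μ : ProbabilityMeasure X}
    (hν : ∀ m, (ν m : Measure X) = empiricalMeasure (M m) fun j => T^[j] (y m))
    (hμ : Tendsto ν F (𝓝 μ)) :
    MeasurePreserving T (μ : Measure X) μ := by
  refine ⟨hT.measurable, ?_⟩
  refine ext_of_forall_integral_eq_of_IsFiniteMeasure fun f => ?_
  rw [integral_map hT.aemeasurable f.continuous.aestronglyMeasurable]
  rw [ProbabilityMeasure.tendsto_iff_forall_integral_tendsto] at hμ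
  have h₁ := hμ f
  have h₂ := hμ (f.compContinuous ⟨T, hT⟩)
  simp only [hν, integral_empiricalMeasure] at h₁ h₂
  have h₃ : Tendsto (fun m => 2 * ‖f‖ / ((M m + 1 : ℕ) : ℝ)) F (𝓝 0) :=
    (tendsto_const_nhds.div_atTop tendsto_natCast_atTop_atTop).comp
      ((tendsto_add_atTop_nat 1).comp hM)
  refine sub_eq_zero.mp (tendsto_nhds_unique (h₂.sub h₁) (squeeze_zero_norm (fun m => ?_) h₃))
  rw [← sub_div, ← Finset.sum_sub_distrib, norm_div, Real.norm_natCast]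
  gcongr
  have h₄ := Finset.sum_range_sub (fun j => f (T^[j] (y m))) (M m + 1)
  simp only [Function.iterate_succ_apply'] at h₄
  simp only [BoundedContinuousFunction.compContinuous_apply, ContinuousMap.coe_mk]
  rw [h₄, two_mul]
  exact (norm_sub_le _ _).trans (add_le_add (f.norm_coe_le_norm _) (f.norm_coe_le_norm _))

/-- The left shift on two-sided binary sequences. -/
def binaryShift : (ℤ → Bool) ≃ᵐ (ℤ → Bool) where
  toFun x j := x (j + 1)
  invFun x j := x (j - 1)
  left_inv x := by simp
  right_inv x := by simp
  measurable_toFun := by simp only [Equiv.coe_fn_mk]; fun_prop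
  measurable_invFun := by simp only [Equiv.coe_fn_symm_mk]; fun_prop

lemma binaryShift_apply (x : ℤ → Bool) (j : ℤ) : binaryShift x j = x (j + 1) := rfl

lemma continuous_binaryShift : Continuous binaryShift :=
  continuous_pi fun j => continuous_apply (j + 1)

lemma binaryShift_iterate_apply (k : ℕ) (x : ℤ → Bool) (j : ℤ) :
    binaryShift^[k] x j = x (j + k) := by
  induction k generalizing x with
  | zero => simp
  | succ k ih =>
    rw [Function.iterate_succ_apply, ih, binaryShift_apply]
    push_cast
    congr 1
    ring

lemma binaryShift_zpow_apply (k : ℤ) (x : ℤ → Bool) (j : ℤ) :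
    (binaryShift.toEquiv ^ k) x j = x (j + k) := by
  induction k using Int.induction_on generalizing x with
  | zero => simp
  | succ k ih =>
    rw [zpow_add_one, Equiv.Perm.mul_apply, ih]
    change x (j + k + 1) = _
    rw [add_assoc]
  | pred k ih =>
    rw [zpow_sub_one, Equiv.Perm.mul_apply, ih]
    change x (j + -k - 1) = _
    rw [add_sub_assoc]

/-- Counting a subset of `[-N, N]` through the translation of `[0, 2N]` by `-N`. -/
lemma card_filter_range_sub_mem {N : ℕ} {S : Finset ℤ} (hS : ∀ x ∈ S, -(N : ℤ) ≤ x ∧ x ≤ N) :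
    ((Finset.range (2 * N + 1)).filter fun j : ℕ => (j : ℤ) - N ∈ S).card = S.card := by
  refine Finset.card_bij (fun j _ => (j : ℤ) - N) ?_ ?_ ?_
  · intro j hj
    exact (Finset.mem_filter.mp hj).2
  · intro a _ b _ h
    omega
  · intro x hx
    have := hS x hx
    have h : ((x + N).toNat : ℤ) - N = x := by omega
    refine ⟨(x + N).toNat, Finset.mem_filter.mpr ⟨Finset.mem_range.mpr (by omega), ?_⟩, h⟩
    rwa [h]

/-- **Furstenberg correspondence** for a sequence of finite sets `Λ m ⊆ [-N m, N m]`: some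
shift-invariant probability measure on binary sequences records, along an ultrafilter, the
densities of all finite configurations in `Λ m`. -/
lemma exists_measurePreserving_binaryShift {F : Ultrafilter ℕ} {N : ℕ → ℕ}
    (hN : Tendsto N F atTop) {Λ : ℕ → Finset ℤ}
    (hΛ : ∀ m, ∀ x ∈ Λ m, -(N m : ℤ) ≤ x ∧ x ≤ N m) :
    ∃ μ : Measure (ℤ → Bool), IsProbabilityMeasure μ ∧ MeasurePreserving binaryShift μ μ ∧
      ∀ (ℓ : ℕ) (v : Fin ℓ → ℤ),
        Tendsto (fun m => (((Λ m).filter fun x => ∀ i, x + v i ∈ Λ m).card : ℝ) /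
            (2 * N m + 1 : ℕ)) F
          (𝓝 (μ.real {x | x 0 = true ∧ ∀ i, x (v i) = true})) := by
  classical
  set y : ℕ → ℤ → Bool := fun m j => decide (j - N m ∈ Λ m) with hy
  set ν : ℕ → ProbabilityMeasure (ℤ → Bool) := fun m =>
    ⟨empiricalMeasure (2 * N m) fun j => binaryShift^[j] (y m), inferInstance⟩
  have hμ : Tendsto ν F (𝓝 (F.map ν).lim) := (F.map ν).le_nhds_lim
  set μ := (F.map ν).lim
  refine ⟨μ, inferInstance, measurePreserving_of_tendsto_empiricalMeasure continuous_binaryShift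
    (hN.const_mul_atTop' two_pos) y (fun m => rfl) hμ, fun ℓ v => ?_⟩
  have hC : IsClopen {x : ℤ → Bool | x 0 = true ∧ ∀ i, x (v i) = true} := by
    have h (j : ℤ) : IsClopen {x : ℤ → Bool | x j = true} :=
      (isClopen_discrete {true}).preimage (continuous_apply j)
    have := (h 0).inter (isClopen_iInter_of_finite fun i => h (v i))
    convert this using 1
    ext x
    simp
  have hlim := ProbabilityMeasure.tendsto_measure_of_null_frontier_of_tendsto' hμ
    (E := {x : ℤ → Bool | x 0 = true ∧ ∀ i, x (v i) = true}) (by simp [hC.frontier_eq])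
  refine ((ENNReal.tendsto_toReal (measure_ne_top _ _)).comp hlim).congr fun m => ?_
  change (empiricalMeasure _ _).real _ = _
  rw [empiricalMeasure_real_apply _ _ hC.isOpen.measurableSet,
    ← card_filter_range_sub_mem (S := (Λ m).filter fun x => ∀ i, x + v i ∈ Λ m)
      fun x hx => hΛ m x (Finset.mem_filter.mp hx).1]
  congr 3
  ext j
  simp only [hy, Set.mem_ofPred_eq, binaryShift_iterate_apply, decide_eq_true_eq, Finset.mem_filter,
    zero_add]
  simp only [add_sub_assoc, add_comm]

end

theorem statement16 (ℓ : ℕ) (hℓ : 0 < ℓ) (u : Fin ℓ → ℕ → ℤ)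
    (hu : GoodSeqForMultipleRecurrence ℓ u) :
    ∀ ε : ℝ, 0 < ε → ∃ δ : ℝ, 0 < δ ∧ ∃ N₀ : ℕ, 0 < N₀ ∧
      ∀ N : ℕ, N₀ ≤ N → ∀ Λ : Finset ℤ,
        (∀ x ∈ Λ, -(N : ℤ) ≤ x ∧ x ≤ N) → ε * N ≤ Λ.card →
        ∃ n : ℕ, 1 ≤ n ∧ n ≤ N₀ ∧
          δ * N ≤ ((Λ.filter fun x => ∀ i : Fin ℓ, x + u i n ∈ Λ).card : ℝ) := by
  intro ε hε
  by_contra! hcon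
  choose N hN Λ hΛ hcard hsmall using fun m : ℕ =>
    hcon (1 / ((m : ℝ) + 1)) (by positivity) (m + 1) m.succ_pos
  have hN' : Tendsto N (hyperfilter ℕ) atTop :=
    (tendsto_atTop_mono (fun m => (Nat.le_succ m).trans (hN m)) tendsto_id).mono_left
      Nat.hyperfilter_le_atTop
  obtain ⟨μ, hμ, hT, hlim⟩ := exists_measurePreserving_binaryShift hN' hΛ
  have hA : MeasurableSet {x : ℤ → Bool | x 0 = true} :=
    (measurableSet_singleton true).preimage (measurable_pi_apply 0)
  have hNpos (m : ℕ) : (1 : ℝ) ≤ N m := by exact_mod_cast (Nat.le_add_left 1 m).trans (hN m)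
  have hApos : 0 < μ {x : ℤ → Bool | x 0 = true} := by
    have h := ge_of_tendsto (b := ε / 3) (hlim 0 Fin.elim0) <| Eventually.of_forall fun m => by
      rw [div_le_div_iff₀ (by norm_num) (by positivity)]
      simp only [IsEmpty.forall_iff, Finset.filter_true]
      push_cast
      nlinarith [hcard m, hNpos m]
    simp only [IsEmpty.forall_iff, and_true] at h
    exact (ENNReal.toReal_pos_iff.mp ((by positivity : 0 < ε / 3).trans_le h)).1
  obtain ⟨n, hn, hpos⟩ := hu _ _ μ hμ binaryShift hT _ hA hApos
  have hset : {x : ℤ → Bool | x 0 = true} ∩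
      ⋂ i : Fin ℓ, (⇑(binaryShift.toEquiv ^ (u i n))) ⁻¹' {x : ℤ → Bool | x 0 = true} =
      {x | x 0 = true ∧ ∀ i, x (u i n) = true} := by
    ext x
    simp [binaryShift_zpow_apply]
  rw [hset] at hpos
  have hzero : Tendsto (fun m => (((Λ m).filter fun x => ∀ i, x + u i n ∈ Λ m).card : ℝ) /
      (2 * N m + 1 : ℕ)) (hyperfilter ℕ) (𝓝 0) := by
    have h₀ : Tendsto (fun m : ℕ => 1 / ((m : ℝ) + 1)) (hyperfilter ℕ) (𝓝 0) :=
      tendsto_one_div_add_atTop_nhds_zero_nat.mono_left Nat.hyperfilter_le_atTop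
    refine squeeze_zero' (Eventually.of_forall fun m => by positivity) ?_ h₀
    filter_upwards [Nat.hyperfilter_le_atTop (eventually_ge_atTop n)] with m hm
    rw [div_le_iff₀ (by positivity)]
    refine (hsmall m n hn (hm.trans m.le_succ)).le.trans ?_
    gcongr
    linarith [hNpos m]
  have := tendsto_nhds_unique (hlim ℓ fun i => u i n) hzero
  exact (ENNReal.toReal_pos hpos.ne' (measure_ne_top _ _)).ne' this
end

section
/- Let ℓ ∈ ℕ and let (u₁(n),…,u_ℓ(n))_{n∈ℕ} be a good sequence for multiple recurrence. Then for every ε > 0 there exist γ = γ(ε) > 0 and N₁ = N₁(ε) ∈ ℕ such that for every system (X,ℬ,μ,T) and every A ∈ ℬ with μ(A) ≥ ε, there exists n ∈ {1,…,N₁} with μ(A ∩ T^{-u₁(n)}A ∩ … ∩ T^{-u_ℓ(n)}A) ≥ γ. -/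
open Filter MeasureTheory

/-- The left shift on two-sided binary sequences, as a measurable equivalence. -/
def boolShift : (ℤ → Bool) ≃ᵐ (ℤ → Bool) where
  toFun x n := x (n + 1)
  invFun x n := x (n - 1)
  left_inv x := by simp
  right_inv x := by simp
  measurable_toFun := by
    change Measurable fun (x : ℤ → Bool) (n : ℤ) => x (n + 1)
    fun_prop
  measurable_invFun := by
    change Measurable fun (x : ℤ → Bool) (n : ℤ) => x (n - 1)
    fun_prop

theorem boolShift_apply (x : ℤ → Bool) (n : ℤ) : boolShift x n = x (n + 1) := rfl

theorem continuous_boolShift : Continuous boolShift :=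
  continuous_pi fun n => continuous_apply (n + 1)

theorem boolShift_zpow_apply (m : ℤ) (x : ℤ → Bool) (n : ℤ) :
    (boolShift.toEquiv ^ m) x n = x (n + m) := by
  induction m generalizing x with
  | zero => simp
  | succ i ih =>
    rw [zpow_add_one, Equiv.Perm.mul_apply, ih]
    exact congrArg x (by ring)
  | pred i ih =>
    rw [zpow_sub_one, Equiv.Perm.mul_apply, ih]
    exact congrArg x (by ring)

/-- The binary sequences taking the value `true` at `0`. -/
def boolCylinder : Set (ℤ → Bool) := {x | x 0 = true}

theorem preimage_boolShift_zpow_boolCylinder (m : ℤ) :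
    (boolShift.toEquiv ^ m) ⁻¹' boolCylinder = {x | x m = true} := by
  ext x
  simp [boolCylinder, boolShift_zpow_apply]

theorem isClopen_setOf_apply_eq_true (m : ℤ) : IsClopen {x : ℤ → Bool | x m = true} :=
  (isClopen_discrete {true}).preimage (continuous_apply m)

theorem isClopen_boolCylinder : IsClopen boolCylinder :=
  isClopen_setOf_apply_eq_true 0

theorem isClopen_boolCylinder_inter {ι : Type*} [Finite ι] (v : ι → ℤ) :
    IsClopen (boolCylinder ∩ ⋂ i, (boolShift.toEquiv ^ v i) ⁻¹' boolCylinder) := by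
  simp only [preimage_boolShift_zpow_boolCylinder]
  exact isClopen_boolCylinder.inter
    (isClopen_iInter_of_finite fun i => isClopen_setOf_apply_eq_true (v i))

/-- The measure of a clopen set depends continuously on the probability measure. -/
theorem continuous_probabilityMeasure_apply_of_isClopen {Ω : Type*} [MeasurableSpace Ω]
    [TopologicalSpace Ω] [OpensMeasurableSpace Ω] [HasOuterApproxClosed Ω] {E : Set Ω}
    (hE : IsClopen E) : Continuous fun ν : ProbabilityMeasure Ω => ν E :=
  continuous_iff_continuousAt.2 fun _ =>
    ProbabilityMeasure.tendsto_measure_of_isClopen_of_tendsto tendsto_id hE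

/-- The shift-invariant probability measures on binary sequences form a closed set. -/
theorem isClosed_setOf_measurePreserving_boolShift :
    IsClosed {ν : ProbabilityMeasure (ℤ → Bool) |
      MeasurePreserving boolShift (ν : Measure (ℤ → Bool)) ν} := by
  have h : {ν : ProbabilityMeasure (ℤ → Bool) |
      MeasurePreserving boolShift (ν : Measure (ℤ → Bool)) ν} =
      {ν | ν.map continuous_boolShift.measurable.aemeasurable = ν} := by
    ext ν
    refine ⟨fun h => Subtype.ext h.map_eq, fun h => ⟨boolShift.measurable, ?_⟩⟩
    exact congrArg ProbabilityMeasure.toMeasure h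
  rw [h]
  exact isClosed_eq (ProbabilityMeasure.continuous_map continuous_boolShift) continuous_id

open Classical in
/-- The itinerary of a point with respect to a set, along the two-sided orbit. -/
noncomputable def itinerary {X : Type*} (T : Equiv.Perm X) (A : Set X) (x : X) : ℤ → Bool :=
  fun n => decide ((T ^ n) x ∈ A)

theorem measurable_equiv_zpow {X : Type*} [MeasurableSpace X] (T : X ≃ᵐ X) (n : ℤ) :
    Measurable (T.toEquiv ^ n) := by
  induction n with
  | zero => simpa using measurable_id
  | succ i ih =>
    rw [zpow_add_one, Equiv.Perm.coe_mul]
    exact ih.comp T.measurable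
  | pred i ih =>
    rw [zpow_sub_one, Equiv.Perm.coe_mul]
    exact ih.comp T.symm.measurable

theorem measurable_itinerary {X : Type*} [MeasurableSpace X] (T : X ≃ᵐ X) {A : Set X}
    (hA : MeasurableSet A) : Measurable (itinerary T.toEquiv A) := by
  classical
  refine measurable_pi_lambda _ fun n => measurable_to_bool ?_
  convert measurable_equiv_zpow T n hA using 1
  ext x
  simp [itinerary]

theorem boolShift_itinerary {X : Type*} [MeasurableSpace X] (T : X ≃ᵐ X) (A : Set X) (x : X) :
    boolShift (itinerary T.toEquiv A x) = itinerary T.toEquiv A (T x) := by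
  funext n
  have h : (T.toEquiv ^ (n + 1)) x = (T.toEquiv ^ n) (T x) := by
    rw [zpow_add_one, Equiv.Perm.mul_apply]
    rfl
  rw [boolShift_apply, itinerary, itinerary, h]

/-- The distribution of itineraries is a shift-invariant measure. -/
theorem measurePreserving_boolShift_map_itinerary {X : Type*} [MeasurableSpace X]
    {μ : Measure X} {T : X ≃ᵐ X} (hT : MeasurePreserving T μ μ) {A : Set X}
    (hA : MeasurableSet A) :
    MeasurePreserving boolShift (μ.map (itinerary T.toEquiv A))
      (μ.map (itinerary T.toEquiv A)) := by
  have hm := measurable_itinerary T hA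
  refine ⟨boolShift.measurable, ?_⟩
  rw [Measure.map_map boolShift.measurable hm]
  conv_rhs => rw [← hT.map_eq, Measure.map_map hm T.measurable]
  exact congrArg (fun f => μ.map f) (funext (boolShift_itinerary T A))

theorem map_itinerary_boolCylinder {X : Type*} [MeasurableSpace X] (μ : Measure X)
    (T : X ≃ᵐ X) {A : Set X} (hA : MeasurableSet A) :
    μ.map (itinerary T.toEquiv A) boolCylinder = μ A := by
  rw [Measure.map_apply (measurable_itinerary T hA) isClopen_boolCylinder.isOpen.measurableSet]
  congr 1
  ext x
  simp [boolCylinder, itinerary]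

theorem map_itinerary_boolCylinder_inter {X : Type*} [MeasurableSpace X] (μ : Measure X)
    (T : X ≃ᵐ X) {A : Set X} (hA : MeasurableSet A) {ι : Type*} [Finite ι] (v : ι → ℤ) :
    μ.map (itinerary T.toEquiv A)
        (boolCylinder ∩ ⋂ i, (boolShift.toEquiv ^ v i) ⁻¹' boolCylinder) =
      μ (A ∩ ⋂ i, (T.toEquiv ^ v i) ⁻¹' A) := by
  rw [Measure.map_apply (measurable_itinerary T hA)
    (isClopen_boolCylinder_inter v).isOpen.measurableSet]
  simp only [preimage_boolShift_zpow_boolCylinder]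
  congr 1
  ext x
  simp [boolCylinder, itinerary]

/-- For a good sequence, return measures are bounded below uniformly over the compact space of
shift-invariant measures giving the cylinder mass at least `δ`. -/
theorem GoodSeqForMultipleRecurrence.exists_uniform_boolShift {ℓ : ℕ} {u : Fin ℓ → ℕ → ℤ}
    (hu : GoodSeqForMultipleRecurrence ℓ u) {δ : NNReal} (hδ : 0 < δ) :
    ∃ k : ℕ, ∀ ν : ProbabilityMeasure (ℤ → Bool),
      MeasurePreserving boolShift (ν : Measure (ℤ → Bool)) ν → δ ≤ ν boolCylinder →
      ∃ n : ℕ, 1 ≤ n ∧ n ≤ k ∧ 1 / ((k : NNReal) + 1) <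
        ν (boolCylinder ∩ ⋂ i, (boolShift.toEquiv ^ u i n) ⁻¹' boolCylinder) := by
  set E : ℕ → Set (ℤ → Bool) := fun n =>
    boolCylinder ∩ ⋂ i, (boolShift.toEquiv ^ u i n) ⁻¹' boolCylinder
  let K : Set (ProbabilityMeasure (ℤ → Bool)) :=
    {ν | MeasurePreserving boolShift (ν : Measure (ℤ → Bool)) ν} ∩ {ν | δ ≤ ν boolCylinder}
  let U : ℕ → Set (ProbabilityMeasure (ℤ → Bool)) := fun k =>
    {ν | ∃ n : ℕ, 1 ≤ n ∧ n ≤ k ∧ 1 / ((k : NNReal) + 1) < ν (E n)}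
  have hK : IsCompact K :=
    (isClosed_setOf_measurePreserving_boolShift.inter (isClosed_le continuous_const
      (continuous_probabilityMeasure_apply_of_isClopen isClopen_boolCylinder))).isCompact
  have hUo : ∀ k, IsOpen (U k) := by
    intro k
    have : U k = ⋃ n, ⋃ (_ : 1 ≤ n), ⋃ (_ : n ≤ k), {ν | 1 / ((k : NNReal) + 1) < ν (E n)} := by
      ext ν
      simp only [U, Set.mem_ofPred_eq, Set.mem_iUnion, exists_prop]
    rw [this]
    exact isOpen_iUnion fun n => isOpen_iUnion fun _ => isOpen_iUnion fun _ =>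
      isOpen_lt continuous_const
        (continuous_probabilityMeasure_apply_of_isClopen (isClopen_boolCylinder_inter _))
  have hUm : Monotone U := by
    rintro a b hab ν ⟨n, hn, hna, h⟩
    refine ⟨n, hn, hna.trans hab, lt_of_le_of_lt ?_ h⟩
    gcongr
  have hcover : K ⊆ ⋃ k, U k := by
    rintro ν ⟨hinv, hν⟩
    have hpos : 0 < (ν : Measure (ℤ → Bool)) boolCylinder := by
      rw [← ProbabilityMeasure.ennreal_coeFn_eq_coeFn_toMeasure]
      exact_mod_cast hδ.trans_le hν
    obtain ⟨n, hn, h⟩ := hu _ _ (ν : Measure (ℤ → Bool)) inferInstance boolShift hinv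
      boolCylinder isClopen_boolCylinder.isOpen.measurableSet hpos
    rw [← ProbabilityMeasure.ennreal_coeFn_eq_coeFn_toMeasure] at h
    obtain ⟨m, hm⟩ := exists_nat_one_div_lt (show 0 < ν (E n) from by exact_mod_cast h)
    refine Set.mem_iUnion.2 ⟨max n m, n, hn, le_max_left _ _, lt_of_le_of_lt ?_ hm⟩
    gcongr
    exact le_max_right _ _
  obtain ⟨k, hk⟩ := hK.elim_directed_cover U hUo hcover hUm.directed_le
  exact ⟨k, fun ν hinv hν => hk ⟨hinv, hν⟩⟩

theorem statement17 (ℓ : ℕ) (hℓ : 0 < ℓ) (u : Fin ℓ → ℕ → ℤ)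
    (hu : GoodSeqForMultipleRecurrence ℓ u) :
    ∀ ε : ℝ, 0 < ε → ∃ γ : ℝ, 0 < γ ∧ ∃ N₁ : ℕ, 0 < N₁ ∧
      ∀ (X : Type) (_ : MeasurableSpace X) (μ : Measure X),
        IsProbabilityMeasure μ →
        ∀ T : X ≃ᵐ X, MeasurePreserving (⇑T) μ μ →
        ∀ A : Set X, MeasurableSet A → ENNReal.ofReal ε ≤ μ A →
          ∃ n : ℕ, 1 ≤ n ∧ n ≤ N₁ ∧
            ENNReal.ofReal γ ≤
              μ (A ∩ ⋂ i : Fin ℓ, (⇑(T.toEquiv ^ (u i n))) ⁻¹' A) := by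
  intro ε hε
  obtain ⟨k, hk⟩ := hu.exists_uniform_boolShift (Real.toNNReal_pos.2 hε)
  refine ⟨1 / ((k : ℝ) + 1), by positivity, k + 1, k.succ_pos, ?_⟩
  intro X _ μ hμ T hT A hA hεA
  let ν : ProbabilityMeasure (ℤ → Bool) := ⟨μ.map (itinerary T.toEquiv A),
    Measure.isProbabilityMeasure_map (measurable_itinerary T hA).aemeasurable⟩
  have hν : ε.toNNReal ≤ ν boolCylinder := by
    rw [← ENNReal.coe_le_coe, ProbabilityMeasure.ennreal_coeFn_eq_coeFn_toMeasure]
    exact hεA.trans_eq (map_itinerary_boolCylinder μ T hA).symm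
  obtain ⟨n, hn, hnk, h⟩ := hk ν (measurePreserving_boolShift_map_itinerary hT hA) hν
  refine ⟨n, hn, hnk.trans k.le_succ, ?_⟩
  rw [← map_itinerary_boolCylinder_inter μ T hA (fun i => u i n)]
  rw [← ENNReal.coe_lt_coe, ProbabilityMeasure.ennreal_coeFn_eq_coeFn_toMeasure] at h
  refine le_trans (le_of_eq ?_) h.le
  rw [ENNReal.ofReal, ENNReal.coe_inj]
  ext
  rw [Real.coe_toNNReal _ (by positivity)]
  push_cast
  rfl
end
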